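/- arXiv:1308.3956 — 2 statements merged into one kernel-verified Lean document; each statement's English description precedes it below -/
import Mathlib

section
/- Fix an integer k ≥ 1 and a real number c. For each integer m ≥ 1, let (B_t)_{t≥1} be an i.i.d. sequence of uniform random draws from {1,…,m}, and let T_k(m) be the least time t such that every bin b ∈ {1,…,m} satisfies #{s ≤ t : B_s = b} ≥ k. Then lim_{m→∞} P( T_k(m) < m·log m + (k−1)·m·log log m + c·m ) = exp( − e^{−c} / (k−1)! ). -/
/-- The threshold `m·log m + (k−1)·m·log log m + c·m`. -/
noncomputable def collectThreshold (k : ℕ) (c : ℝ) (m : ℕ) : ℝ :=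
  (m : ℝ) * Real.log m + ((k : ℝ) - 1) * m * Real.log (Real.log m) + c * m

/-- The event `T_k(m) < collectThreshold k c m` depends only on the first
`⌈collectThreshold k c m⌉₊` tosses, so we model the i.i.d. uniform tosses by the uniform
distribution on `Fin ⌈collectThreshold k c m⌉₊ → Fin m`; the probability of the event is the
ratio of the number of favorable outcomes to the number `m ^ ⌈collectThreshold k c m⌉₊` of all
outcomes.  `T_k(m) < x` holds iff there is a time `t` with `(t : ℝ) < x` such that every bin
`b` has received at least `k` balls among the first `t` tosses. -/
noncomputable def probCollectBeforeThreshold (k : ℕ) (c : ℝ) (m : ℕ) : ℝ :=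
  (Nat.card {f : Fin ⌈collectThreshold k c m⌉₊ → Fin m //
      ∃ t : ℕ, (t : ℝ) < collectThreshold k c m ∧
        ∀ b : Fin m,
          k ≤ Nat.card {s : Fin ⌈collectThreshold k c m⌉₊ // (s : ℕ) < t ∧ f s = b}} : ℝ) /
    (m : ℝ) ^ (⌈collectThreshold k c m⌉₊ : ℕ)

theorem hs_congr {f g : ℕ → ℝ} {a b : ℝ} (h : HasSum f a) (hfg : ∀ n, g n = f n) (hab : b = a) :
    HasSum g b := by
  have : g = f := funext hfg
  rw [this, hab]; exact h

open Finset in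
/-- number of toss sequences of length `n` with bin `b` getting at least `κ b` balls -/
noncomputable def cntA {m : ℕ} (n : ℕ) (κ : Fin m → ℕ) : ℝ :=
  ∑ f : Fin n → Fin m, if ∀ b, κ b ≤ (univ.filter (fun s => f s = b)).card then 1 else 0

open Finset in
theorem cntA_succ {m : ℕ} (n : ℕ) (κ : Fin m → ℕ) :
    cntA (n+1) κ = ∑ b, cntA n (Function.update κ b (κ b - 1)) := by
  unfold cntA
  rw [← (Fin.consEquiv (fun _ : Fin (n+1) => Fin m)).sum_comp, Fintype.sum_prod_type]
  refine Finset.sum_congr rfl fun b _ => Finset.sum_congr rfl fun g _ => ?_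
  congr 1
  apply propext
  refine forall_congr' fun b' => ?_
  have : (univ.filter (fun s => (Fin.consEquiv (fun _ : Fin (n+1) => Fin m)) (b, g) s = b')).card
      = (if b = b' then 1 else 0) + (univ.filter (fun s => g s = b')).card := by
    rw [Finset.card_filter, Fin.sum_univ_succ, Finset.card_filter]
    simp [Fin.consEquiv]
  rw [this]
  by_cases h : b = b'
  · subst h; simp; omega
  · simp [h, Function.update_of_ne (Ne.symm h)]

theorem cntA_nonneg {m : ℕ} (n : ℕ) (κ : Fin m → ℕ) : 0 ≤ cntA n κ := by
  unfold cntA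
  exact Finset.sum_nonneg fun f _ => by split_ifs <;> norm_num

theorem cntA_le {m : ℕ} (n : ℕ) (κ : Fin m → ℕ) : cntA n κ ≤ (m:ℝ)^n := by
  unfold cntA
  calc _ ≤ ∑ f : Fin n → Fin m, (1:ℝ) := Finset.sum_le_sum fun f _ => by split_ifs <;> norm_num
    _ = _ := by simp

theorem cntA_anti {m : ℕ} (n : ℕ) {κ κ' : Fin m → ℕ} (h : ∀ b, κ b ≤ κ' b) :
    cntA n κ' ≤ cntA n κ := by
  unfold cntA
  refine Finset.sum_le_sum fun f _ => ?_
  split_ifs with h1 h2 h2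
  · norm_num
  · exact absurd (fun b => (h b).trans (h1 b)) h2
  · norm_num
  · norm_num

theorem cntA_mono {m : ℕ} (n : ℕ) (κ : Fin m → ℕ) : m * cntA n κ ≤ cntA (n+1) κ := by
  rw [cntA_succ]
  calc _ = ∑ b : Fin m, cntA n κ := by simp
    _ ≤ _ := Finset.sum_le_sum fun b _ => cntA_anti n fun b' => by
      by_cases h : b' = b
      · subst h; simp
      · simp [Function.update_of_ne h]

/-- tail of the exponential series -/
noncomputable def Eser (j : ℕ) : PowerSeries ℝ :=
  PowerSeries.mk fun i => if j ≤ i then 1 / (i.factorial : ℝ) else 0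

theorem Eser_deriv (j : ℕ) : PowerSeries.derivative ℝ (Eser j) = Eser (j - 1) := by
  ext n
  rw [PowerSeries.coeff_derivative]
  simp only [Eser, PowerSeries.coeff_mk, Nat.factorial_succ]
  have h : (j ≤ n + 1) ↔ (j - 1 ≤ n) := by omega
  simp only [h]
  split_ifs
  · push_cast
    field_simp
  · simp

theorem leib {ι : Type*} [DecidableEq ι] (s : Finset ι) (f : ι → PowerSeries ℝ) :
    PowerSeries.derivative ℝ (∏ i ∈ s, f i) =
      ∑ i ∈ s, ∏ j ∈ s, Function.update f i (PowerSeries.derivative ℝ (f i)) j := by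
  induction s using Finset.induction_on with
  | empty => simp
  | insert a s ha ih =>
    rw [Finset.prod_insert ha, Derivation.leibniz, ih, Finset.sum_insert ha, Finset.prod_insert ha]
    simp only [smul_eq_mul, Function.update_self]
    rw [add_comm]
    congr 1
    · rw [mul_comm]
      congr 1
      refine Finset.prod_congr rfl fun j hj => ?_
      rw [Function.update_of_ne (by rintro rfl; exact ha hj)]
    · rw [Finset.mul_sum]
      refine Finset.sum_congr rfl fun i hi => ?_
      rw [Finset.prod_insert ha, Function.update_of_ne (by rintro rfl; exact ha hi)]

theorem cntA_eq {m : ℕ} (n : ℕ) (κ : Fin m → ℕ) :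
    cntA n κ = n.factorial * PowerSeries.coeff n (∏ b, Eser (κ b)) := by
  induction n generalizing κ with
  | zero =>
    rw [PowerSeries.coeff_zero_eq_constantCoeff_apply, map_prod]
    simp only [Eser, ← PowerSeries.coeff_zero_eq_constantCoeff_apply, PowerSeries.coeff_mk]
    simp [cntA, Finset.prod_ite_zero]
  | succ n ih =>
    have h := PowerSeries.coeff_derivative (R := ℝ) (∏ b, Eser (κ b)) n
    rw [leib] at h
    rw [cntA_succ, Nat.factorial_succ]
    simp only [ih]
    rw [← Finset.mul_sum]
    push_cast
    rw [show ((n:ℝ)+1) * n.factorial * PowerSeries.coeff (n+1) (∏ b, Eser (κ b))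
      = n.factorial * (PowerSeries.coeff (n+1) (∏ b, Eser (κ b)) * (n+1)) by ring, ← h, map_sum]
    congr 1
    refine Finset.sum_congr rfl fun b _ => ?_
    congr 1
    refine Finset.prod_congr rfl fun j _ => ?_
    by_cases hj : j = b
    · subst hj; simp [Eser_deriv]
    · simp [Function.update_of_ne hj]

theorem ps_pow_hasSum (F : PowerSeries ℝ) (z v : ℝ)
    (hs : Summable fun n => ‖PowerSeries.coeff n F * z^n‖)
    (h : HasSum (fun n => PowerSeries.coeff n F * z^n) v) (m : ℕ) :
    (Summable fun n => ‖PowerSeries.coeff n (F^m) * z^n‖) ∧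
    HasSum (fun n => PowerSeries.coeff n (F^m) * z^n) (v^m) := by
  induction m with
  | zero =>
    have h0 : ∀ n, n ≠ 0 → PowerSeries.coeff n (F^0) * z^n = 0 := by
      intro n hn; simp [PowerSeries.coeff_one, hn]
    constructor
    · exact summable_of_ne_finset_zero (s := {0}) fun n hn => by
        rw [h0 n (by simpa using hn)]; simp
    · refine hs_congr (hasSum_single 0 h0) (fun n => rfl) (by simp)
  | succ m ih =>
    have key : ∀ n, PowerSeries.coeff n (F^(m+1)) * z^n =
        ∑ kl ∈ Finset.HasAntidiagonal.antidiagonal n, (PowerSeries.coeff kl.1 (F^m) * z^kl.1) *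
          (PowerSeries.coeff kl.2 F * z^kl.2) := by
      intro n
      rw [pow_succ, PowerSeries.coeff_mul, Finset.sum_mul]
      refine Finset.sum_congr rfl fun kl hkl => ?_
      rw [← Finset.HasAntidiagonal.mem_antidiagonal.1 hkl, pow_add]; ring
    have s1 := summable_norm_sum_mul_antidiagonal_of_summable_norm ih.1 hs
    have s2 := tsum_mul_tsum_eq_tsum_sum_antidiagonal_of_summable_norm ih.1 hs
    simp only [key]
    refine ⟨s1, ?_⟩
    rw [pow_succ, ← ih.2.tsum_eq, ← h.tsum_eq, s2]
    exact s1.of_norm.hasSum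

theorem exp_hasSum (z : ℝ) : HasSum (fun n : ℕ => z^n / n.factorial) (Real.exp z) := by
  rw [Real.exp_eq_exp_ℝ]
  exact NormedSpace.expSeries_div_hasSum_exp z

theorem Eser_hasSum (k : ℕ) (z : ℝ) :
    (Summable fun n => ‖PowerSeries.coeff n (Eser k) * z^n‖) ∧
    HasSum (fun n => PowerSeries.coeff n (Eser k) * z^n)
      (Real.exp z - ∑ i ∈ Finset.range k, z^i / i.factorial) := by
  have h1 : HasSum (fun i => if i ∈ Finset.range k then z^i / (i.factorial:ℝ) else 0)
      (∑ i ∈ Finset.range k, z^i / i.factorial) := by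
    refine hs_congr (hasSum_sum_of_ne_finset_zero (s := Finset.range k)
      (f := fun i => if i ∈ Finset.range k then z^i / (i.factorial:ℝ) else 0) ?_) (fun n => rfl) ?_
    · intro b hb; simp only [hb, if_false]
    · exact Finset.sum_congr rfl fun i hi => by simp only [hi, if_true]
  have h2 := (exp_hasSum z).sub h1
  have h3 : ∀ n, PowerSeries.coeff n (Eser k) * z^n =
      z^n / (n.factorial:ℝ) - (if n ∈ Finset.range k then z^n / (n.factorial:ℝ) else 0) := by
    intro n
    simp only [Eser, PowerSeries.coeff_mk, Finset.mem_range]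
    by_cases h : k ≤ n
    · simp [h, Nat.not_lt.2 h]; ring
    · simp [h, Nat.not_le.1 h]
  simp only [h3]
  exact ⟨h2.summable.norm, h2⟩

/-- probability that after `n` tosses every bin has at least `k` balls -/
noncomputable def pr (k m n : ℕ) : ℝ := cntA (m := m) n (fun _ => k) / (m:ℝ)^n

theorem pr_nonneg (k m n : ℕ) : 0 ≤ pr k m n := div_nonneg (cntA_nonneg _ _) (by positivity)

theorem pr_le_one (k m n : ℕ) : pr k m n ≤ 1 := div_le_one_of_le₀ (cntA_le _ _) (by positivity)

theorem pr_mono (k m : ℕ) (hm : 1 ≤ m) : Monotone (pr k m) := by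
  refine monotone_nat_of_le_succ fun n => ?_
  have hm' : (0:ℝ) < m := by exact_mod_cast hm
  unfold pr
  rw [div_le_div_iff₀ (by positivity) (by positivity), pow_succ]
  nlinarith [mul_le_mul_of_nonneg_right (cntA_mono n (fun _ : Fin m => k)) (pow_pos hm' n).le]

/-- Poissonization -/
theorem pr_hasSum (k m : ℕ) (hm : 1 ≤ m) (l : ℝ) :
    HasSum (fun n => Real.exp (-(m*l)) * (m*l)^n / n.factorial * pr k m n)
      ((1 - Real.exp (-l) * ∑ i ∈ Finset.range k, l^i / i.factorial)^m) := by
  have hm' : (m:ℝ) ≠ 0 := by positivity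
  have h := (ps_pow_hasSum _ l _ (Eser_hasSum k l).1 (Eser_hasSum k l).2 m).2
  have h := h.mul_left (Real.exp (-(m*l)))
  refine hs_congr (h) ?_ ?_
  · intro n
    have := cntA_eq n (fun _ : Fin m => k)
    simp only [Finset.prod_const, Finset.card_univ, Fintype.card_fin] at this
    unfold pr
    rw [this, mul_pow]
    field_simp
  · rw [show -((m:ℝ)*l) = m * (-l) by ring, Real.exp_nat_mul, ← mul_pow, mul_sub, ← Real.exp_add]
    simp

theorem pois_var (μ : ℝ) :
    HasSum (fun n : ℕ => Real.exp (-μ) * μ^n / n.factorial * ((n:ℝ) - μ)^2) μ := by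
  have e0 := exp_hasSum μ
  have e1 : HasSum (fun n : ℕ => (n:ℝ) * (μ^n / n.factorial)) (μ * Real.exp μ) := by
    rw [← hasSum_nat_add_iff' 1]
    simp only [Finset.sum_range_one, Nat.cast_zero, zero_mul, sub_zero]
    refine hs_congr (e0.mul_left μ) ?_ rfl
    intro n
    rw [Nat.factorial_succ, pow_succ]; push_cast; field_simp
  have e2 : HasSum (fun n : ℕ => (n:ℝ)^2 * (μ^n / n.factorial)) (μ * (μ * Real.exp μ + Real.exp μ)) := by
    rw [← hasSum_nat_add_iff' 1]
    simp only [Finset.sum_range_one, Nat.cast_zero, ne_eq, OfNat.ofNat_ne_zero, not_false_eq_true,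
      zero_pow, zero_mul, sub_zero]
    refine hs_congr ((e1.add e0).mul_left μ) ?_ rfl
    intro n
    rw [Nat.factorial_succ, pow_succ]; push_cast; field_simp; ring
  have := ((e2.sub (e1.mul_left (2*μ))).add (e0.mul_left (μ^2))).mul_left (Real.exp (-μ))
  refine hs_congr (this) ?_ ?_
  · intro n; ring
  · have h : Real.exp (-μ) * Real.exp μ = 1 := by rw [← Real.exp_add]; simp
    linear_combination (-μ) * h

theorem pois_one (μ : ℝ) :
    HasSum (fun n : ℕ => Real.exp (-μ) * μ^n / n.factorial) 1 := by
  refine hs_congr ((exp_hasSum μ).mul_left (Real.exp (-μ))) ?_ ?_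
  · intro n; ring
  · rw [← Real.exp_add]; simp

/-- the Poissonized probability -/
noncomputable def FF (k : ℕ) (l : ℝ) (m : ℕ) : ℝ :=
  (1 - Real.exp (-l) * ∑ i ∈ Finset.range k, l^i / i.factorial)^m

theorem pr_upper (k m n : ℕ) (hm : 1 ≤ m) (l d : ℝ) (hl : 0 ≤ l) (hd : 0 < d)
    (h : (n:ℝ) + d ≤ m * l) : pr k m n ≤ FF k l m + m * l / d^2 := by
  have h1 := pr_hasSum k m hm l
  have h2 := (pois_var (m*l)).div_const (d^2)
  have h3 := (pois_one (m*l)).mul_right (pr k m n)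
  rw [one_mul] at h3
  refine hasSum_le (fun j => ?_) h3 (h1.add h2)
  have hw : 0 ≤ Real.exp (-(m*l)) * (m*l)^j / j.factorial := by positivity
  rw [mul_div_assoc (Real.exp (-(m*l)) * (m*l)^j / j.factorial), ← mul_add]
  refine mul_le_mul_of_nonneg_left ?_ hw
  rcases le_or_gt n j with hj | hj
  · have := pr_mono k m hm hj
    have : 0 ≤ ((j:ℝ) - m*l)^2/d^2 := by positivity
    linarith
  · have hj' : (j:ℝ) ≤ n := by exact_mod_cast hj.le
    have : 1 ≤ ((j:ℝ) - m*l)^2/d^2 := by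
      rw [le_div_iff₀ (by positivity)]; nlinarith
    linarith [pr_le_one k m n, pr_nonneg k m j]

theorem pr_lower (k m n : ℕ) (hm : 1 ≤ m) (l d : ℝ) (hl : 0 ≤ l) (hd : 0 < d)
    (h : m * l + d ≤ (n:ℝ) + 1) : FF k l m ≤ pr k m n + m * l / d^2 := by
  have h1 := pr_hasSum k m hm l
  have h2 := (pois_var (m*l)).div_const (d^2)
  have h3 := (pois_one (m*l)).mul_right (pr k m n)
  rw [one_mul] at h3
  refine hasSum_le (fun j => ?_) h1 (h3.add h2)
  have hw : 0 ≤ Real.exp (-(m*l)) * (m*l)^j / j.factorial := by positivity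
  rw [mul_div_assoc (Real.exp (-(m*l)) * (m*l)^j / j.factorial), ← mul_add]
  refine mul_le_mul_of_nonneg_left ?_ hw
  rcases le_or_gt j n with hj | hj
  · have := pr_mono k m hm hj
    have : 0 ≤ ((j:ℝ) - m*l)^2/d^2 := by positivity
    linarith
  · have hj' : (n:ℝ) + 1 ≤ j := by exact_mod_cast hj
    have : 1 ≤ ((j:ℝ) - m*l)^2/d^2 := by
      rw [le_div_iff₀ (by positivity)]; nlinarith
    linarith [pr_le_one k m j, pr_nonneg k m n]

noncomputable def lam (k : ℕ) (c : ℝ) (m : ℕ) : ℝ :=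
  Real.log m + ((k : ℝ) - 1) * Real.log (Real.log m) + c

theorem thr_eq (k : ℕ) (c : ℝ) (m : ℕ) : collectThreshold k c m = m * lam k c m := by
  unfold collectThreshold lam; ring

theorem tendsto_L : Filter.Tendsto (fun m : ℕ => Real.log m) Filter.atTop Filter.atTop :=
  Real.tendsto_log_atTop.comp tendsto_natCast_atTop_atTop

theorem lam_div (k : ℕ) (c : ℝ) :
    Filter.Tendsto (fun m : ℕ => lam k c m / Real.log m) Filter.atTop (nhds 1) := by
  have h1 : Filter.Tendsto (fun x : ℝ => Real.log x / x) Filter.atTop (nhds 0) := by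
    simpa using Real.isLittleO_log_id_atTop.tendsto_div_nhds_zero
  have h2 := h1.comp tendsto_L
  have h3 := tendsto_L.inv_tendsto_atTop
  have h4 := ((h2.const_mul ((k:ℝ)-1)).const_add 1).add (h3.const_mul c)
  simp only [mul_zero, add_zero] at h4
  refine h4.congr' ?_
  filter_upwards [tendsto_L.eventually_gt_atTop 0] with m hm
  simp only [lam, Function.comp, Pi.inv_apply]
  field_simp

theorem lam_pos (k : ℕ) (c : ℝ) : ∀ᶠ m : ℕ in Filter.atTop, 0 < lam k c m := by
  filter_upwards [(lam_div k c).eventually (lt_mem_nhds zero_lt_one),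
    tendsto_L.eventually_gt_atTop 0] with m h1 h2
  exact (div_pos_iff_of_pos_right h2).1 h1

theorem exp_lam (K : ℕ) (c : ℝ) (m : ℕ) (hm : 1 ≤ m) (hL : 0 < Real.log m) :
    m * Real.exp (-(lam (K+1) c m)) = Real.exp (-c) / (Real.log m)^K := by
  have hm' : (0:ℝ) < m := by exact_mod_cast hm
  have : lam (K+1) c m = Real.log m + K * Real.log (Real.log m) + c := by
    simp [lam]
  rw [this, neg_add, Real.exp_add, neg_add, Real.exp_add, Real.exp_neg, Real.exp_log hm',
    Real.exp_neg (K * _), Real.exp_nat_mul, Real.exp_log hL]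
  field_simp

theorem FF_tendsto (k : ℕ) (hk : 1 ≤ k) (c : ℝ) :
    Filter.Tendsto (fun m => FF k (lam k c m) m) Filter.atTop
      (nhds (Real.exp (-(Real.exp (-c) / (Nat.factorial (k - 1)))))) := by
  obtain ⟨K, rfl⟩ : ∃ K, k = K + 1 := ⟨k-1, by omega⟩
  unfold FF
  simp only [sub_eq_add_neg]
  refine Real.tendsto_one_add_pow_exp_of_tendsto ?_
  have hterm : Filter.Tendsto (fun m : ℕ => -(∑ i ∈ Finset.range (K+1),
      Real.exp (-c) * ((lam (K+1) c m / Real.log m)^i / i.factorial * ((Real.log m)⁻¹)^(K-i))))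
      Filter.atTop (nhds (-(∑ i ∈ Finset.range (K+1), Real.exp (-c) *
        (1^i / i.factorial * 0^(K-i))))) := by
    refine (tendsto_finsetSum _ fun i _ => ?_).neg
    exact ((((lam_div (K+1) c).pow i).div_const _).mul
      (tendsto_L.inv_tendsto_atTop.pow _)).const_mul _
  have hval : (∑ i ∈ Finset.range (K+1), Real.exp (-c) *
        ((1:ℝ)^i / i.factorial * 0^(K-i))) = Real.exp (-c) / (Nat.factorial (K + 1 - 1)) := by
    rw [Finset.sum_range_succ, Finset.sum_eq_zero]
    · simp [div_eq_mul_inv]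
    · intro i hi
      have : K - i ≠ 0 := by have := Finset.mem_range.1 hi; omega
      simp [this]
  rw [hval] at hterm
  refine hterm.congr' ?_
  filter_upwards [tendsto_L.eventually_gt_atTop 0, Filter.eventually_ge_atTop 1] with m hL hm
  rw [mul_neg, ← mul_assoc, exp_lam K c m hm hL, Finset.mul_sum]
  congr 1
  refine Finset.sum_congr rfl fun i hi => ?_
  have : K = (K - i) + i := by have := Finset.mem_range.1 hi; omega
  have h2 : (Real.log m)^K = (Real.log m)^(K-i) * (Real.log m)^i := by rw [← pow_add, ← this]
  rw [h2, div_pow, inv_pow]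
  field_simp

theorem err_tendsto (k : ℕ) (c e : ℝ) (he : 0 < e) :
    Filter.Tendsto (fun m : ℕ => m * lam k c m / (e * m)^2) Filter.atTop (nhds 0) := by
  have h1 : Filter.Tendsto (fun x : ℝ => Real.log x / x) Filter.atTop (nhds 0) := by
    simpa using Real.isLittleO_log_id_atTop.tendsto_div_nhds_zero
  have h2 := h1.comp (tendsto_natCast_atTop_atTop (R := ℝ))
  have h3 := ((lam_div k c).mul h2).div_const (e^2)
  simp only [mul_zero, zero_div] at h3
  refine h3.congr' ?_
  filter_upwards [tendsto_L.eventually_gt_atTop 0, Filter.eventually_ge_atTop 1] with m hL hm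
  have hm' : (0:ℝ) < m := by exact_mod_cast hm
  simp only [Function.comp]
  field_simp

open Finset in
theorem count_eq (k m n : ℕ) :
    (Nat.card {f : Fin (n+1) → Fin m //
      ∀ b, k ≤ Nat.card {s : Fin (n+1) // (s:ℕ) < n ∧ f s = b}} : ℝ) =
      m * cntA (m := m) n (fun _ => k) := by
  classical
  rw [Nat.card_eq_fintype_card, Fintype.card_subtype, Finset.card_filter]
  push_cast
  rw [← (Fin.snocEquiv (fun _ : Fin (n+1) => Fin m)).sum_comp, Fintype.sum_prod_type]
  have : ∀ x : Fin m, (∑ y : Fin n → Fin m, if ∀ b, k ≤ Nat.card {s : Fin (n+1) //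
      (s:ℕ) < n ∧ (Fin.snocEquiv (fun _ : Fin (n+1) => Fin m)) (x, y) s = b} then (1:ℝ) else 0)
      = cntA (m := m) n (fun _ => k) := by
    intro x
    unfold cntA
    refine Finset.sum_congr rfl fun g _ => ?_
    congr 1
    apply propext
    refine forall_congr' fun b => ?_
    rw [Nat.card_eq_fintype_card, Fintype.card_subtype, Finset.card_filter, Fin.sum_univ_castSucc,
      Finset.card_filter]
    simp [Fin.snocEquiv]
  rw [Finset.sum_congr rfl fun x _ => this x]
  simp

theorem prob_aux (k m n : ℕ) (hm : 1 ≤ m) (x : ℝ) (N : ℕ) (hN : N = n + 1)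
    (hx1 : (n:ℝ) < x) (hx2 : x ≤ n + 1) :
    (Nat.card {f : Fin N → Fin m //
      ∃ t : ℕ, (t : ℝ) < x ∧ ∀ b : Fin m,
          k ≤ Nat.card {s : Fin N // (s : ℕ) < t ∧ f s = b}} : ℝ) / (m : ℝ) ^ N = pr k m n := by
  subst hN
  have hm' : (m:ℝ) ≠ 0 := by positivity
  have h : ∀ f : Fin (n+1) → Fin m, (∃ t : ℕ, (t : ℝ) < x ∧ ∀ b : Fin m,
      k ≤ Nat.card {s : Fin (n+1) // (s : ℕ) < t ∧ f s = b}) ↔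
      ∀ b, k ≤ Nat.card {s : Fin (n+1) // (s:ℕ) < n ∧ f s = b} := by
    intro f
    constructor
    · rintro ⟨t, ht, h⟩ b
      have htn : t < n + 1 := by
        have : (t:ℝ) < (n:ℝ) + 1 := lt_of_lt_of_le ht hx2
        exact_mod_cast this
      refine (h b).trans ?_
      refine Nat.card_le_card_of_injective
        (fun s => (⟨s.1, by have := s.2.1; omega, s.2.2⟩ :
          {s : Fin (n+1) // (s:ℕ) < n ∧ f s = b})) ?_
      intro a b h
      exact Subtype.ext (by simpa using h)
    · intro h
      exact ⟨n, hx1, h⟩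
  simp only [h]
  rw [count_eq, pr, pow_succ]
  field_simp

theorem prob_eq (k : ℕ) (c : ℝ) (m : ℕ) (hm : 1 ≤ m) (hl : 0 < lam k c m) :
    ∃ n : ℕ, (n:ℝ) < m * lam k c m ∧ m * lam k c m ≤ n + 1 ∧
      probCollectBeforeThreshold k c m = pr k m n := by
  have hm' : (0:ℝ) < m := by exact_mod_cast hm
  have hx : 0 < collectThreshold k c m := by rw [thr_eq]; positivity
  have hN : 0 < ⌈collectThreshold k c m⌉₊ := Nat.ceil_pos.2 hx
  obtain ⟨n, hn⟩ : ∃ n, ⌈collectThreshold k c m⌉₊ = n + 1 := ⟨_, (Nat.succ_pred_eq_of_pos hN).symm⟩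
  have h1 : (n:ℝ) < collectThreshold k c m := Nat.lt_ceil.1 (by omega)
  have h2 : collectThreshold k c m ≤ n + 1 := by
    have := Nat.le_ceil (collectThreshold k c m)
    rw [hn] at this; exact_mod_cast this
  refine ⟨n, by rwa [← thr_eq], by rwa [← thr_eq], ?_⟩
  exact prob_aux k m n hm _ _ hn h1 h2

theorem lam_add (k : ℕ) (c e : ℝ) (m : ℕ) : lam k (c + e) m = lam k c m + e := by
  unfold lam; ring

/-- Erdős–Rényi, balls and bins: for fixed `k ≥ 1` and `c : ℝ`,
`P(T_k(m) < m·log m + (k−1)·m·log log m + c·m) → exp(−e^{−c}/(k−1)!)` as `m → ∞`. -/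
theorem stmt_0 (k : ℕ) (hk : 1 ≤ k) (c : ℝ) :
    Filter.Tendsto (probCollectBeforeThreshold k c) Filter.atTop
      (nhds (Real.exp (-(Real.exp (-c) / (Nat.factorial (k - 1)))))) := by
  set G : ℝ → ℝ := fun c => Real.exp (-(Real.exp (-c) / (Nat.factorial (k - 1)))) with hG
  have hGc : Continuous G := by rw [hG]; fun_prop
  have hF : ∀ c, Filter.Tendsto (fun m => FF k (lam k c m) m) Filter.atTop (nhds (G c)) :=
    fun c => FF_tendsto k hk c
  change Filter.Tendsto (probCollectBeforeThreshold k c) Filter.atTop (nhds (G c))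
  rw [tendsto_order]
  constructor
  · intro a ha
    obtain ⟨r, hr, hr'⟩ := Metric.eventually_nhds_iff.1
      (hGc.continuousAt.eventually (lt_mem_nhds ha) : ∀ᶠ y in nhds c, a < G y)
    set e := r / 2 with hedef
    have he : 0 < e := by positivity
    have h1 : a < G (c + -e) := hr' (by rw [Real.dist_eq]; simp [abs_of_pos he]; linarith)
    have h2 := (hF (c + -e)).sub (err_tendsto k (c + -e) e he)
    rw [sub_zero] at h2
    filter_upwards [h2.eventually (lt_mem_nhds h1), lam_pos k c, lam_pos k (c + -e),
      Filter.eventually_ge_atTop 1] with m h3 h4 h5 hm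
    obtain ⟨n, hn1, hn2, hn3⟩ := prob_eq k c m hm h4
    have hm' : (0:ℝ) < m := by exact_mod_cast hm
    have := pr_lower k m n hm _ (e * m) h5.le (by positivity)
      (by rw [lam_add]; linarith)
    rw [hn3]; linarith
  · intro a ha
    obtain ⟨r, hr, hr'⟩ := Metric.eventually_nhds_iff.1
      (hGc.continuousAt.eventually (gt_mem_nhds ha) : ∀ᶠ y in nhds c, G y < a)
    set e := r / 2 with hedef
    have he : 0 < e := by positivity
    have h1 : G (c + e) < a := hr' (by rw [Real.dist_eq]; simp [abs_of_pos he]; linarith)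
    have h2 := (hF (c + e)).add (err_tendsto k (c + e) e he)
    rw [add_zero] at h2
    filter_upwards [h2.eventually (gt_mem_nhds h1), lam_pos k c, lam_pos k (c + e),
      Filter.eventually_ge_atTop 1] with m h3 h4 h5 hm
    obtain ⟨n, hn1, hn2, hn3⟩ := prob_eq k c m hm h4
    have hm' : (0:ℝ) < m := by exact_mod_cast hm
    have := pr_upper k m n hm _ (e * m) h5.le (by positivity)
      (by rw [lam_add]; linarith)
    rw [hn3]; linarith
end

section
/- Let x_1,…,x_n and y_1,…,y_n be 2n mutually independent uniformly distributed random points in the unit square Q = [0,1]² ⊂ ℝ², and let D_n* := min_σ Σ_{i=1}^n ‖x_i − y_{σ(i)}‖₂, where the minimum is over all permutations σ of {1,…,n}. Then there exist positive constants C₁ and C₂ such that P( C₁·sqrt(n·log n) ≤ D_n* ≤ C₂·sqrt(n·log n) ) → 1 as n → ∞. -/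
open MeasureTheory

/-- The closed unit square `[0,1]² ⊂ ℝ²` (with the Euclidean norm). -/
def unitSquare : Set (EuclideanSpace ℝ (Fin 2)) :=
  {p | ∀ i, p i ∈ Set.Icc (0 : ℝ) 1}

/-- The uniform probability measure on the unit square. -/
noncomputable def unifSquare : Measure (EuclideanSpace ℝ (Fin 2)) :=
  volume.restrict unitSquare

/-- The optimal total Euclidean matching distance `D_n* = min_σ Σ_i ‖x_i − y_{σ(i)}‖₂`
between the configurations `x` and `y`, the minimum ranging over all permutations `σ`. -/
noncomputable def optMatchDist (n : ℕ)
    (ω : (Fin n → EuclideanSpace ℝ (Fin 2)) × (Fin n → EuclideanSpace ℝ (Fin 2))) : ℝ :=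
  ⨅ σ : Equiv.Perm (Fin n), ∑ i : Fin n, ‖ω.1 i - ω.2 (σ i)‖


/-- Finite Kantorovich duality, discrete form: there is an optimal Lipschitz potential on the
finite index space, together with a permutation along which it is tight. -/
theorem akt_duality_fin {V : Type*} [SeminormedAddCommGroup V] (n : ℕ) (x y : Fin n → V) :
    ∃ F : Fin n ⊕ Fin n → ℝ,
      (∀ z w, F z - F w ≤ ‖Sum.elim x y z - Sum.elim x y w‖) ∧
      ∃ σ : Equiv.Perm (Fin n), ∀ i, ‖x i - y (σ i)‖ = F (Sum.inl i) - F (Sum.inr (σ i)) := by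
  classical
  rcases Nat.eq_zero_or_pos n with hn | hn
  · subst hn
    exact ⟨fun _ => 0, fun z w => by simp, 1, fun i => i.elim0⟩
  set p : Fin n ⊕ Fin n → V := Sum.elim x y with hp
  set z0 : Fin n ⊕ Fin n := Sum.inl ⟨0, hn⟩ with hz0
  set S : Set (Fin n ⊕ Fin n → ℝ) := {F | (∀ z w, F z - F w ≤ ‖p z - p w‖) ∧ F z0 = 0} with hS
  have hcl : IsClosed S := by
    have h1 : S = (⋂ z, ⋂ w, {F : Fin n ⊕ Fin n → ℝ | F z - F w ≤ ‖p z - p w‖}) ∩ {F | F z0 = 0} := by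
      ext F; simp [hS]
    rw [h1]
    refine IsClosed.inter (isClosed_iInter fun z => isClosed_iInter fun w => ?_) ?_
    · exact isClosed_le (by fun_prop) (by fun_prop)
    · exact isClosed_eq (by fun_prop) (by fun_prop)
  have hsub : S ⊆ Set.pi Set.univ (fun z => Set.Icc (-‖p z0 - p z‖) (‖p z - p z0‖)) := by
    rintro F ⟨h1, h2⟩ z -
    have := h1 z z0
    have := h1 z0 z
    constructor <;> linarith
  have hcomp : IsCompact S :=
    IsCompact.of_isClosed_subset (isCompact_univ_pi fun z => isCompact_Icc) hcl hsub
  have hne : S.Nonempty := ⟨fun _ => 0, by simp [hS]⟩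
  obtain ⟨F, hFS, hmax⟩ := hcomp.exists_isMaxOn hne
    (f := fun F => ∑ i, (F (Sum.inl i) - F (Sum.inr i))) (by fun_prop)
  obtain ⟨hF1, hF0⟩ := hFS
  refine ⟨F, hF1, ?_⟩
  -- tight graph
  let t : Fin n → Finset (Fin n) := fun i =>
    Finset.univ.filter fun j => ‖x i - y j‖ ≤ F (Sum.inl i) - F (Sum.inr j)
  have hall : ∀ s : Finset (Fin n), s.card ≤ (s.biUnion t).card := by
    intro s
    by_contra hlt
    push Not at hlt
    let U : Finset (Fin n ⊕ Fin n) :=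
      Finset.univ.filter fun z => ∃ i ∈ s, ‖x i - p z‖ ≤ F (Sum.inl i) - F z
    -- slack
    have hslack : ∀ z ∈ U, ∀ w, w ∉ U → F z - F w < ‖p z - p w‖ := by
      intro z hz w hw
      by_contra hcon
      push Not at hcon
      apply hw
      simp only [U, Finset.mem_filter, Finset.mem_univ, true_and] at hz ⊢
      obtain ⟨i, his, hi⟩ := hz
      refine ⟨i, his, ?_⟩
      have := norm_sub_le_norm_sub_add_norm_sub (x i) (p z) (p w)
      linarith
    have hε : ∃ ε > 0, ∀ z ∈ U, ∀ w, w ∉ U → F z - F w + ε ≤ ‖p z - p w‖ := by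
      by_cases hempty : (Finset.univ.filter fun q : (Fin n ⊕ Fin n) × (Fin n ⊕ Fin n) =>
          q.1 ∈ U ∧ q.2 ∉ U).Nonempty
      · obtain ⟨q, hq, hqmin⟩ := Finset.exists_min_image _
          (fun q : (Fin n ⊕ Fin n) × (Fin n ⊕ Fin n) => ‖p q.1 - p q.2‖ - (F q.1 - F q.2)) hempty
        simp only [Finset.mem_filter, Finset.mem_univ, true_and] at hq hqmin
        refine ⟨‖p q.1 - p q.2‖ - (F q.1 - F q.2), by linarith [hslack _ hq.1 _ hq.2], ?_⟩
        intro z hz w hw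
        have := hqmin (z, w) ⟨hz, hw⟩
        simp only at this
        linarith
      · refine ⟨1, one_pos, fun z hz w hw => (hempty ⟨(z, w), ?_⟩).elim⟩
        simp [hz, hw]
    obtain ⟨ε, hε0, hε⟩ := hε
    let c : ℝ := if z0 ∈ U then ε else 0
    let F' : Fin n ⊕ Fin n → ℝ := fun z => F z + (if z ∈ U then ε else 0) - c
    have hF' : F' ∈ S := by
      refine ⟨fun z w => ?_, ?_⟩
      · have h0 := hF1 z w
        simp only [F']
        by_cases hz : z ∈ U <;> by_cases hw : w ∈ U <;> simp only [hz, hw, if_true, if_false]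
        · linarith
        · linarith [hε z hz w hw]
        · linarith
        · linarith
      · simp only [F', c, hF0]; ring
    have hle := hmax hF'
    simp only [Set.mem_setOf_eq] at hle
    have hsum : ∑ i, (F' (Sum.inl i) - F' (Sum.inr i)) =
        ∑ i, (F (Sum.inl i) - F (Sum.inr i)) +
        ε * (((Finset.univ.filter fun i => Sum.inl i ∈ U).card : ℝ)
          - ((Finset.univ.filter fun i => Sum.inr i ∈ U).card : ℝ)) := by
      simp only [Finset.card_filter, F']
      push_cast
      rw [← Finset.sum_sub_distrib, Finset.mul_sum, ← Finset.sum_add_distrib]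
      refine Finset.sum_congr rfl fun i _ => ?_
      split_ifs <;> ring
    have hA : s ⊆ Finset.univ.filter fun i => Sum.inl i ∈ U := by
      intro i hi
      simp only [U, Finset.mem_filter, Finset.mem_univ, true_and]
      exact ⟨i, hi, by simp [hp]⟩
    have hB : (Finset.univ.filter fun i => Sum.inr i ∈ U) ⊆ s.biUnion t := by
      intro j hj
      simp only [U, Finset.mem_filter, Finset.mem_univ, true_and] at hj
      obtain ⟨i, hi, h⟩ := hj
      simp only [Finset.mem_biUnion]
      exact ⟨i, hi, by simpa [t, hp] using h⟩
    have hA' := Finset.card_le_card hA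
    have hB' := Finset.card_le_card hB
    have : ((Finset.univ.filter fun i => Sum.inr i ∈ U).card : ℝ) <
        ((Finset.univ.filter fun i => Sum.inl i ∈ U).card : ℝ) := by
      exact_mod_cast lt_of_le_of_lt hB' (lt_of_lt_of_le hlt hA')
    nlinarith
  obtain ⟨f, hinj, hf⟩ := (Finset.all_card_le_biUnion_card_iff_exists_injective t).1 hall
  refine ⟨Equiv.ofBijective f (Finite.injective_iff_bijective.1 hinj), fun i => ?_⟩
  have h1 := hf i
  simp only [t, Finset.mem_filter, Finset.mem_univ, true_and] at h1
  have h2 := hF1 (Sum.inl i) (Sum.inr (f i))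
  simp only [hp, Sum.elim_inl, Sum.elim_inr] at h2
  simp only [Equiv.ofBijective_apply]
  exact le_antisymm h1 h2

/-- Kantorovich duality for the assignment problem (existence of an optimal potential). -/
theorem akt_duality {V : Type*} [SeminormedAddCommGroup V] (n : ℕ) (x y : Fin n → V) :
    ∃ F : V → ℝ, (∀ p q, F p - F q ≤ ‖p - q‖) ∧
      ∃ σ : Equiv.Perm (Fin n), ∑ i, ‖x i - y (σ i)‖ = ∑ i, (F (x i) - F (y i)) := by
  classical
  rcases Nat.eq_zero_or_pos n with hn | hn
  · subst hn
    exact ⟨fun _ => 0, fun z w => by simp, 1, by simp⟩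
  obtain ⟨F, hF, σ, hσ⟩ := akt_duality_fin n x y
  set p : Fin n ⊕ Fin n → V := Sum.elim x y with hp
  have hne : (Finset.univ : Finset (Fin n ⊕ Fin n)).Nonempty := ⟨Sum.inl ⟨0, hn⟩, Finset.mem_univ _⟩
  let G : V → ℝ := fun v => Finset.univ.inf' hne (fun z => F z + ‖v - p z‖)
  have hG : ∀ z, G (p z) = F z := by
    intro z
    apply le_antisymm
    · refine (Finset.inf'_le _ (Finset.mem_univ z)).trans ?_
      simp
    · refine Finset.le_inf' _ _ fun w _ => ?_
      linarith [hF z w]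
  refine ⟨G, fun v w => ?_, σ, ?_⟩
  · obtain ⟨z, -, hz⟩ := Finset.exists_mem_eq_inf' hne (fun z => F z + ‖w - p z‖)
    have h1 : G v ≤ F z + ‖v - p z‖ := Finset.inf'_le _ (Finset.mem_univ z)
    have h2 : G w = F z + ‖w - p z‖ := hz
    have := norm_sub_le_norm_sub_add_norm_sub v w (p z)
    linarith
  · have hx : ∀ i, G (x i) = F (Sum.inl i) := fun i => hG (Sum.inl i)
    have hy : ∀ i, G (y i) = F (Sum.inr i) := fun i => hG (Sum.inr i)
    simp only [hx, hy, hσ, Finset.sum_sub_distrib]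
    congr 1
    exact Equiv.sum_comp σ (fun j => F (Sum.inr j))

/-- The optimal matching distance is bounded by the dual value of some 1-Lipschitz potential. -/
theorem akt_opt_le (n : ℕ) (ω : (Fin n → EuclideanSpace ℝ (Fin 2)) × (Fin n → EuclideanSpace ℝ (Fin 2))) :
    ∃ F : EuclideanSpace ℝ (Fin 2) → ℝ, (∀ p q, F p - F q ≤ ‖p - q‖) ∧
      optMatchDist n ω ≤ ∑ i, (F (ω.1 i) - F (ω.2 i)) := by
  obtain ⟨F, hF, σ, hσ⟩ := akt_duality n ω.1 ω.2
  refine ⟨F, hF, hσ ▸ ?_⟩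
  exact ciInf_le (Set.finite_range _).bddBelow σ

/-- Weak duality. -/
theorem akt_le_opt (n : ℕ) (ω : (Fin n → EuclideanSpace ℝ (Fin 2)) × (Fin n → EuclideanSpace ℝ (Fin 2)))
    (F : EuclideanSpace ℝ (Fin 2) → ℝ) (L : ℝ) (hF : ∀ p q, F p - F q ≤ L * ‖p - q‖) (hL : 0 ≤ L) :
    ∑ i, (F (ω.1 i) - F (ω.2 i)) ≤ L * optMatchDist n ω := by
  unfold optMatchDist
  rw [Real.mul_iInf_of_nonneg hL]
  refine le_ciInf fun σ => ?_
  rw [Finset.mul_sum, Finset.sum_sub_distrib, ← Equiv.sum_comp σ (fun i => F (ω.2 i)),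
    ← Finset.sum_sub_distrib]
  exact Finset.sum_le_sum fun i _ => hF _ _


section AktProb

variable {α : Type*} [MeasurableSpace α] (ρ : Measure α) [IsProbabilityMeasure ρ]

/-- Bounded measurable functions are integrable for a probability measure. -/
theorem akt_integrable {β : Type*} [MeasurableSpace β] (P : Measure β) [IsProbabilityMeasure P]
    {f : β → ℝ} (hf : Measurable f) {B : ℝ} (hB : ∀ b, |f b| ≤ B) : Integrable f P :=
  Integrable.of_bound hf.aestronglyMeasurable B (Filter.Eventually.of_forall hB)

theorem akt_cons_mp (n : ℕ) :
    MeasurePreserving (fun q : α × (Fin n → α) => (Fin.cons q.1 q.2 : Fin (n + 1) → α))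
      (ρ.prod (Measure.pi fun _ : Fin n => ρ)) (Measure.pi fun _ : Fin (n + 1) => ρ) := by
  have h := (measurePreserving_piFinSuccAbove (fun _ : Fin (n + 1) => ρ) 0).symm
  convert h using 1
  funext q
  exact (Fin.insertNth_zero' q.1 q.2).symm

theorem akt_integral_succ (n : ℕ) (f : (Fin (n + 1) → α) → ℝ) (hf : Measurable f) :
    ∫ ω, f ω ∂(Measure.pi fun _ : Fin (n + 1) => ρ) =
      ∫ q, f (Fin.cons q.1 q.2) ∂(ρ.prod (Measure.pi fun _ : Fin n => ρ)) := by
  have h := akt_cons_mp ρ n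
  rw [← h.map_eq, integral_map h.measurable.aemeasurable hf.aestronglyMeasurable]

theorem akt_sum_bound {α : Type*} {ξ : α → ℝ} {B : ℝ} (hB : ∀ a, |ξ a| ≤ B) (n : ℕ) (ω : Fin n → α) :
    |∑ i, ξ (ω i)| ≤ n * B := by
  refine (Finset.abs_sum_le_sum_abs _ _).trans ?_
  refine (Finset.sum_le_sum fun i _ => hB (ω i)).trans ?_
  simp

theorem akt_moments {ξ : α → ℝ} (hξ : Measurable ξ) {B : ℝ} (hB : ∀ a, |ξ a| ≤ B)
    (h0 : ∫ a, ξ a ∂ρ = 0) (n : ℕ) :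
    (∫ ω, (∑ i, ξ (ω i)) ∂(Measure.pi fun _ : Fin n => ρ) = 0) ∧
    (∫ ω, (∑ i, ξ (ω i)) ^ 2 ∂(Measure.pi fun _ : Fin n => ρ) = n * ∫ a, ξ a ^ 2 ∂ρ) ∧
    (∫ ω, (∑ i, ξ (ω i)) ^ 4 ∂(Measure.pi fun _ : Fin n => ρ) ≤
      n * ∫ a, ξ a ^ 4 ∂ρ + 3 * n ^ 2 * (∫ a, ξ a ^ 2 ∂ρ) ^ 2) := by
  induction n with
  | zero => simp
  | succ n ih =>
    obtain ⟨ih1, ih2, ih4⟩ := ih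
    set P := (Measure.pi fun _ : Fin n => ρ) with hP
    have hSm : Measurable (fun ω : Fin n → α => ∑ i, ξ (ω i)) := by fun_prop
    have hSb : ∀ ω : Fin n → α, |∑ i, ξ (ω i)| ≤ n * B := akt_sum_bound hB n
    have hpow : ∀ (j k : ℕ), Integrable (fun q : α × (Fin n → α) => ξ q.1 ^ j * (∑ i, ξ (q.2 i)) ^ k)
        (ρ.prod P) := by
      intro j k
      refine akt_integrable _ (by fun_prop) (B := B ^ j * (n * B) ^ k) fun q => ?_
      rw [abs_mul, abs_pow, abs_pow]
      have h1 := hB q.1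
      have h2 := hSb q.2
      have h3 : 0 ≤ B := (abs_nonneg _).trans h1
      gcongr
    have hmul : ∀ (j k : ℕ), ∫ q, ξ q.1 ^ j * (∑ i, ξ (q.2 i)) ^ k ∂(ρ.prod P) =
        (∫ a, ξ a ^ j ∂ρ) * ∫ ω, (∑ i, ξ (ω i)) ^ k ∂P := by
      intro j k
      exact integral_prod_mul (fun a => ξ a ^ j) (fun ω : Fin n → α => (∑ i, ξ (ω i)) ^ k)
    have e1 : ∫ ω, (∑ i, ξ (ω i)) ∂(Measure.pi fun _ : Fin (n + 1) => ρ) =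
        ∫ q, (ξ q.1 ^ 1 * (∑ i, ξ (q.2 i)) ^ 0 + ξ q.1 ^ 0 * (∑ i, ξ (q.2 i)) ^ 1) ∂(ρ.prod P) := by
      rw [akt_integral_succ ρ n _ (by fun_prop)]
      simp [Fin.sum_univ_succ, hP]
    have e2 : ∫ ω, (∑ i, ξ (ω i)) ^ 2 ∂(Measure.pi fun _ : Fin (n + 1) => ρ) =
        ∫ q, (ξ q.1 ^ 2 * (∑ i, ξ (q.2 i)) ^ 0 + 2 * (ξ q.1 ^ 1 * (∑ i, ξ (q.2 i)) ^ 1)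
          + ξ q.1 ^ 0 * (∑ i, ξ (q.2 i)) ^ 2) ∂(ρ.prod P) := by
      rw [akt_integral_succ ρ n _ (by fun_prop)]
      refine integral_congr_ae (Filter.Eventually.of_forall fun q => ?_)
      simp only [Fin.sum_univ_succ, Fin.cons_zero, Fin.cons_succ]
      ring
    have e4 : ∫ ω, (∑ i, ξ (ω i)) ^ 4 ∂(Measure.pi fun _ : Fin (n + 1) => ρ) =
        ∫ q, (ξ q.1 ^ 4 * (∑ i, ξ (q.2 i)) ^ 0 + 4 * (ξ q.1 ^ 3 * (∑ i, ξ (q.2 i)) ^ 1)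
          + 6 * (ξ q.1 ^ 2 * (∑ i, ξ (q.2 i)) ^ 2) + 4 * (ξ q.1 ^ 1 * (∑ i, ξ (q.2 i)) ^ 3)
          + ξ q.1 ^ 0 * (∑ i, ξ (q.2 i)) ^ 4) ∂(ρ.prod P) := by
      rw [akt_integral_succ ρ n _ (by fun_prop)]
      refine integral_congr_ae (Filter.Eventually.of_forall fun q => ?_)
      simp only [Fin.sum_univ_succ, Fin.cons_zero, Fin.cons_succ]
      ring
    refine ⟨?_, ?_, ?_⟩
    · rw [e1, integral_add (hpow _ _) (hpow _ _), hmul, hmul]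
      simp [h0, ih1]
    · rw [e2, integral_add ((hpow _ _).fun_add ((hpow _ _).const_mul _)) (hpow _ _),
        integral_add (hpow _ _) ((hpow _ _).const_mul _), integral_const_mul, hmul, hmul, hmul]
      simp only [pow_one, h0, ih2]
      simp
      ring
    · rw [e4, integral_add ((((hpow _ _).fun_add ((hpow _ _).const_mul _)).fun_add
          ((hpow _ _).const_mul _)).fun_add ((hpow _ _).const_mul _)) (hpow _ _),
        integral_add (((hpow _ _).fun_add ((hpow _ _).const_mul _)).fun_add
          ((hpow _ _).const_mul _)) ((hpow _ _).const_mul _),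
        integral_add ((hpow _ _).fun_add ((hpow _ _).const_mul _)) ((hpow _ _).const_mul _),
        integral_add (hpow _ _) ((hpow _ _).const_mul _), integral_const_mul, integral_const_mul,
        integral_const_mul, hmul, hmul, hmul, hmul, hmul]
      simp only [pow_one, h0, ih2, ih1, pow_zero]
      simp
      nlinarith [sq_nonneg (∫ a, ξ a ^ 2 ∂ρ)]

theorem akt_variance (c : ℝ) (hc : 0 ≤ c) (n : ℕ) (f : (Fin n → α) → ℝ) (hf : Measurable f) (B : ℝ)
    (hB : ∀ ω, |f ω| ≤ B)
    (hd : ∀ ω i a, |f (Function.update ω i a) - f ω| ≤ c) :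
    ∫ ω, f ω ^ 2 ∂(Measure.pi fun _ : Fin n => ρ)
      - (∫ ω, f ω ∂(Measure.pi fun _ : Fin n => ρ)) ^ 2 ≤ n * c ^ 2 := by
  induction n with
  | zero => simp [integral_unique]
  | succ n ih =>
    set P := (Measure.pi fun _ : Fin n => ρ) with hP
    have hm := (akt_cons_mp ρ n).measurable
    set h : α × (Fin n → α) → ℝ := fun q => f (Fin.cons q.1 q.2) with hh
    have hhm : Measurable h := hf.comp hm
    have hhb : ∀ q, |h q| ≤ B := fun q => hB _
    set g : (Fin n → α) → ℝ := fun b => ∫ a, h (a, b) ∂ρ with hg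
    have hga : ∀ b, Integrable (fun a => h (a, b)) ρ := fun b =>
      akt_integrable ρ (by fun_prop) (fun a => hhb (a, b))
    have hga2 : ∀ b, Integrable (fun a => h (a, b) ^ 2) ρ := fun b =>
      akt_integrable ρ (by fun_prop) (B := B ^ 2) (fun a => by
        rw [abs_pow]; have := hhb (a, b); gcongr)
    have hgm : Measurable g := (hhm.stronglyMeasurable.integral_prod_left').measurable
    have hgb : ∀ b, |g b| ≤ B := by
      intro b
      have := norm_integral_le_of_norm_le_const (μ := ρ) (f := fun a => h (a, b)) (C := B)
        (Filter.Eventually.of_forall fun a => hhb (a, b))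
      simpa using this
    have hgd : ∀ ω i a, |g (Function.update ω i a) - g ω| ≤ c := by
      intro ω i a
      simp only [hg]
      rw [← integral_sub (hga _) (hga _)]
      have := norm_integral_le_of_norm_le_const (μ := ρ)
        (f := fun x => h (x, Function.update ω i a) - h (x, ω)) (C := c)
        (Filter.Eventually.of_forall fun x => by
          have := hd (Fin.cons x ω) i.succ a
          rw [← Fin.cons_update] at this
          exact this)
      simpa using this
    have ih' := ih g hgm hgb hgd
    have hB2 : ∀ q, |h q ^ 2| ≤ B ^ 2 := fun q => by
      rw [abs_pow]; have := hhb q; gcongr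
    have i1 : ∫ ω, f ω ∂(Measure.pi fun _ : Fin (n + 1) => ρ) = ∫ b, g b ∂P := by
      rw [akt_integral_succ ρ n _ hf]
      exact integral_prod_symm _ (akt_integrable _ hhm hhb)
    have i2 : ∫ ω, f ω ^ 2 ∂(Measure.pi fun _ : Fin (n + 1) => ρ) =
        ∫ b, ∫ a, h (a, b) ^ 2 ∂ρ ∂P := by
      rw [akt_integral_succ ρ n _ (hf.pow_const 2)]
      exact integral_prod_symm _ (akt_integrable _ (hhm.pow_const 2) hB2)
    have key : ∀ b, ∫ a, h (a, b) ^ 2 ∂ρ ≤ g b ^ 2 + c ^ 2 := by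
      intro b
      have hclose : ∀ a, |h (a, b) - g b| ≤ c := by
        intro a
        have e : h (a, b) - g b = ∫ a', (h (a, b) - h (a', b)) ∂ρ := by
          rw [integral_sub (integrable_const _) (hga b)]; simp [hg]
        rw [e]
        have := norm_integral_le_of_norm_le_const (μ := ρ)
          (f := fun a' => h (a, b) - h (a', b)) (C := c)
          (Filter.Eventually.of_forall fun x => by
            have := hd (Fin.cons x b) 0 a
            rw [Fin.update_cons_zero] at this
            exact this)
        simpa using this
      have e2 : ∫ a, (h (a, b) - g b) ^ 2 ∂ρ = ∫ a, h (a, b) ^ 2 ∂ρ - g b ^ 2 := by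
        have : ∀ a, (h (a, b) - g b) ^ 2 = h (a, b) ^ 2 - (2 * g b) * h (a, b) + g b ^ 2 := by
          intro a; ring
        simp only [this]
        rw [integral_add (Integrable.sub' (hga2 b) ((hga b).const_mul _)) (integrable_const _),
          integral_sub (hga2 b) ((hga b).const_mul _), integral_const_mul]
        simp only [integral_const, probReal_univ, smul_eq_mul, one_mul]
        change _ - 2 * g b * g b + _ = _
        ring
      have e3 : ∫ a, (h (a, b) - g b) ^ 2 ∂ρ ≤ c ^ 2 := by
        have := norm_integral_le_of_norm_le_const (μ := ρ)
          (f := fun a => (h (a, b) - g b) ^ 2) (C := c ^ 2)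
          (Filter.Eventually.of_forall fun a => by
            rw [Real.norm_eq_abs, abs_pow]; have := hclose a; gcongr)
        refine (le_abs_self _).trans ?_
        simpa using this
      linarith
    have hg2 : Integrable (fun b => g b ^ 2) P :=
      akt_integrable P (hgm.pow_const 2) (B := B ^ 2) (fun b => by
        rw [abs_pow]; have := hgb b; gcongr)
    have hI : Integrable (fun b => ∫ a, h (a, b) ^ 2 ∂ρ) P :=
      (akt_integrable (ρ.prod P) (hhm.pow_const 2) hB2).integral_prod_right
    have i3 : ∫ b, ∫ a, h (a, b) ^ 2 ∂ρ ∂P ≤ ∫ b, g b ^ 2 ∂P + c ^ 2 := by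
      have := integral_mono hI (hg2.add (integrable_const (c ^ 2))) key
      simp only [Pi.add_apply] at this
      rw [integral_add hg2 (integrable_const _)] at this
      simpa using this
    rw [i1, i2]
    push_cast
    linarith

/-- Chebyshev in the form used below. -/
theorem akt_chebyshev {β : Type*} [MeasurableSpace β] (P : Measure β) [IsProbabilityMeasure P]
    {f : β → ℝ} (hf : Measurable f) {B : ℝ} (hB : ∀ b, |f b| ≤ B) {v t : ℝ}
    (hv : ∫ b, f b ^ 2 ∂P - (∫ b, f b ∂P) ^ 2 ≤ v) (ht : 0 < t) :
    P {b | t ≤ |f b - ∫ b, f b ∂P|} ≤ ENNReal.ofReal (v / t ^ 2) := by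
  have hL : MemLp f 2 P := MemLp.of_bound hf.aestronglyMeasurable B (Filter.Eventually.of_forall hB)
  refine (ProbabilityTheory.meas_ge_le_variance_div_sq hL ht).trans ?_
  apply ENNReal.ofReal_le_ofReal
  rw [ProbabilityTheory.variance_eq_sub hL]
  gcongr
  simpa using hv

end AktProb


/-- Half-open box in the plane. -/
def aktBox (a b c d : ℝ) : Set (EuclideanSpace ℝ (Fin 2)) :=
  {p | p 0 ∈ Set.Ico a b ∧ p 1 ∈ Set.Ico c d}

theorem akt_vol_pi (s : Fin 2 → Set ℝ) (hs : ∀ i, MeasurableSet (s i)) :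
    volume {p : EuclideanSpace ℝ (Fin 2) | ∀ i, p i ∈ s i} = volume (s 0) * volume (s 1) := by
  have h := PiLp.volume_preserving_ofLp (Fin 2)
  have e : {p : EuclideanSpace ℝ (Fin 2) | ∀ i, p i ∈ s i} =
      (@WithLp.ofLp 2 (Fin 2 → ℝ)) ⁻¹' (Set.pi Set.univ s) := by
    ext p; simp
  rw [e, h.measure_preimage (MeasurableSet.univ_pi hs).nullMeasurableSet, volume_pi_pi]
  simp [Fin.prod_univ_two]

theorem akt_vol_box (a b c d : ℝ) :
    volume (aktBox a b c d) = ENNReal.ofReal (b - a) * ENNReal.ofReal (d - c) := by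
  have := akt_vol_pi ![Set.Ico a b, Set.Ico c d]
    (by intro i; fin_cases i <;> simp)
  simp only [Fin.forall_fin_two] at this
  simpa [aktBox] using this

theorem akt_meas_coord (i : Fin 2) : Measurable (fun p : EuclideanSpace ℝ (Fin 2) => p i) := by
  fun_prop

theorem akt_meas_box (a b c d : ℝ) : MeasurableSet (aktBox a b c d) := by
  have h0 := akt_meas_coord 0
  have h1 := akt_meas_coord 1
  exact (h0 measurableSet_Ico).inter (h1 measurableSet_Ico)

theorem akt_meas_sq : MeasurableSet unitSquare := by
  have : unitSquare = ⋂ i, (fun p : EuclideanSpace ℝ (Fin 2) => p i) ⁻¹' (Set.Icc 0 1) := by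
    ext p; simp [unitSquare]
  rw [this]
  exact MeasurableSet.iInter fun i => akt_meas_coord i measurableSet_Icc

instance akt_prob : IsProbabilityMeasure unifSquare := by
  constructor
  rw [unifSquare, Measure.restrict_apply_univ]
  have := akt_vol_pi (fun _ => Set.Icc 0 1) (fun _ => measurableSet_Icc)
  simpa [unitSquare] using this

theorem akt_box_le (a b c d : ℝ) (hab : a ≤ b) (hcd : c ≤ d) :
    unifSquare.real (aktBox a b c d) ≤ (b - a) * (d - c) := by
  rw [Measure.real]
  apply ENNReal.toReal_le_of_le_ofReal (mul_nonneg (by linarith) (by linarith))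
  refine (Measure.restrict_apply_le _ _).trans ?_
  rw [akt_vol_box, ENNReal.ofReal_mul (by linarith)]

theorem akt_box_eq (a b c d : ℝ) (h0 : 0 ≤ a) (hab : a ≤ b) (h1 : b ≤ 1) (h0' : 0 ≤ c) (hcd : c ≤ d)
    (h1' : d ≤ 1) :
    unifSquare.real (aktBox a b c d) = (b - a) * (d - c) := by
  rw [Measure.real, unifSquare, Measure.restrict_apply (akt_meas_box _ _ _ _),
    Set.inter_eq_left.2, akt_vol_box, ← ENNReal.ofReal_mul (by linarith), ENNReal.toReal_ofReal]
  · exact mul_nonneg (by linarith) (by linarith)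
  · rintro p ⟨⟨h2, h3⟩, ⟨h4, h5⟩⟩
    intro i
    fin_cases i
    · exact ⟨by simp; linarith, by simp; linarith⟩
    · exact ⟨by simp; linarith, by simp; linarith⟩

theorem akt_ae_mem : ∀ᵐ p ∂unifSquare, p ∈ aktBox 0 1 0 1 := by
  have h : unifSquare.real (aktBox 0 1 0 1) = 1 := by
    rw [akt_box_eq] <;> norm_num
  have h2 : unifSquare (aktBox 0 1 0 1) = 1 := by
    rw [Measure.real] at h
    rwa [ENNReal.toReal_eq_one_iff] at h
  rw [← prob_compl_eq_zero_iff (akt_meas_box _ _ _ _)] at h2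
  exact h2

/-- The law of one pair of points. -/
noncomputable def aktPair : Measure (EuclideanSpace ℝ (Fin 2) × EuclideanSpace ℝ (Fin 2)) :=
  unifSquare.prod unifSquare

instance akt_prob_pair : IsProbabilityMeasure aktPair := by
  unfold aktPair; infer_instance

/-- The law of `n` pairs of points. -/
noncomputable def aktP (n : ℕ) :
    Measure (Fin n → EuclideanSpace ℝ (Fin 2) × EuclideanSpace ℝ (Fin 2)) :=
  Measure.pi fun _ : Fin n => aktPair

instance akt_prob_P (n : ℕ) : IsProbabilityMeasure (aktP n) := by
  unfold aktP; infer_instance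

theorem akt_ae_all (n : ℕ) : ∀ᵐ ω ∂(aktP n), ∀ i,
    (ω i).1 ∈ aktBox 0 1 0 1 ∧ (ω i).2 ∈ aktBox 0 1 0 1 := by
  rw [ae_all_iff]
  intro i
  have h1 : ∀ᵐ q ∂aktPair, q.1 ∈ aktBox 0 1 0 1 ∧ q.2 ∈ aktBox 0 1 0 1 := by
    have a1 : ∀ᵐ q ∂aktPair, q.1 ∈ aktBox 0 1 0 1 :=
      (measurePreserving_fst (μ := unifSquare) (ν := unifSquare)).quasiMeasurePreserving.ae akt_ae_mem
    have a2 : ∀ᵐ q ∂aktPair, q.2 ∈ aktBox 0 1 0 1 :=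
      (measurePreserving_snd (μ := unifSquare) (ν := unifSquare)).quasiMeasurePreserving.ae akt_ae_mem
    exact a1.and a2
  exact (measurePreserving_eval (fun _ : Fin n => aktPair) i).quasiMeasurePreserving.ae h1

theorem akt_int_fst {f : EuclideanSpace ℝ (Fin 2) → ℝ} (hf : Measurable f) :
    ∫ q, f q.1 ∂aktPair = ∫ p, f p ∂unifSquare := by
  have h := (measurePreserving_fst (μ := unifSquare) (ν := unifSquare))
  have e := integral_map h.measurable.aemeasurable
    (hf.aestronglyMeasurable (μ := Measure.map Prod.fst (unifSquare.prod unifSquare)))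
  rw [h.map_eq] at e
  exact e.symm

theorem akt_int_snd {f : EuclideanSpace ℝ (Fin 2) → ℝ} (hf : Measurable f) :
    ∫ q, f q.2 ∂aktPair = ∫ p, f p ∂unifSquare := by
  have h := (measurePreserving_snd (μ := unifSquare) (ν := unifSquare))
  have e := integral_map h.measurable.aemeasurable
    (hf.aestronglyMeasurable (μ := Measure.map Prod.snd (unifSquare.prod unifSquare)))
  rw [h.map_eq] at e
  exact e.symm

/-- differences of a function over a pair are centred -/
theorem akt_int_diff {f : EuclideanSpace ℝ (Fin 2) → ℝ} (hf : Measurable f) {B : ℝ}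
    (hB : ∀ p, |f p| ≤ B) : ∫ q, (f q.1 - f q.2) ∂aktPair = 0 := by
  rw [integral_sub, akt_int_fst hf, akt_int_snd hf, sub_self]
  · exact akt_integrable _ (by fun_prop) (fun q => hB q.1)
  · exact akt_integrable _ (by fun_prop) (fun q => hB q.2)

/-- Matching distance as a function of the pairs, with truncated norm. -/
noncomputable def aktD (n : ℕ)
    (ω : Fin n → EuclideanSpace ℝ (Fin 2) × EuclideanSpace ℝ (Fin 2)) : ℝ :=
  ⨅ σ : Equiv.Perm (Fin n), ∑ i : Fin n, min ‖(ω i).1 - (ω (σ i)).2‖ 2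

/-- Matching distance as a function of the pairs. -/
noncomputable def aktOpt (n : ℕ)
    (ω : Fin n → EuclideanSpace ℝ (Fin 2) × EuclideanSpace ℝ (Fin 2)) : ℝ :=
  optMatchDist n (fun i => (ω i).1, fun i => (ω i).2)

theorem akt_D_eq (n : ℕ) : ∀ᵐ ω ∂(aktP n), aktD n ω = aktOpt n ω := by
  filter_upwards [akt_ae_all n] with ω hω
  unfold aktD aktOpt optMatchDist
  congr 1
  funext σ
  refine Finset.sum_congr rfl fun i _ => min_eq_left ?_
  obtain ⟨⟨a1, a2⟩, ⟨a3, a4⟩⟩ := (hω i).1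
  obtain ⟨⟨b1, b2⟩, ⟨b3, b4⟩⟩ := (hω (σ i)).2
  rw [EuclideanSpace.norm_eq, Real.sqrt_le_left (by norm_num)]
  simp only [Fin.sum_univ_two, PiLp.sub_apply, Real.norm_eq_abs, sq_abs]
  nlinarith

theorem akt_D_meas (n : ℕ) : Measurable (aktD n) := by
  unfold aktD
  refine Measurable.iInf fun σ => ?_
  fun_prop

theorem akt_D_nonneg (n : ℕ) (ω) : 0 ≤ aktD n ω := by
  unfold aktD
  refine le_ciInf fun σ => Finset.sum_nonneg fun i _ => le_min (norm_nonneg _) (by norm_num)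

theorem akt_D_bound (n : ℕ) (ω) : |aktD n ω| ≤ 2 * n := by
  rw [abs_of_nonneg (akt_D_nonneg n ω)]
  refine (ciInf_le (Set.finite_range _).bddBelow 1).trans ?_
  refine (Finset.sum_le_sum fun i _ => min_le_right _ _).trans ?_
  simp [mul_comm]

theorem akt_D_diff_aux (n : ℕ) (ω ω' : Fin n → EuclideanSpace ℝ (Fin 2) × EuclideanSpace ℝ (Fin 2))
    (i : Fin n) (h : ∀ j, j ≠ i → ω j = ω' j) : aktD n ω ≤ aktD n ω' + 4 := by
  unfold aktD
  rw [← sub_le_iff_le_add]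
  refine le_ciInf fun σ => ?_
  rw [sub_le_iff_le_add]
  refine (ciInf_le (Set.finite_range _).bddBelow σ).trans ?_
  have : ∀ j, min ‖(ω j).1 - (ω (σ j)).2‖ 2 ≤ min ‖(ω' j).1 - (ω' (σ j)).2‖ 2 +
      ((if j = i then 2 else 0) + (if σ j = i then 2 else 0)) := by
    intro j
    have h0 : 0 ≤ min ‖(ω' j).1 - (ω' (σ j)).2‖ 2 := le_min (norm_nonneg _) (by norm_num)
    have h1 : min ‖(ω j).1 - (ω (σ j)).2‖ 2 ≤ 2 := min_le_right _ _
    by_cases e1 : j = i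
    · simp only [e1, if_true] at h0 h1 ⊢
      split_ifs <;> linarith
    · by_cases e2 : σ j = i
      · simp only [e2, if_true] at h0 h1 ⊢
        split_ifs <;> linarith
      · rw [h j e1, h (σ j) e2]; simp [e1, e2]
  refine (Finset.sum_le_sum fun j _ => this j).trans ?_
  rw [Finset.sum_add_distrib, Finset.sum_add_distrib]
  have e3 : ∑ j, (if σ j = i then (2 : ℝ) else 0) = 2 := by
    rw [Equiv.sum_comp σ (fun j => if j = i then (2 : ℝ) else 0)]; simp
  rw [e3]
  simp
  norm_num

theorem akt_D_diff (n : ℕ) (ω : Fin n → EuclideanSpace ℝ (Fin 2) × EuclideanSpace ℝ (Fin 2)) (i a) :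
    |aktD n (Function.update ω i a) - aktD n ω| ≤ 4 := by
  rw [abs_le]
  have h1 := akt_D_diff_aux n (Function.update ω i a) ω i (fun j hj => by simp [hj])
  have h2 := akt_D_diff_aux n ω (Function.update ω i a) i (fun j hj => by simp [hj])
  constructor <;> linarith

theorem akt_conc (n : ℕ) (t : ℝ) (ht : 0 < t) :
    (aktP n) {ω | t ≤ |aktD n ω - ∫ ω, aktD n ω ∂(aktP n)|} ≤ ENNReal.ofReal ((n * 4 ^ 2) / t ^ 2) :=
  akt_chebyshev (aktP n) (akt_D_meas n) (akt_D_bound n)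
    (akt_variance aktPair 4 (by norm_num) n (aktD n) (akt_D_meas n) _ (akt_D_bound n) (akt_D_diff n)) ht


/-- averaging kernel over dyadic blocks of length `2 ^ e` -/
noncomputable def aktU (e a c : ℕ) : ℝ := if c / 2 ^ e = a / 2 ^ e then ((2 : ℝ) ^ e)⁻¹ else 0

theorem akt_U_nonneg (e a c : ℕ) : 0 ≤ aktU e a c := by
  unfold aktU; split_ifs <;> positivity

theorem akt_U_sum_full (e a M : ℕ) (h : (a / 2 ^ e + 1) * 2 ^ e ≤ M) :
    ∑ j ∈ Finset.range M, aktU e a j = 1 := by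
  have hpos : 0 < 2 ^ e := by positivity
  unfold aktU
  rw [← Finset.sum_filter]
  have : (Finset.range M).filter (fun j => j / 2 ^ e = a / 2 ^ e) =
      Finset.Ico (a / 2 ^ e * 2 ^ e) (a / 2 ^ e * 2 ^ e + 2 ^ e) := by
    ext j
    simp only [Finset.mem_filter, Finset.mem_range, Finset.mem_Ico]
    rw [Nat.div_eq_iff hpos]
    rw [add_mul] at h
    constructor
    · rintro ⟨h1, h2, h3⟩; omega
    · rintro ⟨h1, h2⟩; omega
  rw [this]
  simp

theorem akt_U_sum_zero (e a M : ℕ) (h : M ≤ (a / 2 ^ e) * 2 ^ e) :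
    ∑ j ∈ Finset.range M, aktU e a j = 0 := by
  have hpos : 0 < 2 ^ e := by positivity
  refine Finset.sum_eq_zero fun j hj => ?_
  unfold aktU
  rw [if_neg]
  intro h2
  rw [Nat.div_eq_iff hpos] at h2
  simp only [Finset.mem_range] at hj
  omega

theorem akt_U_sum_mem (e a M : ℕ) :
    0 ≤ ∑ j ∈ Finset.range M, aktU e a j ∧ ∑ j ∈ Finset.range M, aktU e a j ≤ 1 := by
  refine ⟨Finset.sum_nonneg fun j _ => akt_U_nonneg _ _ _, ?_⟩
  rw [← akt_U_sum_full e a (max M ((a / 2 ^ e + 1) * 2 ^ e)) (le_max_right _ _)]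
  exact Finset.sum_le_sum_of_subset_of_nonneg (Finset.range_mono (le_max_left _ _))
    (fun _ _ _ => akt_U_nonneg _ _ _)

/-- primitive of the difference of two consecutive averaging kernels -/
noncomputable def aktPr (e a c : ℕ) : ℝ :=
  ∑ j ∈ Finset.range (c + 1), (aktU e a j - aktU (e + 1) a j)

theorem akt_Pr_bound (e a c : ℕ) :
    |aktPr e a c| ≤ if c / 2 ^ (e + 1) = a / 2 ^ (e + 1) then 1 else 0 := by
  have hpos : 0 < 2 ^ e := by positivity
  have hpos' : 0 < 2 ^ (e + 1) := by positivity
  unfold aktPr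
  rw [Finset.sum_sub_distrib]
  have b1 := akt_U_sum_mem e a (c + 1)
  have b2 := akt_U_sum_mem (e + 1) a (c + 1)
  split_ifs with h
  · rw [abs_le]; constructor <;> linarith
  · have hd : a / 2 ^ (e + 1) = a / 2 ^ e / 2 := by rw [pow_succ, Nat.div_div_eq_div_mul]
    rw [Nat.div_eq_iff hpos'] at h
    rw [not_and_or] at h
    have hs1 : a / 2 ^ (e + 1) * 2 ^ (e + 1) ≤ a / 2 ^ e * 2 ^ e := by
      rw [hd, pow_succ, mul_comm (2 ^ e) 2, ← mul_assoc]
      exact Nat.mul_le_mul_right _ (Nat.div_mul_le_self _ _)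
    have hs2 : (a / 2 ^ e + 1) * 2 ^ e ≤ (a / 2 ^ (e + 1) + 1) * 2 ^ (e + 1) := by
      rw [hd, pow_succ, mul_comm (2 ^ e) 2, ← mul_assoc]
      exact Nat.mul_le_mul_right _ (by omega)
    rcases h with h | h
    · rw [akt_U_sum_zero e a, akt_U_sum_zero (e + 1) a]
      · simp
      · omega
      · omega
    · have h3 : (a / 2 ^ (e + 1) + 1) * 2 ^ (e + 1) ≤ c + 1 := by
        rw [add_mul]; omega
      rw [akt_U_sum_full e a, akt_U_sum_full (e + 1) a]
      · simp
      · exact h3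
      · exact hs2.trans h3

theorem akt_abel (p g : ℕ → ℝ) (M : ℕ) :
    ∑ i ∈ Finset.range M, p i * g i =
      ∑ i ∈ Finset.range M, (∑ j ∈ Finset.range (i + 1), p j) * (g i - g (i + 1))
        + (∑ j ∈ Finset.range M, p j) * g M := by
  induction M with
  | zero => simp
  | succ M ih =>
    rw [Finset.sum_range_succ, ih, Finset.sum_range_succ (fun i =>
      (∑ j ∈ Finset.range (i + 1), p j) * (g i - g (i + 1))), Finset.sum_range_succ p]
    ring

theorem akt_step1 (K e a : ℕ) (he : e < K) (ha : a < 2 ^ K) (g : ℕ → ℝ) :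
    ∑ c ∈ Finset.range (2 ^ K), (aktU e a c - aktU (e + 1) a c) * g c =
      ∑ c ∈ Finset.range (2 ^ K), aktPr e a c * (g c - g (c + 1)) := by
  have full : ∀ e, e ≤ K → (a / 2 ^ e + 1) * 2 ^ e ≤ 2 ^ K := by
    intro e he
    obtain ⟨d, rfl⟩ := Nat.exists_eq_add_of_le he
    rw [pow_add, mul_comm (2 ^ e)] at *
    refine Nat.mul_le_mul_right _ ?_
    exact Nat.succ_le_of_lt (Nat.div_lt_of_lt_mul (by rwa [mul_comm] at ha))
  rw [akt_abel]
  have : ∑ j ∈ Finset.range (2 ^ K), (aktU e a j - aktU (e + 1) a j) = 0 := by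
    rw [Finset.sum_sub_distrib, akt_U_sum_full e a _ (full e he.le),
      akt_U_sum_full (e + 1) a _ (full (e + 1) he), sub_self]
  rw [this]
  simp [aktPr]

/-- two-dimensional block averages -/
noncomputable def aktT (K e e' a b : ℕ) (F : ℕ → ℕ → ℝ) : ℝ :=
  ∑ c ∈ Finset.range (2 ^ K), ∑ d ∈ Finset.range (2 ^ K), aktU e a c * aktU e' b d * F c d

noncomputable def aktK1 (K a b c d : ℕ) : ℝ := ∑ e ∈ Finset.range K, aktPr e a c * aktU e b d
noncomputable def aktK2 (K a b c d : ℕ) : ℝ := ∑ e ∈ Finset.range K, aktU (e + 1) a c * aktPr e b d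

theorem akt_T_step1 (K e e' a b : ℕ) (he : e < K) (ha : a < 2 ^ K) (F : ℕ → ℕ → ℝ) :
    aktT K e e' a b F - aktT K (e + 1) e' a b F =
      ∑ c ∈ Finset.range (2 ^ K), ∑ d ∈ Finset.range (2 ^ K),
        aktPr e a c * aktU e' b d * (F c d - F (c + 1) d) := by
  unfold aktT
  rw [Finset.sum_comm, Finset.sum_comm (f := fun c d => aktU (e + 1) a c * aktU e' b d * F c d),
    ← Finset.sum_sub_distrib,
    Finset.sum_comm (f := fun c d => aktPr e a c * aktU e' b d * (F c d - F (c + 1) d))]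
  refine Finset.sum_congr rfl fun d _ => ?_
  have := akt_step1 K e a he ha (fun c => aktU e' b d * F c d)
  rw [← Finset.sum_sub_distrib]
  calc _ = ∑ c ∈ Finset.range (2 ^ K), (aktU e a c - aktU (e + 1) a c) * (aktU e' b d * F c d) :=
        Finset.sum_congr rfl fun c _ => by ring
    _ = _ := this
    _ = _ := Finset.sum_congr rfl fun c _ => by ring

theorem akt_T_step2 (K e e' a b : ℕ) (he : e' < K) (hb : b < 2 ^ K) (F : ℕ → ℕ → ℝ) :
    aktT K e e' a b F - aktT K e (e' + 1) a b F =
      ∑ c ∈ Finset.range (2 ^ K), ∑ d ∈ Finset.range (2 ^ K),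
        aktU e a c * aktPr e' b d * (F c d - F c (d + 1)) := by
  unfold aktT
  rw [← Finset.sum_sub_distrib]
  refine Finset.sum_congr rfl fun c _ => ?_
  have := akt_step1 K e' b he hb (fun d => aktU e a c * F c d)
  rw [← Finset.sum_sub_distrib]
  calc _ = ∑ d ∈ Finset.range (2 ^ K), (aktU e' b d - aktU (e' + 1) b d) * (aktU e a c * F c d) :=
        Finset.sum_congr rfl fun c _ => by ring
    _ = _ := this
    _ = _ := Finset.sum_congr rfl fun c _ => by ring

theorem akt_T_zero (K a b : ℕ) (ha : a < 2 ^ K) (hb : b < 2 ^ K) (F : ℕ → ℕ → ℝ) :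
    aktT K 0 0 a b F = F a b := by
  unfold aktT aktU
  rw [Finset.sum_eq_single a, Finset.sum_eq_single b]
  · simp
  · intro d _ hd; simp [hd]
  · intro h; simp [hb] at h
  · intro c _ hc; simp [hc]
  · intro h; simp [ha] at h

theorem akt_T_top (K a b : ℕ) (ha : a < 2 ^ K) (hb : b < 2 ^ K) (F : ℕ → ℕ → ℝ) :
    aktT K K K a b F = aktT K K K 0 0 F := by
  unfold aktT
  refine Finset.sum_congr rfl fun c hc => Finset.sum_congr rfl fun d hd => ?_
  simp only [Finset.mem_range] at hc hd
  simp [aktU, Nat.div_eq_of_lt, ha, hb, hc, hd]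

theorem akt_flow (K a b : ℕ) (ha : a < 2 ^ K) (hb : b < 2 ^ K) (F : ℕ → ℕ → ℝ) :
    F a b = aktT K K K 0 0 F + ∑ c ∈ Finset.range (2 ^ K), ∑ d ∈ Finset.range (2 ^ K),
      (aktK1 K a b c d * (F c d - F (c + 1) d) + aktK2 K a b c d * (F c d - F c (d + 1))) := by
  have tele : ∀ m, m ≤ K → aktT K 0 0 a b F = aktT K m m a b F +
      ∑ e ∈ Finset.range m, ∑ c ∈ Finset.range (2 ^ K), ∑ d ∈ Finset.range (2 ^ K),
        (aktPr e a c * aktU e b d * (F c d - F (c + 1) d)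
          + aktU (e + 1) a c * aktPr e b d * (F c d - F c (d + 1))) := by
    intro m
    induction m with
    | zero => simp
    | succ m ih =>
      intro hm
      rw [ih (by omega), Finset.sum_range_succ]
      have s1 := akt_T_step1 K m m a b (by omega) ha F
      have s2 := akt_T_step2 K (m + 1) m a b (by omega) hb F
      simp only [Finset.sum_add_distrib] at s1 s2 ⊢
      linarith
  have h := tele K le_rfl
  rw [akt_T_zero K a b ha hb, akt_T_top K a b ha hb] at h
  rw [h]
  congr 1
  rw [Finset.sum_comm]
  refine Finset.sum_congr rfl fun c _ => ?_
  rw [Finset.sum_comm]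
  refine Finset.sum_congr rfl fun d _ => ?_
  unfold aktK1 aktK2
  rw [Finset.sum_mul, Finset.sum_mul, ← Finset.sum_add_distrib]

/-- indicator that two grid cells lie in a common dyadic square -/
noncomputable def aktI (e a b c d : ℕ) : ℝ :=
  if c / 2 ^ e = a / 2 ^ e ∧ d / 2 ^ e = b / 2 ^ e then 1 else 0

noncomputable def aktW (K a b c d : ℕ) : ℝ :=
  ∑ e ∈ Finset.range K, (1 / 2 : ℝ) ^ e * aktI (e + 1) a b c d

theorem akt_div_succ {e a c : ℕ} (h : c / 2 ^ e = a / 2 ^ e) : c / 2 ^ (e + 1) = a / 2 ^ (e + 1) := by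
  rw [pow_succ, ← Nat.div_div_eq_div_mul, ← Nat.div_div_eq_div_mul, h]

theorem akt_K1_bound (K a b c d : ℕ) : |aktK1 K a b c d| ≤ aktW K a b c d := by
  unfold aktK1 aktW
  refine (Finset.abs_sum_le_sum_abs _ _).trans (Finset.sum_le_sum fun e _ => ?_)
  rw [abs_mul, abs_of_nonneg (akt_U_nonneg _ _ _)]
  have h1 := akt_Pr_bound e a c
  by_cases hc : c / 2 ^ (e + 1) = a / 2 ^ (e + 1)
  · rw [if_pos hc] at h1
    by_cases hd : d / 2 ^ e = b / 2 ^ e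
    · have hd' := akt_div_succ hd
      have : aktU e b d = (1 / 2 : ℝ) ^ e := by unfold aktU; rw [if_pos hd]; simp
      rw [this]
      simp only [aktI, hc, hd', and_self, if_true, mul_one]
      have : (0 : ℝ) ≤ (1 / 2 : ℝ) ^ e := by positivity
      nlinarith
    · have : aktU e b d = 0 := by unfold aktU; rw [if_neg hd]
      rw [this, mul_zero]
      unfold aktI
      positivity
  · rw [if_neg hc] at h1
    have : |aktPr e a c| = 0 := le_antisymm h1 (abs_nonneg _)
    rw [this, zero_mul]
    unfold aktI
    positivity

theorem akt_K2_bound (K a b c d : ℕ) : |aktK2 K a b c d| ≤ aktW K a b c d := by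
  unfold aktK2 aktW
  refine (Finset.abs_sum_le_sum_abs _ _).trans (Finset.sum_le_sum fun e _ => ?_)
  rw [abs_mul, abs_of_nonneg (akt_U_nonneg _ _ _)]
  have h1 := akt_Pr_bound e b d
  by_cases hd : d / 2 ^ (e + 1) = b / 2 ^ (e + 1)
  · rw [if_pos hd] at h1
    by_cases hc : c / 2 ^ (e + 1) = a / 2 ^ (e + 1)
    · have : aktU (e + 1) a c = (1 / 2 : ℝ) ^ (e + 1) := by unfold aktU; rw [if_pos hc]; simp
      rw [this]
      simp only [aktI, hc, hd, and_self, if_true, mul_one]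
      have : (0 : ℝ) ≤ (1 / 2 : ℝ) ^ e := by positivity
      rw [pow_succ]
      nlinarith [abs_nonneg (aktPr e b d)]
    · have : aktU (e + 1) a c = 0 := by unfold aktU; rw [if_neg hc]
      rw [this, zero_mul]
      unfold aktI
      positivity
  · rw [if_neg hd] at h1
    have : |aktPr e b d| = 0 := le_antisymm h1 (abs_nonneg _)
    rw [this, mul_zero]
    unfold aktI
    positivity

theorem akt_geom (K : ℕ) : ∀ s : ℕ → ℝ, (∀ e, s e = 0 ∨ s e = 1) →
    (∑ e ∈ Finset.range K, (1 / 2 : ℝ) ^ e * s e ≤ 2) ∧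
    (0 ≤ ∑ e ∈ Finset.range K, (1 / 2 : ℝ) ^ e * s e) ∧
    (∑ e ∈ Finset.range K, (1 / 2 : ℝ) ^ e * s e) ^ 2 ≤ 4 * ∑ e ∈ Finset.range K, (1 / 4 : ℝ) ^ e * s e
    := by
  induction K with
  | zero => intro s _; simp
  | succ K ih =>
    intro s hs
    obtain ⟨h1, h2, h3⟩ := ih (fun e => s (e + 1)) (fun e => hs (e + 1))
    rw [Finset.sum_range_succ', Finset.sum_range_succ']
    have e1 : ∑ e ∈ Finset.range K, (1 / 2 : ℝ) ^ (e + 1) * s (e + 1) =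
        1 / 2 * ∑ e ∈ Finset.range K, (1 / 2 : ℝ) ^ e * s (e + 1) := by
      rw [Finset.mul_sum]; exact Finset.sum_congr rfl fun e _ => by ring
    have e2 : ∑ e ∈ Finset.range K, (1 / 4 : ℝ) ^ (e + 1) * s (e + 1) =
        1 / 4 * ∑ e ∈ Finset.range K, (1 / 4 : ℝ) ^ e * s (e + 1) := by
      rw [Finset.mul_sum]; exact Finset.sum_congr rfl fun e _ => by ring
    rw [e1, e2]
    have h4 : 0 ≤ ∑ e ∈ Finset.range K, (1 / 4 : ℝ) ^ e * s (e + 1) := by nlinarith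
    rcases hs 0 with h0 | h0 <;> rw [h0] <;> simp only [pow_zero, mul_zero, mul_one, add_zero]
    · refine ⟨by linarith, by linarith, by nlinarith⟩
    · refine ⟨by linarith, by linarith, by nlinarith⟩

theorem akt_W_sq (K a b c d : ℕ) :
    aktW K a b c d ^ 2 ≤ 4 * ∑ e ∈ Finset.range K, (1 / 4 : ℝ) ^ e * aktI (e + 1) a b c d := by
  refine (akt_geom K (fun e => aktI (e + 1) a b c d) fun e => ?_).2.2
  unfold aktI
  split_ifs <;> simp

theorem akt_W_le (K a b c d : ℕ) : aktW K a b c d ≤ 2 := by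
  refine (akt_geom K (fun e => aktI (e + 1) a b c d) fun e => ?_).1
  unfold aktI
  split_ifs <;> simp


/-- index of the dyadic cell of a coordinate -/
noncomputable def aktIx (K : ℕ) (p : EuclideanSpace ℝ (Fin 2)) (i : Fin 2) : ℕ := ⌊(2 : ℝ) ^ K * p i⌋₊

theorem akt_Ix_meas (K : ℕ) (i : Fin 2) : Measurable (fun p => aktIx K p i) := by
  unfold aktIx
  exact Nat.measurable_floor.comp ((akt_meas_coord i).const_mul _)

theorem akt_Ix_comp (K : ℕ) (g : ℕ → ℕ → ℝ) : Measurable (fun p => g (aktIx K p 0) (aktIx K p 1)) := by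
  have h : Measurable (fun q : ℕ × ℕ => g q.1 q.2) := Measurable.of_discrete
  exact h.comp ((akt_Ix_meas K 0).prodMk (akt_Ix_meas K 1))

theorem akt_floor_cell (K e c : ℕ) (t : ℝ) (ht : 0 ≤ t) (h : c / 2 ^ e = ⌊(2 : ℝ) ^ K * t⌋₊ / 2 ^ e) :
    t ∈ Set.Ico (((c / 2 ^ e : ℕ) : ℝ) * 2 ^ e / 2 ^ K) ((((c / 2 ^ e : ℕ) : ℝ) + 1) * 2 ^ e / 2 ^ K) := by
  have hN : (0 : ℝ) < 2 ^ K := by positivity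
  have ht2 : 0 ≤ (2 : ℝ) ^ K * t := by positivity
  obtain ⟨h1, h2⟩ := (Nat.floor_eq_iff ht2).1 (rfl : ⌊(2 : ℝ) ^ K * t⌋₊ = _)
  set m := ⌊(2 : ℝ) ^ K * t⌋₊ with hm
  set j := c / 2 ^ e with hj
  have hpos : 0 < 2 ^ e := by positivity
  have h3 : j * 2 ^ e ≤ m := by rw [h]; exact Nat.div_mul_le_self _ _
  have h4 : m + 1 ≤ (j + 1) * 2 ^ e := by
    rw [h]; have := Nat.lt_div_mul_add (a := m) hpos
    rw [add_mul]; omega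
  have h3' : (j : ℝ) * 2 ^ e ≤ m := by exact_mod_cast h3
  have h4' : (m : ℝ) + 1 ≤ ((j : ℝ) + 1) * 2 ^ e := by exact_mod_cast h4
  constructor
  · rw [div_le_iff₀ hN]; linarith
  · rw [lt_div_iff₀ hN]; linarith

theorem akt_I_le (e a b c d : ℕ) : |aktI e a b c d| ≤ 1 := by
  unfold aktI; split_ifs <;> simp

theorem akt_I_int (K e c d : ℕ) :
    ∫ p, aktI e (aktIx K p 0) (aktIx K p 1) c d ∂unifSquare ≤ (4 : ℝ) ^ e / 4 ^ K := by
  have hN : (0 : ℝ) < 2 ^ K := by positivity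
  have key : ∀ᵐ p ∂unifSquare, aktI e (aktIx K p 0) (aktIx K p 1) c d ≤
      (aktBox (((c / 2 ^ e : ℕ) : ℝ) * 2 ^ e / 2 ^ K) ((((c / 2 ^ e : ℕ) : ℝ) + 1) * 2 ^ e / 2 ^ K)
       (((d / 2 ^ e : ℕ) : ℝ) * 2 ^ e / 2 ^ K) ((((d / 2 ^ e : ℕ) : ℝ) + 1) * 2 ^ e / 2 ^ K)).indicator 1 p := by
    filter_upwards [akt_ae_mem] with p hp
    unfold aktI
    split_ifs with h
    · rw [Set.indicator_of_mem]
      · simp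
      · exact ⟨akt_floor_cell K e c _ hp.1.1 h.1, akt_floor_cell K e d _ hp.2.1 h.2⟩
    · exact Set.indicator_nonneg (fun _ _ => by simp) _
  refine (integral_mono_ae (akt_integrable _ (akt_Ix_comp K fun a b => aktI e a b c d)
    (fun p => akt_I_le _ _ _ _ _)) ?_ key).trans ?_
  · exact (integrable_indicator_iff (akt_meas_box _ _ _ _)).2 (integrable_const (1:ℝ)).integrableOn
  rw [integral_indicator_one (akt_meas_box _ _ _ _)]
  refine (akt_box_le _ _ _ _ (by gcongr; linarith) (by gcongr; linarith)).trans (le_of_eq ?_)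
  have e4 : (4 : ℝ) ^ e = 2 ^ e * 2 ^ e := by rw [← mul_pow]; norm_num
  have e5 : (4 : ℝ) ^ K = 2 ^ K * 2 ^ K := by rw [← mul_pow]; norm_num
  rw [e4, e5]
  field_simp
  ring

theorem akt_W_nonneg (K a b c d : ℕ) : 0 ≤ aktW K a b c d :=
  (abs_nonneg _).trans (akt_K1_bound K a b c d)

theorem akt_W_int (K c d : ℕ) :
    ∫ p, aktW K (aktIx K p 0) (aktIx K p 1) c d ^ 2 ∂unifSquare ≤ 16 * K / 4 ^ K := by
  have hi : ∀ e, Integrable (fun p => aktI (e + 1) (aktIx K p 0) (aktIx K p 1) c d) unifSquare := fun e =>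
    akt_integrable _ (akt_Ix_comp K fun a b => aktI (e + 1) a b c d) (fun p => akt_I_le _ _ _ _ _)
  calc _ ≤ ∫ p, 4 * ∑ e ∈ Finset.range K, (1 / 4 : ℝ) ^ e * aktI (e + 1) (aktIx K p 0) (aktIx K p 1) c d
        ∂unifSquare := by
        refine integral_mono ?_ ?_ fun p => akt_W_sq _ _ _ _ _
        · refine akt_integrable (B := 4) _ (akt_Ix_comp K fun a b => aktW K a b c d ^ 2) fun p => ?_
          have h1 := akt_W_nonneg K (aktIx K p 0) (aktIx K p 1) c d
          have h2 := akt_W_le K (aktIx K p 0) (aktIx K p 1) c d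
          rw [abs_of_nonneg (by positivity)]; nlinarith
        · exact (integrable_finsetSum _ fun e _ => (hi e).const_mul _).const_mul _
    _ = 4 * ∑ e ∈ Finset.range K, (1 / 4 : ℝ) ^ e * 
        ∫ p, aktI (e + 1) (aktIx K p 0) (aktIx K p 1) c d ∂unifSquare := by
        rw [integral_const_mul, integral_finsetSum _ fun e _ => (hi e).const_mul _]
        simp_rw [integral_const_mul]
    _ ≤ 4 * ∑ e ∈ Finset.range K, (1 / 4 : ℝ) ^ e * ((4 : ℝ) ^ (e + 1) / 4 ^ K) := by
        gcongr with e _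
        exact akt_I_int K (e + 1) c d
    _ = _ := by
        have : ∀ e, (1 / 4 : ℝ) ^ e * ((4 : ℝ) ^ (e + 1) / 4 ^ K) = 4 / 4 ^ K := by
          intro e; rw [pow_succ, one_div, inv_pow]; field_simp
        simp_rw [this]
        simp; ring

/-- fluctuation of a kernel -/
noncomputable def aktS (K : ℕ) (g : ℕ → ℕ → ℝ) (n : ℕ)
    (ω : Fin n → EuclideanSpace ℝ (Fin 2) × EuclideanSpace ℝ (Fin 2)) : ℝ :=
  ∑ i, (g (aktIx K (ω i).1 0) (aktIx K (ω i).1 1) - g (aktIx K (ω i).2 0) (aktIx K (ω i).2 1))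

theorem akt_S_meas (K : ℕ) (g : ℕ → ℕ → ℝ) (n : ℕ) : Measurable (aktS K g n) := by
  have h := akt_Ix_comp K g
  unfold aktS
  refine Finset.measurable_sum _ fun i _ => ?_
  exact (h.comp (measurable_fst.comp (measurable_pi_apply i))).sub
    (h.comp (measurable_snd.comp (measurable_pi_apply i)))

theorem akt_S_int (K : ℕ) (g : ℕ → ℕ → ℝ) (c d n : ℕ) (hK : 1 ≤ K) (hn : n < 4 ^ (K + 1))
    (hg : ∀ a b, |g a b| ≤ aktW K a b c d) :
    Integrable (fun ω => |aktS K g n ω|) (aktP n) ∧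
    ∫ ω, |aktS K g n ω| ∂(aktP n) ≤ 129 * Real.sqrt K := by
  set ξ : EuclideanSpace ℝ (Fin 2) × EuclideanSpace ℝ (Fin 2) → ℝ := fun q =>
    g (aktIx K q.1 0) (aktIx K q.1 1) - g (aktIx K q.2 0) (aktIx K q.2 1) with hξd
  have hm := akt_Ix_comp K g
  have hg2 : ∀ a b, |g a b| ≤ 2 := fun a b => (hg a b).trans (akt_W_le _ _ _ _ _)
  have hξm : Measurable ξ := (hm.comp measurable_fst).sub (hm.comp measurable_snd)
  have hξB : ∀ q, |ξ q| ≤ 4 := fun q => by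
    refine (abs_sub _ _).trans ?_
    have h1 := hg2 (aktIx K q.1 0) (aktIx K q.1 1)
    have h2 := hg2 (aktIx K q.2 0) (aktIx K q.2 1)
    linarith
  have h0 : ∫ q, ξ q ∂aktPair = 0 := akt_int_diff hm (fun p => hg2 _ _)
  have hmom := (akt_moments aktPair hξm hξB h0 n).2.1
  have hWm : Measurable (fun p => aktW K (aktIx K p 0) (aktIx K p 1) c d ^ 2) :=
    akt_Ix_comp K (fun a b => aktW K a b c d ^ 2)
  have hWb : ∀ p, |aktW K (aktIx K p 0) (aktIx K p 1) c d ^ 2| ≤ 4 := fun p => by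
    have h1 := akt_W_nonneg K (aktIx K p 0) (aktIx K p 1) c d
    have h2 := akt_W_le K (aktIx K p 0) (aktIx K p 1) c d
    rw [abs_of_nonneg (by positivity)]; nlinarith
  have hvar : ∫ q, ξ q ^ 2 ∂aktPair ≤ 64 * K / 4 ^ K := by
    calc _ ≤ ∫ q, (2 * aktW K (aktIx K q.1 0) (aktIx K q.1 1) c d ^ 2 +
          2 * aktW K (aktIx K q.2 0) (aktIx K q.2 1) c d ^ 2) ∂aktPair := by
          refine integral_mono ?_ ?_ fun q => ?_
          · refine akt_integrable (B := 16) _ (hξm.pow_const 2) fun q => ?_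
            have := hξB q
            rw [abs_pow]; nlinarith [abs_nonneg (ξ q)]
          · refine Integrable.fun_add ?_ ?_
            · exact (akt_integrable _ (hWm.comp measurable_fst) (fun q => hWb q.1)).const_mul _
            · exact (akt_integrable _ (hWm.comp measurable_snd) (fun q => hWb q.2)).const_mul _
          · have h1 := sq_le_sq' (neg_le_of_abs_le (hg (aktIx K q.1 0) (aktIx K q.1 1)))
              (le_of_abs_le (hg (aktIx K q.1 0) (aktIx K q.1 1)))
            have h2 := sq_le_sq' (neg_le_of_abs_le (hg (aktIx K q.2 0) (aktIx K q.2 1)))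
              (le_of_abs_le (hg (aktIx K q.2 0) (aktIx K q.2 1)))
            simp only [hξd]
            nlinarith [sq_nonneg (g (aktIx K q.1 0) (aktIx K q.1 1) + g (aktIx K q.2 0) (aktIx K q.2 1))]
      _ = 2 * ∫ p, aktW K (aktIx K p 0) (aktIx K p 1) c d ^ 2 ∂unifSquare + 
          2 * ∫ p, aktW K (aktIx K p 0) (aktIx K p 1) c d ^ 2 ∂unifSquare := by
          rw [integral_add, integral_const_mul, integral_const_mul, akt_int_fst hWm, akt_int_snd hWm]
          · exact (akt_integrable _ (hWm.comp measurable_fst) (fun q => hWb q.1)).const_mul _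
          · exact (akt_integrable _ (hWm.comp measurable_snd) (fun q => hWb q.2)).const_mul _
      _ ≤ _ := by
          have := akt_W_int K c d
          have e : (64 : ℝ) * K / 4 ^ K = 4 * (16 * K / 4 ^ K) := by ring
          rw [e]; linarith
  have hvar2 : (n : ℝ) * ∫ q, ξ q ^ 2 ∂aktPair ≤ 256 * K := by
    have hn' : (n : ℝ) ≤ 4 ^ (K + 1) := by exact_mod_cast hn.le
    calc _ ≤ (4 : ℝ) ^ (K + 1) * (64 * K / 4 ^ K) :=
          mul_le_mul hn' hvar (integral_nonneg fun _ => sq_nonneg _) (by positivity)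
      _ = _ := by rw [pow_succ]; field_simp; norm_num
  have hS : ∀ ω, aktS K g n ω = ∑ i, ξ (ω i) := fun ω => rfl
  have hSm := akt_S_meas K g n
  have hSb : ∀ ω, |aktS K g n ω| ≤ n * 4 := fun ω => by
    rw [hS]; exact akt_sum_bound hξB n ω
  have hIntg : Integrable (fun ω => |aktS K g n ω|) (aktP n) :=
    akt_integrable (B := n * 4) _ (by simpa using hSm.norm) (fun ω => by rw [abs_abs]; exact hSb ω)
  refine ⟨hIntg, ?_⟩
  have hK' : (1 : ℝ) ≤ K := by exact_mod_cast hK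
  have hs : 0 < Real.sqrt K := Real.sqrt_pos.2 (by linarith)
  have hss : Real.sqrt K * Real.sqrt K = K := Real.mul_self_sqrt (by linarith)
  have hIntg2 : Integrable (fun ω => aktS K g n ω ^ 2) (aktP n) :=
    akt_integrable (B := (n * 4) ^ 2) _ (hSm.pow_const 2) (fun ω => by
      rw [abs_pow]; exact pow_le_pow_left₀ (abs_nonneg _) (hSb ω) 2)
  calc _ ≤ ∫ ω, (Real.sqrt K / 2 + (1 / (2 * Real.sqrt K)) * aktS K g n ω ^ 2) ∂(aktP n) := by
        refine integral_mono hIntg ((integrable_const _).fun_add (hIntg2.const_mul _)) fun ω => ?_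
        have : Real.sqrt K / 2 + (1 / (2 * Real.sqrt K)) * aktS K g n ω ^ 2 - |aktS K g n ω| =
            (Real.sqrt K - |aktS K g n ω|) ^ 2 / (2 * Real.sqrt K) := by
          rw [← sq_abs (aktS K g n ω)]
          field_simp; ring
        have h2 : 0 ≤ (Real.sqrt K - |aktS K g n ω|) ^ 2 / (2 * Real.sqrt K) := by positivity
        simp only; linarith
    _ = Real.sqrt K / 2 + (1 / (2 * Real.sqrt K)) * (n * ∫ q, ξ q ^ 2 ∂aktPair) := by
        rw [integral_add (integrable_const _) (hIntg2.const_mul _), integral_const_mul]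
        simp only [hS]
        rw [show aktP n = Measure.pi fun _ : Fin n => aktPair from rfl, hmom]
        simp
    _ ≤ Real.sqrt K / 2 + (1 / (2 * Real.sqrt K)) * (256 * K) := by gcongr
    _ ≤ _ := by
        have h3 : (1 / (2 * Real.sqrt K)) * (256 * K) = 128 * Real.sqrt K := by
          field_simp; rw [Real.sq_sqrt (by linarith)]; ring
        rw [h3]; linarith

theorem akt_norm_le (p : EuclideanSpace ℝ (Fin 2)) : ‖p‖ ≤ |p 0| + |p 1| := by
  rw [EuclideanSpace.norm_eq, Real.sqrt_le_left (by positivity)]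
  simp only [Fin.sum_univ_two, Real.norm_eq_abs]
  nlinarith [abs_nonneg (p 0), abs_nonneg (p 1)]

/-- grid point -/
noncomputable def aktGr (K a b : ℕ) : EuclideanSpace ℝ (Fin 2) := !₂[(a : ℝ) / 2 ^ K, (b : ℝ) / 2 ^ K]

theorem akt_Gr_near (K : ℕ) (p : EuclideanSpace ℝ (Fin 2)) (hp : p ∈ aktBox 0 1 0 1) :
    ‖p - aktGr K (aktIx K p 0) (aktIx K p 1)‖ ≤ 2 / 2 ^ K ∧
    aktIx K p 0 < 2 ^ K ∧ aktIx K p 1 < 2 ^ K := by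
  have hN : (0 : ℝ) < 2 ^ K := by positivity
  have one : ∀ i, 0 ≤ p i → p i < 1 → |p i - (aktIx K p i : ℝ) / 2 ^ K| ≤ 1 / 2 ^ K ∧ aktIx K p i < 2 ^ K := by
    intro i h0 h1
    have ht2 : 0 ≤ (2 : ℝ) ^ K * p i := by positivity
    obtain ⟨h3, h4⟩ := (Nat.floor_eq_iff ht2).1 (rfl : aktIx K p i = _)
    constructor
    · have e : p i - (aktIx K p i : ℝ) / 2 ^ K = (2 ^ K * p i - aktIx K p i) / 2 ^ K := by field_simp
      rw [e, abs_div, abs_of_pos hN]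
      gcongr
      rw [abs_le]; constructor <;> linarith
    · have : (aktIx K p i : ℝ) < 2 ^ K := by nlinarith
      exact_mod_cast this
  obtain ⟨a1, a2⟩ := one 0 hp.1.1 hp.1.2
  obtain ⟨b1, b2⟩ := one 1 hp.2.1 hp.2.2
  refine ⟨(akt_norm_le _).trans ?_, a2, b2⟩
  have e : (2 : ℝ) / 2 ^ K = 1 / 2 ^ K + 1 / 2 ^ K := by ring
  rw [e]
  refine add_le_add ?_ ?_
  · simpa [aktGr] using a1
  · simpa [aktGr] using b1

theorem akt_upper_pt (K n : ℕ) (ω : Fin n → EuclideanSpace ℝ (Fin 2) × EuclideanSpace ℝ (Fin 2))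
    (hω : ∀ i, (ω i).1 ∈ aktBox 0 1 0 1 ∧ (ω i).2 ∈ aktBox 0 1 0 1) :
    aktOpt n ω ≤ n * (4 / 2 ^ K) + ∑ c ∈ Finset.range (2 ^ K), ∑ d ∈ Finset.range (2 ^ K),
      (1 / 2 ^ K) * (|aktS K (fun a b => aktK1 K a b c d) n ω| + |aktS K (fun a b => aktK2 K a b c d) n ω|) := by
  have hN : (0 : ℝ) < 2 ^ K := by positivity
  obtain ⟨F, hF, hle⟩ := akt_opt_le n (fun i => (ω i).1, fun i => (ω i).2)
  refine hle.trans ?_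
  simp only
  set G : ℕ → ℕ → ℝ := fun a b => F (aktGr K a b) with hG
  have hG1 : ∀ c d, |G c d - G (c + 1) d| ≤ 1 / 2 ^ K := by
    intro c d
    have hh : ‖aktGr K c d - aktGr K (c + 1) d‖ ≤ 1 / 2 ^ K := by
      refine (akt_norm_le _).trans (le_of_eq ?_)
      simp only [aktGr]
      simp
      rw [← sub_div, abs_div]; simp
    have h1 := hF (aktGr K c d) (aktGr K (c + 1) d)
    have h2 := hF (aktGr K (c + 1) d) (aktGr K c d)
    rw [norm_sub_rev] at h2
    rw [abs_le]; constructor <;> simp only [hG] <;> linarith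
  have hG2 : ∀ c d, |G c d - G c (d + 1)| ≤ 1 / 2 ^ K := by
    intro c d
    have hh : ‖aktGr K c d - aktGr K c (d + 1)‖ ≤ 1 / 2 ^ K := by
      refine (akt_norm_le _).trans (le_of_eq ?_)
      simp only [aktGr]
      simp
      rw [← sub_div, abs_div]; simp
    have h1 := hF (aktGr K c d) (aktGr K c (d + 1))
    have h2 := hF (aktGr K c (d + 1)) (aktGr K c d)
    rw [norm_sub_rev] at h2
    rw [abs_le]; constructor <;> simp only [hG] <;> linarith
  have hstep : ∀ i, F (ω i).1 - F (ω i).2 ≤ 4 / 2 ^ K +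
      ∑ c ∈ Finset.range (2 ^ K), ∑ d ∈ Finset.range (2 ^ K),
      ((aktK1 K (aktIx K (ω i).1 0) (aktIx K (ω i).1 1) c d - aktK1 K (aktIx K (ω i).2 0) (aktIx K (ω i).2 1) c d) *
        (G c d - G (c + 1) d) +
       (aktK2 K (aktIx K (ω i).1 0) (aktIx K (ω i).1 1) c d - aktK2 K (aktIx K (ω i).2 0) (aktIx K (ω i).2 1) c d) *
        (G c d - G c (d + 1))) := by
    intro i
    obtain ⟨a1, a2, a3⟩ := akt_Gr_near K _ (hω i).1
    obtain ⟨b1, b2, b3⟩ := akt_Gr_near K _ (hω i).2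
    have f1 := akt_flow K _ _ a2 a3 G
    have f2 := akt_flow K _ _ b2 b3 G
    have h1 := hF (ω i).1 (aktGr K (aktIx K (ω i).1 0) (aktIx K (ω i).1 1))
    have h2 := hF (aktGr K (aktIx K (ω i).2 0) (aktIx K (ω i).2 1)) (ω i).2
    rw [norm_sub_rev] at h2
    have e : (4 : ℝ) / 2 ^ K = 2 / 2 ^ K + 2 / 2 ^ K := by ring
    have e2 : G (aktIx K (ω i).1 0) (aktIx K (ω i).1 1) - G (aktIx K (ω i).2 0) (aktIx K (ω i).2 1) =
      ∑ c ∈ Finset.range (2 ^ K), ∑ d ∈ Finset.range (2 ^ K),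
      ((aktK1 K (aktIx K (ω i).1 0) (aktIx K (ω i).1 1) c d - aktK1 K (aktIx K (ω i).2 0) (aktIx K (ω i).2 1) c d) *
        (G c d - G (c + 1) d) +
       (aktK2 K (aktIx K (ω i).1 0) (aktIx K (ω i).1 1) c d - aktK2 K (aktIx K (ω i).2 0) (aktIx K (ω i).2 1) c d) *
        (G c d - G c (d + 1))) := by
      rw [f1, f2, add_sub_add_left_eq_sub, ← Finset.sum_sub_distrib]
      refine Finset.sum_congr rfl fun c _ => ?_
      rw [← Finset.sum_sub_distrib]
      refine Finset.sum_congr rfl fun d _ => ?_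
      ring
    rw [← e2, e]
    simp only [hG] at *
    linarith
  refine (Finset.sum_le_sum fun i _ => hstep i).trans ?_
  rw [Finset.sum_add_distrib]
  refine add_le_add (by simp) ?_
  rw [Finset.sum_comm]
  refine Finset.sum_le_sum fun c _ => ?_
  rw [Finset.sum_comm]
  refine Finset.sum_le_sum fun d _ => ?_
  rw [Finset.sum_add_distrib, ← Finset.sum_mul, ← Finset.sum_mul]
  change aktS K (fun a b => aktK1 K a b c d) n ω * _ + aktS K (fun a b => aktK2 K a b c d) n ω * _ ≤ _
  have aux : ∀ s g : ℝ, |g| ≤ 1 / 2 ^ K → s * g ≤ 1 / 2 ^ K * |s| := by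
    intro s g h
    calc s * g ≤ |s| * |g| := by rw [← abs_mul]; exact le_abs_self _
      _ ≤ |s| * (1 / 2 ^ K) := by gcongr
      _ = _ := mul_comm _ _
  rw [mul_add]
  exact add_le_add (aux _ _ (hG1 c d)) (aux _ _ (hG2 c d))

theorem akt_D_integrable (n : ℕ) : Integrable (aktD n) (aktP n) :=
  akt_integrable _ (akt_D_meas n) (akt_D_bound n)

theorem akt_upper_exp (n : ℕ) (hn : 4 ≤ n) :
    ∫ ω, aktD n ω ∂(aktP n) ≤ 266 * Real.sqrt (n * Real.log n) := by
  set K := Nat.log 4 n with hKd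
  have hK : 1 ≤ K := Nat.log_pos (by norm_num) hn
  have hlt : n < 4 ^ (K + 1) := Nat.lt_pow_succ_log_self (by norm_num) n
  have hge : 4 ^ K ≤ n := Nat.pow_log_le_self 4 (by omega)
  have hN : (0 : ℝ) < 2 ^ K := by positivity
  have hn0 : (0 : ℝ) < n := by exact_mod_cast (by omega : 0 < n)
  have i1 := fun c d => akt_S_int K (fun a b => aktK1 K a b c d) c d n hK hlt (fun a b => akt_K1_bound K a b c d)
  have i2 := fun c d => akt_S_int K (fun a b => aktK2 K a b c d) c d n hK hlt (fun a b => akt_K2_bound K a b c d)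
  have hi : ∀ c d, Integrable (fun ω => (1 / 2 ^ K) * (|aktS K (fun a b => aktK1 K a b c d) n ω| +
      |aktS K (fun a b => aktK2 K a b c d) n ω|)) (aktP n) := fun c d =>
    ((i1 c d).1.fun_add (i2 c d).1).const_mul _
  have main : ∫ ω, aktD n ω ∂(aktP n) ≤ n * (4 / 2 ^ K) + 258 * 2 ^ K * Real.sqrt K := by
    calc _ ≤ ∫ ω, (n * (4 / 2 ^ K) + ∑ c ∈ Finset.range (2 ^ K), ∑ d ∈ Finset.range (2 ^ K),
        (1 / 2 ^ K) * (|aktS K (fun a b => aktK1 K a b c d) n ω| +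
          |aktS K (fun a b => aktK2 K a b c d) n ω|)) ∂(aktP n) := by
          refine integral_mono_ae (akt_D_integrable n) ?_ ?_
          · exact (integrable_const _).fun_add
              (integrable_finsetSum _ fun c _ => integrable_finsetSum _ fun d _ => hi c d)
          · filter_upwards [akt_ae_all n, akt_D_eq n] with ω h1 h2
            rw [h2]; exact akt_upper_pt K n ω h1
      _ = n * (4 / 2 ^ K) + ∑ c ∈ Finset.range (2 ^ K), ∑ d ∈ Finset.range (2 ^ K),
          (1 / 2 ^ K) * (∫ ω, |aktS K (fun a b => aktK1 K a b c d) n ω| ∂(aktP n) +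
          ∫ ω, |aktS K (fun a b => aktK2 K a b c d) n ω| ∂(aktP n)) := by
          rw [integral_add (integrable_const _)
            (integrable_finsetSum _ fun c _ => integrable_finsetSum _ fun d _ => hi c d)]
          congr 1
          · simp
          · rw [integral_finsetSum _ fun c _ => integrable_finsetSum _ fun d _ => hi c d]
            refine Finset.sum_congr rfl fun c _ => ?_
            rw [integral_finsetSum _ fun d _ => hi c d]
            refine Finset.sum_congr rfl fun d _ => ?_
            rw [integral_const_mul, integral_add (i1 c d).1 (i2 c d).1]
      _ ≤ n * (4 / 2 ^ K) + ∑ c ∈ Finset.range (2 ^ K), ∑ d ∈ Finset.range (2 ^ K),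
          (1 / 2 ^ K) * (129 * Real.sqrt K + 129 * Real.sqrt K) := by
          gcongr with c _ d _
          · exact (i1 c d).2
          · exact (i2 c d).2
      _ = _ := by
          simp only [Finset.sum_const, Finset.card_range, nsmul_eq_mul]
          push_cast
          field_simp
          ring
  refine main.trans ?_
  have hsn : Real.sqrt n ≤ 2 * 2 ^ K := by
    rw [Real.sqrt_le_left (by positivity)]
    have : (n : ℝ) ≤ 4 ^ (K + 1) := by exact_mod_cast hlt.le
    refine this.trans (le_of_eq ?_)
    rw [mul_pow, ← pow_mul, mul_comm K 2, pow_mul, pow_succ]; norm_num; ring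
  have hns : (2 : ℝ) ^ K ≤ Real.sqrt n := by
    apply Real.le_sqrt_of_sq_le
    have : (4 : ℝ) ^ K ≤ n := by exact_mod_cast hge
    refine le_trans (le_of_eq ?_) this
    rw [← pow_mul, mul_comm K 2, pow_mul]; norm_num
  have hss : Real.sqrt n * Real.sqrt n = n := Real.mul_self_sqrt hn0.le
  have t1 : (n : ℝ) * (4 / 2 ^ K) ≤ 8 * Real.sqrt n := by
    rw [mul_div_assoc', div_le_iff₀ hN]
    nlinarith [Real.sqrt_nonneg n]
  have hlog : (K : ℝ) ≤ Real.log n := by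
    have h1 : Real.log ((4 : ℝ) ^ K) ≤ Real.log n := Real.log_le_log (by positivity) (by exact_mod_cast hge)
    rw [Real.log_pow] at h1
    have h2 : (1 : ℝ) ≤ Real.log 4 := by
      rw [Real.le_log_iff_exp_le (by norm_num)]
      linarith [Real.exp_one_lt_d9]
    nlinarith [(Nat.cast_nonneg K : (0 : ℝ) ≤ K)]
  have hK' : (1 : ℝ) ≤ K := by exact_mod_cast hK
  rw [Real.sqrt_mul hn0.le]
  have hs1 : Real.sqrt K ≤ Real.sqrt (Real.log n) := Real.sqrt_le_sqrt hlog
  have hs2 : 1 ≤ Real.sqrt (Real.log n) := by rw [Real.one_le_sqrt]; linarith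
  have t2 : (2 : ℝ) ^ K * Real.sqrt K ≤ Real.sqrt n * Real.sqrt (Real.log n) :=
    mul_le_mul hns hs1 (Real.sqrt_nonneg _) (Real.sqrt_nonneg _)
  nlinarith [Real.sqrt_nonneg n]


/-- the bump function -/
noncomputable def aktB (t : ℝ) : ℝ := Real.sin (Real.pi * t) ^ 2
/-- its derivative -/
noncomputable def aktB' (t : ℝ) : ℝ := 2 * Real.pi * Real.sin (Real.pi * t) * Real.cos (Real.pi * t)

theorem akt_pi_sq : Real.pi ^ 2 < 10 := by nlinarith [Real.pi_lt_d2, Real.pi_pos]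

theorem akt_B_nonneg (t : ℝ) : 0 ≤ aktB t := sq_nonneg _
theorem akt_B_le (t : ℝ) : aktB t ≤ 1 := Real.sin_sq_le_one _
theorem akt_B_abs (t : ℝ) : |aktB t| ≤ 1 := by rw [abs_of_nonneg (akt_B_nonneg t)]; exact akt_B_le t

theorem akt_B'_eq (t : ℝ) : aktB' t = Real.pi * Real.sin (2 * Real.pi * t) := by
  unfold aktB'; rw [mul_assoc 2 Real.pi t, Real.sin_two_mul]; ring

theorem akt_B'_abs (t : ℝ) : |aktB' t| ≤ 4 := by
  rw [akt_B'_eq, abs_mul, abs_of_pos Real.pi_pos]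
  have := Real.abs_sin_le_one (2 * Real.pi * t)
  nlinarith [Real.pi_lt_d2, Real.pi_pos, abs_nonneg (Real.sin (2 * Real.pi * t))]

theorem akt_B_deriv (t : ℝ) : HasDerivAt aktB (aktB' t) t := by
  have h1 : HasDerivAt (fun t : ℝ => Real.pi * t) Real.pi t := by
    simpa using (hasDerivAt_id t).const_mul Real.pi
  have h := (h1.sin).pow 2
  unfold aktB aktB'
  refine h.congr_deriv ?_
  simp; ring

theorem akt_B'_deriv (t : ℝ) : HasDerivAt aktB' (2 * Real.pi ^ 2 * Real.cos (2 * Real.pi * t)) t := by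
  have h1 : HasDerivAt (fun t : ℝ => 2 * Real.pi * t) (2 * Real.pi) t := by
    simpa using (hasDerivAt_id t).const_mul (2 * Real.pi)
  have h := (h1.sin).const_mul Real.pi
  have e : aktB' = fun t => Real.pi * Real.sin (2 * Real.pi * t) := funext akt_B'_eq
  rw [e]
  refine h.congr_deriv ?_
  ring

theorem akt_B_lip (t u : ℝ) : |aktB t - aktB u| ≤ 4 * |t - u| := by
  have := Convex.norm_image_sub_le_of_norm_hasDerivWithin_le (f := aktB) (f' := aktB') (C := 4) (s := Set.univ)
    (x := u) (y := t)
    (fun x _ => (akt_B_deriv x).hasDerivWithinAt) (fun x _ => akt_B'_abs x) convex_univ trivial trivial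
  simpa using this

theorem akt_B'_lip (t u : ℝ) : |aktB' t - aktB' u| ≤ 20 * |t - u| := by
  have := Convex.norm_image_sub_le_of_norm_hasDerivWithin_le (f := aktB')
    (f' := fun t => 2 * Real.pi ^ 2 * Real.cos (2 * Real.pi * t)) (C := 20) (s := Set.univ)
    (x := u) (y := t)
    (fun x _ => (akt_B'_deriv x).hasDerivWithinAt) (fun x _ => by
      rw [Real.norm_eq_abs, abs_mul, abs_of_pos (by positivity)]
      have := Real.abs_cos_le_one (2 * Real.pi * x)
      nlinarith [akt_pi_sq, sq_nonneg Real.pi, abs_nonneg (Real.cos (2 * Real.pi * x))]) convex_univ trivial trivial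
  simpa using this

theorem akt_B_int (m : ℤ) (t : ℝ) : aktB (t - m) = aktB t := by
  unfold aktB
  rw [mul_sub, mul_comm Real.pi (m : ℝ), Real.sin_sub_int_mul_pi, mul_pow, ← zpow_natCast, ← zpow_mul,
    mul_comm m, zpow_mul]
  simp

/-- `x ↦ h ⌊x⌋ * aktB x` is differentiable everywhere -/
theorem akt_H_deriv (h : ℤ → ℝ) (t : ℝ) :
    HasDerivAt (fun u => h ⌊u⌋ * aktB u) (h ⌊t⌋ * aktB' t) t := by
  by_cases ht : (⌊t⌋ : ℝ) = t
  · -- integer point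
    have hb : aktB' t = 0 := by
      rw [akt_B'_eq, ← ht]
      have : 2 * Real.pi * (⌊t⌋ : ℝ) = ((2 * ⌊t⌋ : ℤ) : ℝ) * Real.pi := by push_cast; ring
      rw [this, Real.sin_int_mul_pi, mul_zero]
    have hb0 : aktB t = 0 := by
      unfold aktB
      rw [← ht, mul_comm, Real.sin_int_mul_pi]; norm_num
    rw [hb, mul_zero]
    set B := |h ⌊t⌋| + |h (⌊t⌋ - 1)| with hB
    rw [hasDerivAt_iff_isLittleO]
    have hO : (fun u => h ⌊u⌋ * aktB u - h ⌊t⌋ * aktB t - (u - t) • (0:ℝ)) =O[nhds t] fun u => (u - t) ^ 2 := by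
      refine Asymptotics.IsBigO.of_bound (B * 10) ?_
      have hnear : ∀ᶠ u in nhds t, t - 1 < u ∧ u < t + 1 :=
        (eventually_gt_nhds (by linarith)).and (eventually_lt_nhds (by linarith))
      filter_upwards [hnear] with u hu
      rw [hb0]
      simp only [mul_zero, sub_zero, smul_zero]
      have hf : |h ⌊u⌋| ≤ B := by
        rcases le_or_gt t u with h1 | h1
        · have : ⌊u⌋ = ⌊t⌋ := by
            rw [Int.floor_eq_iff]; constructor <;> linarith
          rw [this, hB]; linarith [abs_nonneg (h (⌊t⌋ - 1))]
        · have : ⌊u⌋ = ⌊t⌋ - 1 := by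
            rw [Int.floor_eq_iff]; push_cast; constructor <;> linarith
          rw [this, hB]; linarith [abs_nonneg (h ⌊t⌋)]
      have hs : aktB u ≤ 10 * (u - t) ^ 2 := by
        rw [← akt_B_int ⌊t⌋ u, ht]
        unfold aktB
        have := Real.sin_sq_le_sq (x := Real.pi * (u - t))
        rw [mul_pow] at this
        nlinarith [akt_pi_sq, sq_nonneg (u - t)]
      rw [norm_mul, Real.norm_eq_abs, Real.norm_eq_abs, Real.norm_eq_abs, abs_of_nonneg (akt_B_nonneg u),
        abs_of_nonneg (sq_nonneg (u - t)), mul_assoc]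
      exact mul_le_mul hf hs (akt_B_nonneg u) ((abs_nonneg _).trans hf)
    refine hO.trans_isLittleO ?_
    have h2 := (Asymptotics.isLittleO_pow_pow (𝕜 := ℝ) (m := 1) (n := 2) (by norm_num))
    have h3 : Filter.Tendsto (fun u => u - t) (nhds t) (nhds 0) := by
      have : Filter.Tendsto (fun u => u - t) (nhds t) (nhds (t - t)) := by
        exact (continuous_id.sub continuous_const).tendsto t
      simpa using this
    simpa [Function.comp_def] using h2.comp_tendsto h3
  · have hlt : (⌊t⌋ : ℝ) < t := lt_of_le_of_ne (Int.floor_le t) ht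
    have hlt2 := Int.lt_floor_add_one t
    have : (fun u => h ⌊u⌋ * aktB u) =ᶠ[nhds t] fun u => h ⌊t⌋ * aktB u := by
      filter_upwards [(eventually_gt_nhds hlt).and (eventually_lt_nhds hlt2)] with u hu
      rw [(Int.floor_eq_iff (a := u) (z := ⌊t⌋)).2 ⟨hu.1.le, hu.2⟩]
    exact ((akt_B_deriv t).const_mul _).congr_of_eventuallyEq this

/-- partial gradient -/
noncomputable def aktG (s : ℕ → ℤ → ℤ → ℝ) (δ : ℝ) (k : ℕ) (x y : ℝ) : ℝ :=
  δ * ∑ j ∈ Finset.range k, s j ⌊2 ^ j * x⌋ ⌊2 ^ j * y⌋ * (aktB' (2 ^ j * x) * aktB (2 ^ j * y))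

/-- the potential -/
noncomputable def aktF (s : ℕ → ℤ → ℤ → ℝ) (δ : ℝ) (K : ℕ) (x y : ℝ) : ℝ :=
  δ * ∑ j ∈ Finset.range K, (2 ^ j)⁻¹ * (s j ⌊2 ^ j * x⌋ ⌊2 ^ j * y⌋ * (aktB (2 ^ j * x) * aktB (2 ^ j * y)))

/-- transposed coefficients -/
def aktTr (s : ℕ → ℤ → ℤ → ℝ) : ℕ → ℤ → ℤ → ℝ := fun j a b => s j b a

theorem akt_F_tr (s δ K x y) : aktF s δ K x y = aktF (aktTr s) δ K y x := by
  unfold aktF aktTr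
  simp only [mul_comm (aktB _) (aktB _)]

theorem akt_F_deriv (s δ K x y) : HasDerivAt (fun x => aktF s δ K x y) (aktG s δ K x y) x := by
  unfold aktF aktG
  refine HasDerivAt.const_mul δ ?_
  refine HasDerivAt.fun_sum fun j _ => ?_
  have h1 : HasDerivAt (fun x : ℝ => 2 ^ j * x) (2 ^ j) x := by
    simpa using (hasDerivAt_id x).const_mul ((2:ℝ) ^ j)
  have h2 := (akt_H_deriv (fun a => s j a ⌊2 ^ j * y⌋) (2 ^ j * x)).comp x h1
  have h3 := (h2.mul_const (aktB (2 ^ j * y))).const_mul (((2:ℝ) ^ j)⁻¹)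
  refine (h3.congr_of_eventuallyEq (Filter.Eventually.of_forall fun u => ?_)).congr_deriv ?_
  · simp only [Function.comp_def]; ring
  · field_simp

theorem akt_F_lip (s δ K L) (h1 : ∀ x y, |aktG s δ K x y| ≤ L) (h2 : ∀ x y, |aktG (aktTr s) δ K x y| ≤ L)
    (x y x' y' : ℝ) : |aktF s δ K x y - aktF s δ K x' y'| ≤ L * (|x - x'| + |y - y'|) := by
  have one : ∀ s, (∀ x y, |aktG s δ K x y| ≤ L) → ∀ x x' y, |aktF s δ K x y - aktF s δ K x' y| ≤ L * |x - x'| := by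
    intro s hs x x' y
    have := Convex.norm_image_sub_le_of_norm_hasDerivWithin_le (f := fun x => aktF s δ K x y)
      (f' := fun x => aktG s δ K x y) (C := L) (s := Set.univ) (x := x') (y := x)
      (fun x _ => (akt_F_deriv s δ K x y).hasDerivWithinAt) (fun x _ => hs x y) convex_univ trivial trivial
    simpa using this
  have a := one s h1 x x' y
  have b := one (aktTr s) h2 y y' x'
  rw [← akt_F_tr, ← akt_F_tr] at b
  have := abs_sub_le (aktF s δ K x y) (aktF s δ K x' y) (aktF s δ K x' y')
  linarith


theorem akt_floor_down (j k : ℕ) (hjk : j ≤ k) (x x' : ℝ) (h : ⌊(2:ℝ) ^ k * x⌋ = ⌊(2:ℝ) ^ k * x'⌋) :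
    ⌊(2:ℝ) ^ j * x⌋ = ⌊(2:ℝ) ^ j * x'⌋ := by
  have aux : ∀ x : ℝ, ⌊(2:ℝ) ^ j * x⌋ = ⌊(2:ℝ) ^ k * x⌋ / ((2 ^ (k - j) : ℕ) : ℤ) := by
    intro x
    rw [← Int.floor_div_natCast]
    congr 1
    have : (2:ℝ) ^ k = 2 ^ j * 2 ^ (k - j) := by rw [← pow_add]; congr 1; omega
    rw [this]; push_cast; field_simp
  rw [aux x, aux x', h]

theorem akt_floor_close (x x' : ℝ) (k : ℕ) (h : ⌊(2:ℝ) ^ k * x⌋ = ⌊(2:ℝ) ^ k * x'⌋) :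
    2 ^ k * |x - x'| ≤ 1 := by
  have h1 := Int.abs_sub_lt_one_of_floor_eq_floor h
  rw [← mul_sub, abs_mul, abs_of_pos (by positivity)] at h1
  exact h1.le

theorem akt_geom2 (k : ℕ) : ∑ j ∈ Finset.range k, (2:ℝ) ^ j ≤ 2 ^ k := by
  rw [geom_sum_eq (by norm_num)]; norm_num

theorem akt_osc (s : ℕ → ℤ → ℤ → ℝ) (hs : ∀ j a b, |s j a b| ≤ 1) (δ : ℝ) (hδ : 0 ≤ δ) (k : ℕ) (x y x' y' : ℝ)
    (hx : ⌊(2:ℝ) ^ k * x⌋ = ⌊(2:ℝ) ^ k * x'⌋) (hy : ⌊(2:ℝ) ^ k * y⌋ = ⌊(2:ℝ) ^ k * y'⌋) :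
    |aktG s δ k x y - aktG s δ k x' y'| ≤ 40 * δ := by
  unfold aktG
  rw [← mul_sub, abs_mul, abs_of_nonneg hδ, mul_comm 40 δ]
  refine mul_le_mul_of_nonneg_left ?_ hδ
  rw [← Finset.sum_sub_distrib]
  have cx := akt_floor_close _ _ _ hx
  have cy := akt_floor_close _ _ _ hy
  set Δ := |x - x'| + |y - y'| with hΔ
  have hΔ0 : 0 ≤ Δ := by positivity
  refine (Finset.abs_sum_le_sum_abs _ _).trans ?_
  have term : ∀ j ∈ Finset.range k, |s j ⌊2 ^ j * x⌋ ⌊2 ^ j * y⌋ * (aktB' (2 ^ j * x) * aktB (2 ^ j * y)) -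
      s j ⌊2 ^ j * x'⌋ ⌊2 ^ j * y'⌋ * (aktB' (2 ^ j * x') * aktB (2 ^ j * y'))| ≤ (20 * Δ) * 2 ^ j := by
    intro j hj
    have hj' : j ≤ k := (Finset.mem_range.1 hj).le
    rw [akt_floor_down j k hj' x x' hx, akt_floor_down j k hj' y y' hy, ← mul_sub, abs_mul]
    have b1 := akt_B'_lip (2 ^ j * x) (2 ^ j * x')
    have b2 := akt_B_lip (2 ^ j * y) (2 ^ j * y')
    have p : (0:ℝ) < 2 ^ j := by positivity
    rw [← mul_sub, abs_mul, abs_of_pos p] at b1 b2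
    have e : aktB' (2 ^ j * x) * aktB (2 ^ j * y) - aktB' (2 ^ j * x') * aktB (2 ^ j * y') =
      (aktB' (2 ^ j * x) - aktB' (2 ^ j * x')) * aktB (2 ^ j * y) +
        aktB' (2 ^ j * x') * (aktB (2 ^ j * y) - aktB (2 ^ j * y')) := by ring
    have t1 : |(aktB' (2 ^ j * x) - aktB' (2 ^ j * x')) * aktB (2 ^ j * y)| ≤ (20 * (2 ^ j * |x - x'|)) * 1 := by
      rw [abs_mul]; exact mul_le_mul b1 (akt_B_abs _) (abs_nonneg _) (by positivity)
    have t2 : |aktB' (2 ^ j * x') * (aktB (2 ^ j * y) - aktB (2 ^ j * y'))| ≤ 4 * (4 * (2 ^ j * |y - y'|)) := by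
      rw [abs_mul]; exact mul_le_mul (akt_B'_abs _) b2 (abs_nonneg _) (by norm_num)
    have t3 : |aktB' (2 ^ j * x) * aktB (2 ^ j * y) - aktB' (2 ^ j * x') * aktB (2 ^ j * y')| ≤ (20 * Δ) * 2 ^ j := by
      rw [e]
      refine (abs_add_le _ _).trans ?_
      have : 0 ≤ 2 ^ j * |y - y'| := by positivity
      rw [hΔ]; nlinarith
    calc _ ≤ 1 * ((20 * Δ) * 2 ^ j) := mul_le_mul (hs _ _ _) t3 (abs_nonneg _) (by norm_num)
      _ = _ := one_mul _
  refine (Finset.sum_le_sum term).trans ?_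
  rw [← Finset.mul_sum]
  have := akt_geom2 k
  have h3 : 2 ^ k * Δ ≤ 2 := by rw [hΔ]; linarith
  nlinarith

theorem akt_G_succ (s δ k x y) : aktG s δ (k + 1) x y = aktG s δ k x y +
    δ * (s k ⌊2 ^ k * x⌋ ⌊2 ^ k * y⌋ * (aktB' (2 ^ k * x) * aktB (2 ^ k * y))) := by
  unfold aktG; rw [Finset.sum_range_succ, mul_add]

theorem akt_floor_corner (k : ℕ) (x : ℝ) : ⌊(2:ℝ) ^ k * ((⌊(2:ℝ) ^ k * x⌋ : ℝ) / 2 ^ k)⌋ = ⌊(2:ℝ) ^ k * x⌋ := by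
  rw [mul_div_cancel₀ _ (by positivity)]; simp

theorem akt_T_abs (s : ℕ → ℤ → ℤ → ℝ) (hs : ∀ j a b, |s j a b| ≤ 1) (j a b) (t u : ℝ) :
    |s j a b * (aktB' t * aktB u)| ≤ 4 := by
  rw [abs_mul, abs_mul]
  calc _ ≤ 1 * (4 * 1) := mul_le_mul (hs _ _ _) (mul_le_mul (akt_B'_abs _) (akt_B_abs _) (abs_nonneg _) (by norm_num))
        (by positivity) (by norm_num)
    _ = _ := by norm_num

theorem akt_G_bound (s : ℕ → ℤ → ℤ → ℝ) (hs : ∀ j a b, |s j a b| ≤ 1) (δ M : ℝ) (hδ : 0 ≤ δ) (hM : 0 ≤ M)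
    (hr : ∀ k (a b : ℤ), s k a b ≠ 0 → |aktG s δ k (a / 2 ^ k) (b / 2 ^ k)| ≤ M) (k : ℕ) (x y : ℝ) :
    |aktG s δ k x y| ≤ M + 44 * δ := by
  induction k with
  | zero => simp [aktG]; positivity
  | succ k ih =>
    rw [akt_G_succ]
    by_cases h : s k ⌊2 ^ k * x⌋ ⌊2 ^ k * y⌋ = 0
    · rw [h]; simpa using ih
    · have h1 := hr _ _ _ h
      have h2 := akt_osc s hs δ hδ k x y _ _ (akt_floor_corner k x).symm (akt_floor_corner k y).symm
      have h3 := akt_T_abs s hs k ⌊2 ^ k * x⌋ ⌊2 ^ k * y⌋ (2 ^ k * x) (2 ^ k * y)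
      refine (abs_add_le _ _).trans ?_
      rw [abs_mul δ, abs_of_nonneg hδ]
      have h4 := abs_sub_abs_le_abs_sub (aktG s δ k x y) (aktG s δ k (⌊2 ^ k * x⌋ / 2 ^ k) (⌊2 ^ k * y⌋ / 2 ^ k))
      nlinarith

theorem akt_sum_block (f : ℕ → ℝ) (n m : ℕ) :
    ∑ i ∈ Finset.range (n * m), f i = ∑ a ∈ Finset.range n, ∑ r ∈ Finset.range m, f (a * m + r) := by
  induction n with
  | zero => simp
  | succ n ih => rw [Finset.sum_range_succ, ← ih, add_mul, one_mul, Finset.sum_range_add]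

/-- sample points -/
noncomputable def aktX (K i : ℕ) : ℝ := ((i : ℝ) + 1 / 2) / 2 ^ K

theorem akt_X_scale (K k a r : ℕ) (hk : k ≤ K) :
    (2:ℝ) ^ k * aktX K (a * 2 ^ (K - k) + r) = a + ((r:ℝ) + 1 / 2) / 2 ^ (K - k) := by
  have : (2:ℝ) ^ K = 2 ^ k * 2 ^ (K - k) := by rw [← pow_add]; congr 1; omega
  unfold aktX
  rw [this]; push_cast; field_simp; ring

theorem akt_X_floor (K k a r : ℕ) (hk : k ≤ K) (hr : r < 2 ^ (K - k)) :
    ⌊(2:ℝ) ^ k * aktX K (a * 2 ^ (K - k) + r)⌋ = a := by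
  rw [akt_X_scale _ _ _ _ hk, Int.floor_eq_iff]
  have p : (0:ℝ) < 2 ^ (K - k) := by positivity
  have hr' : (r:ℝ) + 1 ≤ 2 ^ (K - k) := by exact_mod_cast hr
  constructor
  · have : 0 ≤ ((r:ℝ) + 1 / 2) / 2 ^ (K - k) := by positivity
    push_cast; linarith
  · have : ((r:ℝ) + 1 / 2) / 2 ^ (K - k) < 1 := by rw [div_lt_one p]; linarith
    push_cast; linarith

theorem akt_X_refl (K k a r : ℕ) (hk : k ≤ K) (hr : r < 2 ^ (K - k)) :
    aktB' ((2:ℝ) ^ k * aktX K (a * 2 ^ (K - k) + (2 ^ (K - k) - 1 - r))) =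
      - aktB' ((2:ℝ) ^ k * aktX K (a * 2 ^ (K - k) + r)) := by
  rw [akt_X_scale _ _ _ _ hk, akt_X_scale _ _ _ _ hk, akt_B'_eq, akt_B'_eq, ← mul_neg, ← Real.sin_neg]
  congr 1
  have p : (0:ℝ) < 2 ^ (K - k) := by positivity
  have e : (((2 ^ (K - k) - 1 - r : ℕ)) : ℝ) = 2 ^ (K - k) - 1 - r := by
    rw [Nat.cast_sub (by omega), Nat.cast_sub (by omega)]; push_cast; ring
  rw [e, ← Real.sin_add_int_mul_two_pi (-_) (2 * a + 1)]
  congr 1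
  push_cast; field_simp; ring

theorem akt_cross_block (s : ℕ → ℤ → ℤ → ℝ) (hs : ∀ j a b, |s j a b| ≤ 1) (δ : ℝ) (hδ : 0 ≤ δ) (K k a : ℕ)
    (hk : k ≤ K) (y : ℝ) :
    |∑ r ∈ Finset.range (2 ^ (K - k)), aktG s δ k (aktX K (a * 2 ^ (K - k) + r)) y *
      (s k ⌊2 ^ k * aktX K (a * 2 ^ (K - k) + r)⌋ ⌊2 ^ k * y⌋ * (aktB' (2 ^ k * aktX K (a * 2 ^ (K - k) + r)) * aktB (2 ^ k * y)))|
      ≤ 2 ^ (K - k) * (80 * δ) := by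
  set m := 2 ^ (K - k) with hm
  set g : ℕ → ℝ := fun r => aktG s δ k (aktX K (a * m + r)) y with hg
  set T : ℕ → ℝ := fun r => s k ⌊2 ^ k * aktX K (a * m + r)⌋ ⌊2 ^ k * y⌋ *
    (aktB' (2 ^ k * aktX K (a * m + r)) * aktB (2 ^ k * y)) with hT
  have hT4 : ∀ r, |T r| ≤ 4 := fun r => akt_T_abs s hs _ _ _ _ _
  have hTr : ∀ r ∈ Finset.range m, T (m - 1 - r) = - T r := by
    intro r hr
    have hr' := Finset.mem_range.1 hr
    simp only [hT]
    rw [akt_X_refl K k a r hk hr', akt_X_floor K k a r hk hr', akt_X_floor K k a (m - 1 - r) hk (by omega)]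
    ring
  have e1 : ∑ r ∈ Finset.range m, g r * T r = - ∑ r ∈ Finset.range m, g (m - 1 - r) * T r := by
    rw [← Finset.sum_range_reflect, ← Finset.sum_neg_distrib]
    refine Finset.sum_congr rfl fun r hr => ?_
    rw [hTr r hr]; ring
  have e2 : ∑ r ∈ Finset.range m, g r * T r = ∑ r ∈ Finset.range m, (g r - g (m - 1 - r)) * T r / 2 := by
    rw [← Finset.sum_div]
    simp only [sub_mul]
    rw [Finset.sum_sub_distrib]
    linarith
  change |∑ r ∈ Finset.range m, g r * T r| ≤ _
  rw [e2]
  refine (Finset.abs_sum_le_sum_abs _ _).trans ?_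
  have : ∀ r ∈ Finset.range m, |(g r - g (m - 1 - r)) * T r / 2| ≤ 80 * δ := by
    intro r hr
    have hr' := Finset.mem_range.1 hr
    rw [abs_div, abs_mul, abs_two]
    have h1 : |g r - g (m - 1 - r)| ≤ 40 * δ := by
      refine akt_osc s hs δ hδ k _ _ _ _ ?_ rfl
      rw [akt_X_floor K k a r hk hr', akt_X_floor K k a (m - 1 - r) hk (by omega)]
    have h2 := mul_le_mul h1 (hT4 r) (abs_nonneg _) (by positivity)
    linarith
  refine (Finset.sum_le_sum this).trans (le_of_eq ?_)
  simp [hm]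

theorem akt_two_pow (K k : ℕ) (hk : k ≤ K) : 2 ^ K = 2 ^ k * 2 ^ (K - k) := by
  rw [← pow_add]; congr 1; omega

theorem akt_cross (s : ℕ → ℤ → ℤ → ℝ) (hs : ∀ j a b, |s j a b| ≤ 1) (δ : ℝ) (hδ : 0 ≤ δ) (K k : ℕ)
    (hk : k ≤ K) (y : ℝ) :
    ∑ i ∈ Finset.range (2 ^ K), aktG s δ k (aktX K i) y *
      (s k ⌊2 ^ k * aktX K i⌋ ⌊2 ^ k * y⌋ * (aktB' (2 ^ k * aktX K i) * aktB (2 ^ k * y)))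
      ≤ 2 ^ K * (80 * δ) := by
  have h := akt_two_pow K k hk
  have h' : (2:ℝ) ^ K = 2 ^ k * 2 ^ (K - k) := by exact_mod_cast h
  rw [h, akt_sum_block, h']
  refine (Finset.sum_le_sum fun a _ => (le_abs_self _).trans (akt_cross_block s hs δ hδ K k a hk y)).trans ?_
  simp [mul_assoc]

theorem akt_L2 (s : ℕ → ℤ → ℤ → ℝ) (hs : ∀ j a b, |s j a b| ≤ 1) (δ : ℝ) (hδ : 0 ≤ δ) (K k : ℕ)
    (hk : k ≤ K) :
    ∑ i ∈ Finset.range (2 ^ K), ∑ j ∈ Finset.range (2 ^ K), aktG s δ k (aktX K i) (aktX K j) ^ 2 ≤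
      176 * k * δ ^ 2 * 4 ^ K := by
  induction k with
  | zero => simp [aktG]
  | succ k ih =>
    have ih := ih (by omega)
    rw [Finset.sum_comm] at ih ⊢
    have step : ∀ j ∈ Finset.range (2 ^ K), ∑ i ∈ Finset.range (2 ^ K), aktG s δ (k + 1) (aktX K i) (aktX K j) ^ 2 ≤
        ∑ i ∈ Finset.range (2 ^ K), aktG s δ k (aktX K i) (aktX K j) ^ 2 + 176 * δ ^ 2 * 2 ^ K := by
      intro j _
      have c := akt_cross s hs δ hδ K k (by omega) (aktX K j)
      have p : ∀ i ∈ Finset.range (2 ^ K), aktG s δ (k + 1) (aktX K i) (aktX K j) ^ 2 ≤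
          aktG s δ k (aktX K i) (aktX K j) ^ 2 + 2 * δ * (aktG s δ k (aktX K i) (aktX K j) *
      (s k ⌊2 ^ k * aktX K i⌋ ⌊2 ^ k * aktX K j⌋ * (aktB' (2 ^ k * aktX K i) * aktB (2 ^ k * aktX K j)))) +
          16 * δ ^ 2 := by
        intro i _
        rw [akt_G_succ]
        have := akt_T_abs s hs k ⌊2 ^ k * aktX K i⌋ ⌊2 ^ k * aktX K j⌋ (2 ^ k * aktX K i) (2 ^ k * aktX K j)
        set T := s k ⌊2 ^ k * aktX K i⌋ ⌊2 ^ k * aktX K j⌋ * (aktB' (2 ^ k * aktX K i) * aktB (2 ^ k * aktX K j))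
        have h2 : T ^ 2 ≤ 16 := by rw [← sq_abs]; nlinarith [abs_nonneg T]
        nlinarith [sq_nonneg δ]
      refine (Finset.sum_le_sum p).trans ?_
      rw [Finset.sum_add_distrib, Finset.sum_add_distrib, ← Finset.mul_sum]
      simp only [Finset.sum_const, Finset.card_range, nsmul_eq_mul]
      push_cast
      nlinarith
    refine (Finset.sum_le_sum step).trans ?_
    rw [Finset.sum_add_distrib]
    simp only [Finset.sum_const, Finset.card_range, nsmul_eq_mul]
    push_cast
    have e : (4:ℝ) ^ K = 2 ^ K * 2 ^ K := by rw [← mul_pow]; norm_num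
    rw [e] at ih ⊢
    linarith

theorem akt_count (s : ℕ → ℤ → ℤ → ℝ) (hs : ∀ j a b, |s j a b| ≤ 1) (δ M : ℝ) (hδ : 0 ≤ δ) (hδ1 : δ ≤ 1)
    (hM : 80 ≤ M) (K k : ℕ) (hk : k ≤ K) (hK : δ ^ 2 * K ≤ 1) :
    ∑ a ∈ Finset.range (2 ^ k), ∑ b ∈ Finset.range (2 ^ k),
      (if M < |aktG s δ k ((a:ℝ) / 2 ^ k) ((b:ℝ) / 2 ^ k)| then (1:ℝ) else 0) ≤ 704 / M ^ 2 * 4 ^ k := by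
  have h2 := akt_two_pow K k hk
  have h := akt_L2 s hs δ hδ K k hk
  have hk' : (k:ℝ) ≤ K := by exact_mod_cast hk
  have hb : 176 * (k:ℝ) * δ ^ 2 * 4 ^ K ≤ 176 * 4 ^ K := by
    have : (k:ℝ) * δ ^ 2 ≤ 1 := by nlinarith [sq_nonneg δ]
    have p : (0:ℝ) < 4 ^ K := by positivity
    nlinarith
  have e : ∑ i ∈ Finset.range (2 ^ K), ∑ j ∈ Finset.range (2 ^ K), aktG s δ k (aktX K i) (aktX K j) ^ 2 =
      ∑ a ∈ Finset.range (2 ^ k), ∑ b ∈ Finset.range (2 ^ k),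
        ∑ r ∈ Finset.range (2 ^ (K - k)), ∑ t ∈ Finset.range (2 ^ (K - k)),
          aktG s δ k (aktX K (a * 2 ^ (K - k) + r)) (aktX K (b * 2 ^ (K - k) + t)) ^ 2 := by
    rw [h2, akt_sum_block]
    refine Finset.sum_congr rfl fun a _ => ?_
    rw [Finset.sum_comm (s := Finset.range (2 ^ k))]
    refine Finset.sum_congr rfl fun r _ => ?_
    rw [akt_sum_block]
  rw [e] at h
  have low : ∀ a b : ℕ, (M ^ 2 / 4 * 4 ^ (K - k)) *
      (if M < |aktG s δ k ((a:ℝ) / 2 ^ k) ((b:ℝ) / 2 ^ k)| then (1:ℝ) else 0) ≤ 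
        ∑ r ∈ Finset.range (2 ^ (K - k)), ∑ t ∈ Finset.range (2 ^ (K - k)),
          aktG s δ k (aktX K (a * 2 ^ (K - k) + r)) (aktX K (b * 2 ^ (K - k) + t)) ^ 2 := by
    intro a b
    split_ifs with hh
    · have : ∀ r ∈ Finset.range (2 ^ (K - k)), ∀ t ∈ Finset.range (2 ^ (K - k)), M ^ 2 / 4 ≤
          aktG s δ k (aktX K (a * 2 ^ (K - k) + r)) (aktX K (b * 2 ^ (K - k) + t)) ^ 2 := by
        intro r hr t ht
        have fl : ∀ a : ℕ, ⌊(2:ℝ) ^ k * ((a:ℝ) / 2 ^ k)⌋ = a := fun a => by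
          rw [mul_div_cancel₀ _ (by positivity)]; simp
        have o := akt_osc s hs δ hδ k ((a:ℝ) / 2 ^ k) ((b:ℝ) / 2 ^ k) (aktX K (a * 2 ^ (K - k) + r))
          (aktX K (b * 2 ^ (K - k) + t)) (by rw [fl, akt_X_floor K k a r hk (Finset.mem_range.1 hr)])
          (by rw [fl, akt_X_floor K k b t hk (Finset.mem_range.1 ht)])
        have o2 := abs_sub_abs_le_abs_sub (aktG s δ k ((a:ℝ) / 2 ^ k) ((b:ℝ) / 2 ^ k))
          (aktG s δ k (aktX K (a * 2 ^ (K - k) + r)) (aktX K (b * 2 ^ (K - k) + t)))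
        rw [← sq_abs (aktG s δ k (aktX K (a * 2 ^ (K - k) + r)) (aktX K (b * 2 ^ (K - k) + t)))]
        have : M / 2 ≤ |aktG s δ k (aktX K (a * 2 ^ (K - k) + r)) (aktX K (b * 2 ^ (K - k) + t))| := by linarith
        nlinarith
      refine le_trans (le_of_eq ?_) (Finset.sum_le_sum fun r hr => Finset.sum_le_sum fun t ht => this r hr t ht)
      simp only [Finset.sum_const, Finset.card_range, nsmul_eq_mul]
      have e4 : (4:ℝ) ^ (K - k) = 2 ^ (K - k) * 2 ^ (K - k) := by rw [← mul_pow]; norm_num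
      rw [e4]; push_cast; ring
    · rw [mul_zero]; positivity
  have h3 := (Finset.sum_le_sum fun a _ => Finset.sum_le_sum fun b _ => low a b).trans (h.trans hb)
  simp only [← Finset.mul_sum] at h3
  have e4 : (4:ℝ) ^ K = 4 ^ k * 4 ^ (K - k) := by rw [← pow_add]; congr 1; omega
  rw [e4] at h3
  have p1 : (0:ℝ) < 4 ^ (K - k) := by positivity
  rw [div_mul_eq_mul_div, le_div_iff₀ (by positivity)]
  have h4 : (4:ℝ) ^ (K - k) * (M ^ 2 / 4 * ∑ a ∈ Finset.range (2 ^ k), ∑ b ∈ Finset.range (2 ^ k),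
      (if M < |aktG s δ k ((a:ℝ) / 2 ^ k) ((b:ℝ) / 2 ^ k)| then (1:ℝ) else 0)) ≤ 4 ^ (K - k) * (176 * 4 ^ k) := by
    linarith
  have h5 := le_of_mul_le_mul_left h4 p1
  linarith

/-- history of the coefficients -/
noncomputable def aktHist (σ : ℕ → ℤ → ℤ → ℝ) (δ M : ℝ) : ℕ → ℕ → ℤ → ℤ → ℝ
  | 0 => fun _ _ _ => 0
  | k + 1 => Function.update (aktHist σ δ M k) k (fun a b =>
      if |aktG (aktHist σ δ M k) δ k (a / 2 ^ k) (b / 2 ^ k)| ≤ M ∧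
        |aktG (aktTr (aktHist σ δ M k)) δ k (b / 2 ^ k) (a / 2 ^ k)| ≤ M then σ k a b else 0)

theorem akt_Hist_eq (σ : ℕ → ℤ → ℤ → ℝ) (δ M : ℝ) (k j : ℕ) (h : j < k) :
    aktHist σ δ M k j = aktHist σ δ M (j + 1) j := by
  induction k with
  | zero => omega
  | succ k ih =>
    rcases Nat.lt_succ_iff_lt_or_eq.1 h with h1 | h1
    · rw [← ih h1, aktHist, Function.update_of_ne (by omega)]
    · rw [h1]

theorem akt_exists (σ : ℕ → ℤ → ℤ → ℝ) (δ M : ℝ) : ∃ s : ℕ → ℤ → ℤ → ℝ, ∀ k (a b : ℤ),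
    s k a b = if |aktG s δ k (a / 2 ^ k) (b / 2 ^ k)| ≤ M ∧
        |aktG (aktTr s) δ k (b / 2 ^ k) (a / 2 ^ k)| ≤ M then σ k a b else 0 := by
  refine ⟨fun k => aktHist σ δ M (k + 1) k, fun k a b => ?_⟩
  have e1 : ∀ x y, aktG (fun k => aktHist σ δ M (k + 1) k) δ k x y = aktG (aktHist σ δ M k) δ k x y := by
    intro x y
    unfold aktG
    congr 1
    refine Finset.sum_congr rfl fun j hj => ?_
    rw [akt_Hist_eq σ δ M k j (Finset.mem_range.1 hj)]
  have e2 : ∀ x y, aktG (aktTr fun k => aktHist σ δ M (k + 1) k) δ k x y =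
      aktG (aktTr (aktHist σ δ M k)) δ k x y := by
    intro x y
    unfold aktG aktTr
    congr 1
    refine Finset.sum_congr rfl fun j hj => ?_
    rw [akt_Hist_eq σ δ M k j (Finset.mem_range.1 hj)]
  rw [e1, e2]
  simp [aktHist]

theorem akt_E (K : ℕ) (δ M : ℝ) (hδ : 0 ≤ δ) (hδ1 : δ ≤ 1) (hK : δ ^ 2 * K ≤ 1)
    (hM : 80 ≤ M) (σ : ℕ → ℤ → ℤ → ℝ) (hσ : ∀ k a b, |σ k a b| ≤ 1) :
    ∃ s w : ℕ → ℤ → ℤ → ℝ,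
      (∀ k a b, (s k a b = σ k a b ∧ w k a b = 0) ∨ (s k a b = 0 ∧ w k a b = 1)) ∧
      (∀ k ≤ K, ∑ a ∈ Finset.range (2 ^ k), ∑ b ∈ Finset.range (2 ^ k), w k (a:ℤ) (b:ℤ) ≤ 1408 / M ^ 2 * 4 ^ k) ∧
      (∀ x y x' y', |aktF s δ K x y - aktF s δ K x' y'| ≤ (M + 44) * (|x - x'| + |y - y'|)) := by
  obtain ⟨s, hs⟩ := akt_exists σ δ M
  have hs1 : ∀ j a b, |s j a b| ≤ 1 := by
    intro j a b; rw [hs]; split_ifs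
    · exact hσ _ _ _
    · simp
  have hs2 : ∀ j a b, |aktTr s j a b| ≤ 1 := fun j a b => hs1 j b a
  refine ⟨s, fun k a b => if |aktG s δ k (a / 2 ^ k) (b / 2 ^ k)| ≤ M ∧
        |aktG (aktTr s) δ k (b / 2 ^ k) (a / 2 ^ k)| ≤ M then 0 else 1, ?_, ?_, ?_⟩
  · intro k a b
    by_cases h : |aktG s δ k (a / 2 ^ k) (b / 2 ^ k)| ≤ M ∧ |aktG (aktTr s) δ k (b / 2 ^ k) (a / 2 ^ k)| ≤ M
    · left; rw [hs, if_pos h]; simp [h]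
    · right; rw [hs, if_neg h]; simp [h]
  · intro k hk
    have c1 := akt_count s hs1 δ M hδ hδ1 hM K k hk hK
    have c2 := akt_count (aktTr s) hs2 δ M hδ hδ1 hM K k hk hK
    rw [Finset.sum_comm] at c2
    have e : 1408 / M ^ 2 * 4 ^ k = 704 / M ^ 2 * 4 ^ k + 704 / M ^ 2 * 4 ^ k := by ring
    rw [e]
    refine le_trans ?_ (add_le_add c1 c2)
    rw [← Finset.sum_add_distrib]
    refine Finset.sum_le_sum fun a _ => ?_
    rw [← Finset.sum_add_distrib]
    refine Finset.sum_le_sum fun b _ => ?_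
    push_cast
    simp only [← not_le]
    by_cases h1 : |aktG s δ k ((a:ℝ) / 2 ^ k) ((b:ℝ) / 2 ^ k)| ≤ M <;>
    by_cases h2 : |aktG (aktTr s) δ k ((b:ℝ) / 2 ^ k) ((a:ℝ) / 2 ^ k)| ≤ M <;> simp [h1, h2]
  · have b1 : ∀ x y, |aktG s δ K x y| ≤ M + 44 := fun x y => by
      refine (akt_G_bound s hs1 δ M hδ (by linarith) (fun k a b h => ?_) K x y).trans (by linarith)
      by_contra h2
      apply h
      rw [hs, if_neg]
      exact fun h3 => h2 h3.1
    have b2 : ∀ x y, |aktG (aktTr s) δ K x y| ≤ M + 44 := fun x y => by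
      refine (akt_G_bound (aktTr s) hs2 δ M hδ (by linarith) (fun k a b h => ?_) K x y).trans (by linarith)
      by_contra h2
      apply h
      unfold aktTr at h2 ⊢
      rw [hs, if_neg]
      exact fun h3 => h2 h3.2
    exact akt_F_lip s δ K _ b1 b2


/-- local bump of level `k` -/
noncomputable def aktPhi (k a b : ℕ) (p : EuclideanSpace ℝ (Fin 2)) : ℝ :=
  if ⌊(2:ℝ) ^ k * p 0⌋ = (a:ℤ) ∧ ⌊(2:ℝ) ^ k * p 1⌋ = (b:ℤ) then aktB (2 ^ k * p 0) * aktB (2 ^ k * p 1) else 0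

theorem akt_Phi_nonneg (k a b p) : 0 ≤ aktPhi k a b p := by
  unfold aktPhi; split_ifs
  · exact mul_nonneg (akt_B_nonneg _) (akt_B_nonneg _)
  · exact le_rfl

theorem akt_Phi_le (k a b p) : aktPhi k a b p ≤ 1 := by
  unfold aktPhi; split_ifs
  · exact mul_le_one₀ (akt_B_le _) (akt_B_nonneg _) (akt_B_le _)
  · norm_num

theorem akt_Phi_abs (k a b p) : |aktPhi k a b p| ≤ 1 := by
  rw [abs_of_nonneg (akt_Phi_nonneg _ _ _ _)]; exact akt_Phi_le _ _ _ _

theorem akt_cell (k a : ℕ) (t : ℝ) : ⌊(2:ℝ) ^ k * t⌋ = (a:ℤ) ↔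
    t ∈ Set.Ico ((a:ℝ) / 2 ^ k) (((a:ℝ) + 1) / 2 ^ k) := by
  have p : (0:ℝ) < 2 ^ k := by positivity
  rw [Int.floor_eq_iff, Set.mem_Ico, div_le_iff₀ p, lt_div_iff₀ p]
  push_cast
  rw [mul_comm]

/-- the cell -/
def aktQ (k a b : ℕ) : Set (EuclideanSpace ℝ (Fin 2)) :=
  aktBox ((a:ℝ) / 2 ^ k) (((a:ℝ) + 1) / 2 ^ k) ((b:ℝ) / 2 ^ k) (((b:ℝ) + 1) / 2 ^ k)

theorem akt_B_cont : Continuous aktB := by unfold aktB; fun_prop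

theorem akt_Phi_eq (k a b p) : aktPhi k a b p =
    (aktQ k a b).indicator (fun p => aktB (2 ^ k * p 0) * aktB (2 ^ k * p 1)) p := by
  unfold aktPhi Set.indicator
  congr 1
  rw [akt_cell, akt_cell]
  rfl

theorem akt_Phi_meas (k a b) : Measurable (aktPhi k a b) := by
  have : aktPhi k a b = (aktQ k a b).indicator (fun p => aktB (2 ^ k * p 0) * aktB (2 ^ k * p 1)) :=
    funext fun p => akt_Phi_eq k a b p
  rw [this]
  refine Measurable.indicator ?_ (akt_meas_box _ _ _ _)
  have := akt_B_cont.measurable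
  exact (this.comp ((akt_meas_coord 0).const_mul _)).mul (this.comp ((akt_meas_coord 1).const_mul _))

theorem akt_Phi_sq_int (k a b) : ∫ p, aktPhi k a b p ^ 2 ∂unifSquare ≤ 1 / 4 ^ k := by
  have hm : MeasurableSet (aktQ k a b) := akt_meas_box _ _ _ _
  calc _ ≤ ∫ p, (aktQ k a b).indicator 1 p ∂unifSquare := by
        refine integral_mono ?_ ?_ fun p => ?_
        · refine akt_integrable (B := 1) _ ((akt_Phi_meas k a b).pow_const 2) fun p => ?_
          rw [abs_pow]; exact pow_le_one₀ (abs_nonneg _) (akt_Phi_abs _ _ _ _)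
        · exact (integrable_indicator_iff hm).2 (integrable_const (1:ℝ)).integrableOn
        · by_cases h : p ∈ aktQ k a b
          · rw [Set.indicator_of_mem h]
            exact pow_le_one₀ (akt_Phi_nonneg _ _ _ _) (akt_Phi_le _ _ _ _)
          · rw [Set.indicator_of_notMem h]
            simp only
            rw [akt_Phi_eq, Set.indicator_of_notMem h]; norm_num
    _ = unifSquare.real (aktQ k a b) := integral_indicator_one hm
    _ ≤ _ := akt_box_le _ _ _ _ (by gcongr; linarith) (by gcongr; linarith)
    _ = _ := by
        have e4 : (4:ℝ) ^ k = 2 ^ k * 2 ^ k := by rw [← mul_pow]; norm_num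
        rw [e4]; field_simp; ring

/-- difference over a pair -/
noncomputable def aktXi (k a b : ℕ) (q : EuclideanSpace ℝ (Fin 2) × EuclideanSpace ℝ (Fin 2)) : ℝ :=
  aktPhi k a b q.1 - aktPhi k a b q.2

theorem akt_Xi_meas (k a b) : Measurable (aktXi k a b) :=
  ((akt_Phi_meas k a b).comp measurable_fst).sub ((akt_Phi_meas k a b).comp measurable_snd)

theorem akt_Xi_abs (k a b q) : |aktXi k a b q| ≤ 1 := by
  unfold aktXi
  have h1 := akt_Phi_nonneg k a b q.1
  have h2 := akt_Phi_nonneg k a b q.2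
  have h3 := akt_Phi_le k a b q.1
  have h4 := akt_Phi_le k a b q.2
  rw [abs_le]; constructor <;> linarith

theorem akt_Xi_int (k a b) : ∫ q, aktXi k a b q ∂aktPair = 0 := akt_int_diff (akt_Phi_meas k a b) (akt_Phi_abs k a b)

theorem akt_Xi_sq_integrable (k a b) : Integrable (fun q => aktXi k a b q ^ 2) aktPair := by
  refine akt_integrable (B := 1) _ ((akt_Xi_meas k a b).pow_const 2) fun p => ?_
  rw [abs_pow]; exact pow_le_one₀ (abs_nonneg _) (akt_Xi_abs _ _ _ _)

theorem akt_Xi_sq_upper (k a b) : ∫ q, aktXi k a b q ^ 2 ∂aktPair ≤ 2 / 4 ^ k := by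
  have hm : Measurable (fun p => aktPhi k a b p ^ 2) := (akt_Phi_meas k a b).pow_const 2
  have hb : ∀ p, |aktPhi k a b p ^ 2| ≤ 1 := fun p => by
    rw [abs_pow]; exact pow_le_one₀ (abs_nonneg _) (akt_Phi_abs _ _ _ _)
  have i1 : Integrable (fun q : EuclideanSpace ℝ (Fin 2) × EuclideanSpace ℝ (Fin 2) => aktPhi k a b q.1 ^ 2) aktPair :=
    akt_integrable _ (hm.comp measurable_fst) (fun q => hb q.1)
  have i2 : Integrable (fun q : EuclideanSpace ℝ (Fin 2) × EuclideanSpace ℝ (Fin 2) => aktPhi k a b q.2 ^ 2) aktPair :=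
    akt_integrable _ (hm.comp measurable_snd) (fun q => hb q.2)
  calc _ ≤ ∫ q, (aktPhi k a b q.1 ^ 2 + aktPhi k a b q.2 ^ 2) ∂aktPair := by
        refine integral_mono (akt_Xi_sq_integrable k a b) (i1.fun_add i2) fun q => ?_
        simp only [aktXi]
        nlinarith [mul_nonneg (akt_Phi_nonneg k a b q.1) (akt_Phi_nonneg k a b q.2)]
    _ = ∫ p, aktPhi k a b p ^ 2 ∂unifSquare + ∫ p, aktPhi k a b p ^ 2 ∂unifSquare := by
        rw [integral_add i1 i2, akt_int_fst hm, akt_int_snd hm]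
    _ ≤ 1 / 4 ^ k + 1 / 4 ^ k := add_le_add (akt_Phi_sq_int _ _ _) (akt_Phi_sq_int _ _ _)
    _ = _ := by ring

theorem akt_core (k a : ℕ) (t : ℝ) (h : t ∈ Set.Ico (((a:ℝ) + 1 / 4) / 2 ^ k) (((a:ℝ) + 1 / 2) / 2 ^ k)) :
    ⌊(2:ℝ) ^ k * t⌋ = (a:ℤ) ∧ 1 / 4 ≤ aktB (2 ^ k * t) := by
  have p : (0:ℝ) < 2 ^ k := by positivity
  rw [Set.mem_Ico, div_le_iff₀ p, lt_div_iff₀ p, mul_comm t] at h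
  constructor
  · rw [Int.floor_eq_iff]; push_cast; constructor <;> linarith
  · rw [← akt_B_int (a:ℤ)]
    push_cast
    set v := 2 ^ k * t - (a:ℝ)
    have h1 : 1 / 4 ≤ v := by simp only [v]; linarith
    have h2 : v ≤ 1 / 2 := by simp only [v]; linarith
    have h3 := Real.mul_le_sin (x := Real.pi * v) (by positivity) (by nlinarith [Real.pi_pos])
    have h4 : 2 / Real.pi * (Real.pi * v) = 2 * v := by field_simp
    rw [h4] at h3
    unfold aktB
    nlinarith

theorem akt_edge (k a : ℕ) (t : ℝ) (h : ⌊(2:ℝ) ^ k * t⌋ = (a:ℤ)) (h2 : t < ((a:ℝ) + 1 / 18) / 2 ^ k) :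
    aktB (2 ^ k * t) ≤ 1 / 32 := by
  have p : (0:ℝ) < 2 ^ k := by positivity
  rw [lt_div_iff₀ p, mul_comm t] at h2
  rw [Int.floor_eq_iff] at h
  push_cast at h
  rw [← akt_B_int (a:ℤ)]
  push_cast
  set v := 2 ^ k * t - (a:ℝ)
  have h1 : 0 ≤ v := by simp only [v]; linarith
  have h3 : v ≤ 1 / 18 := by simp only [v]; linarith
  unfold aktB
  have := Real.sin_sq_le_sq (x := Real.pi * v)
  rw [mul_pow] at this
  have h4 : v ^ 2 ≤ 1 / 324 := by nlinarith
  nlinarith [akt_pi_sq, sq_nonneg v]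

theorem akt_Xi_sq_lower (k a b) (ha : a < 2 ^ k) (hb : b < 2 ^ k) :
    (1 / 294912) / 4 ^ k ≤ ∫ q, aktXi k a b q ^ 2 ∂aktPair := by
  have p : (0:ℝ) < 2 ^ k := by positivity
  have p1 : (1:ℝ) ≤ 2 ^ k := one_le_pow₀ (by norm_num)
  have e4 : (4:ℝ) ^ k = 2 ^ k * 2 ^ k := by rw [← mul_pow]; norm_num
  have ha' : (a:ℝ) + 1 ≤ 2 ^ k := by exact_mod_cast ha
  have hb' : (b:ℝ) + 1 ≤ 2 ^ k := by exact_mod_cast hb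
  set A := aktBox (((a:ℝ) + 1 / 4) / 2 ^ k) (((a:ℝ) + 1 / 2) / 2 ^ k) (((b:ℝ) + 1 / 4) / 2 ^ k) (((b:ℝ) + 1 / 2) / 2 ^ k)
    with hA
  set B := aktBox (((a:ℝ) + 1 / 18) / 2 ^ k) (((a:ℝ) + 1) / 2 ^ k) ((b:ℝ) / 2 ^ k) (((b:ℝ) + 1) / 2 ^ k) with hB
  have hAm : MeasurableSet A := akt_meas_box _ _ _ _
  have hBm : MeasurableSet B := akt_meas_box _ _ _ _
  have mA : unifSquare.real A = (1 / 16) / 4 ^ k := by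
    rw [hA, akt_box_eq _ _ _ _ (by positivity) (by gcongr; linarith) (by rw [div_le_one p]; linarith) (by positivity)
      (by gcongr; linarith) (by rw [div_le_one p]; linarith), e4]
    field_simp; ring
  have mB : unifSquare.real Bᶜ ≥ 1 / 18 := by
    rw [measureReal_compl hBm]
    have : unifSquare.real B ≤ 17 / 18 := by
      refine (akt_box_le _ _ _ _ (by gcongr; linarith) (by gcongr; linarith)).trans ?_
      have : (((a:ℝ) + 1) / 2 ^ k - ((a:ℝ) + 1 / 18) / 2 ^ k) * (((b:ℝ) + 1) / 2 ^ k - (b:ℝ) / 2 ^ k) =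
        (17 / 18) / (2 ^ k * 2 ^ k) := by field_simp; ring
      rw [this]
      exact div_le_self (by norm_num) (by nlinarith)
    rw [probReal_univ]; linarith
  have hm : MeasurableSet (A ×ˢ Bᶜ) := hAm.prod hBm.compl
  calc _ ≤ (1 / 1024) * (unifSquare.real A * unifSquare.real Bᶜ) := by
        rw [mA]
        have : (0:ℝ) < (1 / 16) / 4 ^ k := by positivity
        have h2 : (1 / 294912 : ℝ) / 4 ^ k = (1 / 1024) * (((1 / 16) / 4 ^ k) * (1 / 18)) := by ring
        rw [h2]
        gcongr
    _ = (1 / 1024) * aktPair.real (A ×ˢ Bᶜ) := by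
        rw [aktPair, measureReal_prod_prod]
    _ = ∫ q, (1 / 1024) * (A ×ˢ Bᶜ).indicator 1 q ∂aktPair := by
        rw [integral_const_mul, integral_indicator_one hm]
    _ ≤ _ := by
        refine integral_mono ?_ (akt_Xi_sq_integrable k a b) fun q => ?_
        · exact ((integrable_indicator_iff hm).2 (integrable_const (1:ℝ)).integrableOn).const_mul _
        · by_cases h : q ∈ A ×ˢ Bᶜ
          · simp only
            rw [Set.indicator_of_mem h]
            obtain ⟨h1, h2⟩ := h
            obtain ⟨c1, c2⟩ := akt_core k a _ h1.1
            obtain ⟨c3, c4⟩ := akt_core k b _ h1.2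
            have f1 : 1 / 16 ≤ aktPhi k a b q.1 := by
              unfold aktPhi
              rw [if_pos ⟨c1, c3⟩]
              nlinarith
            have f2 : aktPhi k a b q.2 ≤ 1 / 32 := by
              unfold aktPhi
              split_ifs with h3
              · have : q.2 0 < ((a:ℝ) + 1 / 18) / 2 ^ k := by
                  by_contra h4
                  apply h2
                  exact ⟨⟨not_lt.1 h4, ((akt_cell k a _).1 h3.1).2⟩, (akt_cell k b _).1 h3.2⟩
                have h5 := akt_edge k a _ h3.1 this
                nlinarith [akt_B_nonneg (2 ^ k * q.2 0), akt_B_nonneg (2 ^ k * q.2 1), akt_B_le (2 ^ k * q.2 1)]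
              · norm_num
            simp only [Pi.one_apply, aktXi]
            nlinarith
          · simp only
            rw [Set.indicator_of_notMem h]
            rw [mul_zero]; positivity

/-- fluctuation in a cell -/
noncomputable def aktZ (n k a b : ℕ) (ω : Fin n → EuclideanSpace ℝ (Fin 2) × EuclideanSpace ℝ (Fin 2)) : ℝ :=
  ∑ i, aktXi k a b (ω i)

theorem akt_Z_meas (n k a b) : Measurable (aktZ n k a b) := by
  unfold aktZ
  exact Finset.measurable_sum _ fun i _ => (akt_Xi_meas k a b).comp (measurable_pi_apply i)

theorem akt_Z_abs (n k a b ω) : |aktZ n k a b ω| ≤ n := by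
  have h := akt_sum_bound (akt_Xi_abs k a b) n ω
  rw [mul_one] at h
  exact h

theorem akt_Z_pow_integrable (n k a b m : ℕ) : Integrable (fun ω => aktZ n k a b ω ^ m) (aktP n) := by
  refine akt_integrable (B := n ^ m) _ ((akt_Z_meas n k a b).pow_const m) fun p => ?_
  rw [abs_pow]; exact pow_le_pow_left₀ (abs_nonneg _) (akt_Z_abs _ _ _ _ _) _

theorem akt_Z_moments (n k a b : ℕ) (ha : a < 2 ^ k) (hb : b < 2 ^ k) (hn : 4 ^ k ≤ n) :
    (1 / 294912) * (n / 4 ^ k) ≤ ∫ ω, aktZ n k a b ω ^ 2 ∂(aktP n) ∧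
    ∫ ω, aktZ n k a b ω ^ 4 ∂(aktP n) ≤ 14 * ((n:ℝ) / 4 ^ k) ^ 2 := by
  obtain ⟨-, m2, m4⟩ := akt_moments aktPair (akt_Xi_meas k a b) (akt_Xi_abs k a b) (akt_Xi_int k a b) n
  have lo := akt_Xi_sq_lower k a b ha hb
  have up := akt_Xi_sq_upper k a b
  have n0 : (0:ℝ) ≤ n := Nat.cast_nonneg n
  have p : (0:ℝ) < 4 ^ k := by positivity
  have hn' : (1:ℝ) ≤ n / 4 ^ k := by rw [one_le_div p]; exact_mod_cast hn
  constructor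
  · calc _ = (n:ℝ) * ((1 / 294912) / 4 ^ k) := by ring
      _ ≤ n * ∫ q, aktXi k a b q ^ 2 ∂aktPair := by gcongr
      _ = _ := m2.symm
  · have h4 : ∫ q, aktXi k a b q ^ 4 ∂aktPair ≤ ∫ q, aktXi k a b q ^ 2 ∂aktPair := by
      refine integral_mono ?_ (akt_Xi_sq_integrable k a b) fun q => ?_
      · refine akt_integrable (B := 1) _ ((akt_Xi_meas k a b).pow_const 4) fun p => ?_
        rw [abs_pow]; exact pow_le_one₀ (abs_nonneg _) (akt_Xi_abs _ _ _ _)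
      · have : aktXi k a b q ^ 2 ≤ 1 := by
          rw [← sq_abs]; exact pow_le_one₀ (abs_nonneg _) (akt_Xi_abs _ _ _ _)
        simp only
        nlinarith [sq_nonneg (aktXi k a b q)]
    have h0 : 0 ≤ ∫ q, aktXi k a b q ^ 2 ∂aktPair := integral_nonneg fun _ => sq_nonneg _
    calc _ ≤ _ := m4
      _ ≤ n * (2 / 4 ^ k) + 3 * n ^ 2 * (2 / 4 ^ k) ^ 2 := by
          gcongr
          exact h4.trans up
      _ = 2 * (n / 4 ^ k) + 12 * (n / 4 ^ k) ^ 2 := by ring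
      _ ≤ _ := by nlinarith


theorem akt_F_expand (s : ℕ → ℤ → ℤ → ℝ) (δ : ℝ) (K : ℕ) (p : EuclideanSpace ℝ (Fin 2)) (hp : p ∈ aktBox 0 1 0 1) :
    aktF s δ K (p 0) (p 1) = δ * ∑ k ∈ Finset.range K, (2 ^ k)⁻¹ *
      ∑ a ∈ Finset.range (2 ^ k), ∑ b ∈ Finset.range (2 ^ k), s k (a:ℤ) (b:ℤ) * aktPhi k a b p := by
  unfold aktF
  congr 1
  refine Finset.sum_congr rfl fun k _ => ?_
  congr 1
  have one : ∀ t : ℝ, 0 ≤ t → t < 1 → ∃ a : ℕ, a < 2 ^ k ∧ ⌊(2:ℝ) ^ k * t⌋ = (a:ℤ) := by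
    intro t h0 h1
    have pp : (0:ℝ) < 2 ^ k := by positivity
    have h2 : 0 ≤ ⌊(2:ℝ) ^ k * t⌋ := Int.floor_nonneg.2 (by positivity)
    obtain ⟨a, ha⟩ := Int.eq_ofNat_of_zero_le h2
    refine ⟨a, ?_, ha⟩
    have h3 : ⌊(2:ℝ) ^ k * t⌋ < (2 ^ k : ℕ) := by
      rw [Int.floor_lt]; push_cast; nlinarith
    rw [ha] at h3
    exact_mod_cast h3
  obtain ⟨a0, ha, ea⟩ := one _ hp.1.1 hp.1.2
  obtain ⟨b0, hb, eb⟩ := one _ hp.2.1 hp.2.2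
  rw [Finset.sum_eq_single a0, Finset.sum_eq_single b0]
  · unfold aktPhi
    rw [if_pos ⟨ea, eb⟩, ea, eb]
  · intro b _ hne
    unfold aktPhi
    rw [if_neg, mul_zero]
    rintro ⟨-, h⟩
    rw [eb] at h
    exact hne (by exact_mod_cast h.symm)
  · intro h; exact absurd (Finset.mem_range.2 hb) h
  · intro a _ hne
    refine Finset.sum_eq_zero fun b _ => ?_
    unfold aktPhi
    rw [if_neg, mul_zero]
    rintro ⟨h, -⟩
    rw [ea] at h
    exact hne (by exact_mod_cast h.symm)
  · intro h; exact absurd (Finset.mem_range.2 ha) h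

theorem akt_F_sum (s : ℕ → ℤ → ℤ → ℝ) (δ : ℝ) (K n : ℕ)
    (ω : Fin n → EuclideanSpace ℝ (Fin 2) × EuclideanSpace ℝ (Fin 2))
    (hω : ∀ i, (ω i).1 ∈ aktBox 0 1 0 1 ∧ (ω i).2 ∈ aktBox 0 1 0 1) :
    ∑ i, (aktF s δ K ((ω i).1 0) ((ω i).1 1) - aktF s δ K ((ω i).2 0) ((ω i).2 1)) =
      δ * ∑ k ∈ Finset.range K, (2 ^ k)⁻¹ *
      ∑ a ∈ Finset.range (2 ^ k), ∑ b ∈ Finset.range (2 ^ k), s k (a:ℤ) (b:ℤ) * aktZ n k a b ω := by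
  have : ∀ i, aktF s δ K ((ω i).1 0) ((ω i).1 1) - aktF s δ K ((ω i).2 0) ((ω i).2 1) =
      δ * ∑ k ∈ Finset.range K, (2 ^ k)⁻¹ *
      ∑ a ∈ Finset.range (2 ^ k), ∑ b ∈ Finset.range (2 ^ k), s k (a:ℤ) (b:ℤ) * aktXi k a b (ω i) := by
    intro i
    rw [akt_F_expand _ _ _ _ (hω i).1, akt_F_expand _ _ _ _ (hω i).2, ← mul_sub, ← Finset.sum_sub_distrib]
    congr 1
    refine Finset.sum_congr rfl fun k _ => ?_
    rw [← mul_sub, ← Finset.sum_sub_distrib]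
    congr 1
    refine Finset.sum_congr rfl fun a _ => ?_
    rw [← Finset.sum_sub_distrib]
    refine Finset.sum_congr rfl fun b _ => ?_
    rw [aktXi]; ring
  simp_rw [this]
  rw [← Finset.mul_sum]
  congr 1
  rw [Finset.sum_comm]
  refine Finset.sum_congr rfl fun k _ => ?_
  rw [← Finset.mul_sum]
  congr 1
  rw [Finset.sum_comm]
  refine Finset.sum_congr rfl fun a _ => ?_
  rw [Finset.sum_comm]
  refine Finset.sum_congr rfl fun b _ => ?_
  rw [← Finset.mul_sum]; rfl

theorem akt_cell_ineq (z s w τ : ℝ) (hτ : 0 < τ)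
    (h : (s = SignType.sign z ∧ w = 0) ∨ (s = 0 ∧ w = 1)) :
    z ^ 2 / (2 * τ) - z ^ 4 / τ ^ 3 - w * (τ / 2) ≤ s * z := by
  set t := |z| / τ with ht
  have t0 : 0 ≤ t := by positivity
  have hz : |z| = τ * t := by rw [ht]; field_simp
  have key : t ^ 2 - t ^ 4 ≤ t := by
    rcases le_or_gt t 1 with h1 | h1
    · nlinarith [sq_nonneg (t ^ 2)]
    · nlinarith [sq_nonneg t, mul_pos (by linarith : 0 < t) (by linarith : 0 < t), mul_nonneg (sq_nonneg t) (by nlinarith : 0 ≤ t ^ 2 - 1)]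
  have e1 : z ^ 2 / (2 * τ) = τ * (t ^ 2 / 2) := by
    rw [← sq_abs, hz]; field_simp
  have e2 : z ^ 4 / τ ^ 3 = τ * t ^ 4 := by
    have : z ^ 4 = |z| ^ 4 := by rw [← abs_pow]; exact (abs_of_nonneg (by positivity)).symm
    rw [this, hz]; field_simp
  rw [e1, e2]
  rcases h with ⟨h1, h2⟩ | ⟨h1, h2⟩
  · rw [h1, h2, sign_mul_self, hz]
    nlinarith [sq_nonneg t]
  · rw [h1, h2]
    nlinarith [sq_nonneg (t - 1)]

theorem akt_lower_pt (K n : ℕ) (δ M : ℝ) (hδ : 0 ≤ δ) (hδ1 : δ ≤ 1) (hK : δ ^ 2 * K ≤ 1)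
    (hM : 80 ≤ M) (τ : ℕ → ℝ) (hτ : ∀ k, 0 < τ k)
    (ω : Fin n → EuclideanSpace ℝ (Fin 2) × EuclideanSpace ℝ (Fin 2))
    (hω : ∀ i, (ω i).1 ∈ aktBox 0 1 0 1 ∧ (ω i).2 ∈ aktBox 0 1 0 1) :
    δ * ∑ k ∈ Finset.range K, (2 ^ k)⁻¹ * ((∑ a ∈ Finset.range (2 ^ k), ∑ b ∈ Finset.range (2 ^ k),
      (1 / (2 * τ k) * aktZ n k a b ω ^ 2 - 1 / τ k ^ 3 * aktZ n k a b ω ^ 4)) - 1408 / M ^ 2 * 4 ^ k * (τ k / 2)) ≤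
      2 * (M + 44) * aktOpt n ω := by
  set σ : ℕ → ℤ → ℤ → ℝ := fun k a b => ((SignType.sign (aktZ n k a.toNat b.toNat ω) : SignType) : ℝ) with hσd
  have hσ : ∀ k a b, |σ k a b| ≤ 1 := by
    intro k a b
    simp only [hσd]
    cases (SignType.sign (aktZ n k a.toNat b.toNat ω)) <;> simp
  obtain ⟨s, w, h1, h2, h3⟩ := akt_E K δ M hδ hδ1 hK hM σ hσ
  have hlip := akt_le_opt n (fun i => (ω i).1, fun i => (ω i).2) (fun p => aktF s δ K (p 0) (p 1)) (2 * (M + 44))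
    (fun p q => by
      refine (le_abs_self _).trans ((h3 _ _ _ _).trans ?_)
      have c : ∀ i, |p i - q i| ≤ ‖p - q‖ := fun i => by
        simpa using PiLp.norm_apply_le (p - q) i
      have c0 := c 0
      have c1 := c 1
      nlinarith [norm_nonneg (p - q)]) (by linarith)
  refine le_trans ?_ hlip
  simp only
  rw [akt_F_sum s δ K n ω hω]
  refine mul_le_mul_of_nonneg_left (Finset.sum_le_sum fun k hk => ?_) hδ
  refine mul_le_mul_of_nonneg_left ?_ (by positivity)
  have hw := h2 k (Finset.mem_range.1 hk).le
  have hτk := hτ k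
  have hcell : ∀ a b : ℕ, 1 / (2 * τ k) * aktZ n k a b ω ^ 2 - 1 / τ k ^ 3 * aktZ n k a b ω ^ 4 ≤
      s k (a:ℤ) (b:ℤ) * aktZ n k a b ω + w k (a:ℤ) (b:ℤ) * (τ k / 2) := by
    intro a b
    have := akt_cell_ineq (aktZ n k a b ω) (s k (a:ℤ) (b:ℤ)) (w k (a:ℤ) (b:ℤ)) (τ k) hτk (by
      have := h1 k (a:ℤ) (b:ℤ)
      simpa [hσd] using this)
    have e1 : 1 / (2 * τ k) * aktZ n k a b ω ^ 2 = aktZ n k a b ω ^ 2 / (2 * τ k) := by ring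
    have e2 : 1 / τ k ^ 3 * aktZ n k a b ω ^ 4 = aktZ n k a b ω ^ 4 / τ k ^ 3 := by ring
    rw [e1, e2]; linarith
  have hs := Finset.sum_le_sum fun a (_ : a ∈ Finset.range (2 ^ k)) =>
    Finset.sum_le_sum fun b (_ : b ∈ Finset.range (2 ^ k)) => hcell a b
  simp only [Finset.sum_add_distrib, ← Finset.sum_mul] at hs
  have : (∑ a ∈ Finset.range (2 ^ k), ∑ b ∈ Finset.range (2 ^ k), w k (a:ℤ) (b:ℤ)) * (τ k / 2) ≤
    1408 / M ^ 2 * 4 ^ k * (τ k / 2) := by gcongr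
  linarith

theorem akt_lower_int (K n : ℕ) (A δ M : ℝ) (hA : 0 < A) (hδ : 0 ≤ δ) (hδ1 : δ ≤ 1) (hK : δ ^ 2 * K ≤ 1)
    (hM : 80 ≤ M) (hn : 4 ^ K ≤ n) :
    δ * (K * (Real.sqrt n * ((1 / 294912) / (2 * A) - 14 / A ^ 3 - 704 * A / M ^ 2))) ≤
      2 * (M + 44) * ∫ ω, aktD n ω ∂(aktP n) := by
  have n0 : (0:ℝ) < n := by
    have : 0 < n := lt_of_lt_of_le (by positivity) hn
    exact_mod_cast this
  have s0 : 0 < Real.sqrt n := Real.sqrt_pos.2 n0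
  set τ : ℕ → ℝ := fun k => A * (Real.sqrt n / 2 ^ k) with hτd
  have hτ : ∀ k, 0 < τ k := fun k => by simp only [hτd]; positivity
  have i2 := fun k a b => akt_Z_pow_integrable n k a b 2
  have i4 := fun k a b => akt_Z_pow_integrable n k a b 4
  have ii : ∀ k a b, Integrable (fun ω => 1 / (2 * τ k) * aktZ n k a b ω ^ 2 - 1 / τ k ^ 3 * aktZ n k a b ω ^ 4) (aktP n) :=
    fun k a b => ((i2 k a b).const_mul _).sub' ((i4 k a b).const_mul _)
  have iab : ∀ k, Integrable (fun ω => ∑ a ∈ Finset.range (2 ^ k), ∑ b ∈ Finset.range (2 ^ k),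
      (1 / (2 * τ k) * aktZ n k a b ω ^ 2 - 1 / τ k ^ 3 * aktZ n k a b ω ^ 4)) (aktP n) := fun k =>
    integrable_finsetSum _ fun a _ => integrable_finsetSum _ fun b _ => ii k a b
  have ik : ∀ k, Integrable (fun ω => (2 ^ k)⁻¹ * ((∑ a ∈ Finset.range (2 ^ k), ∑ b ∈ Finset.range (2 ^ k),
      (1 / (2 * τ k) * aktZ n k a b ω ^ 2 - 1 / τ k ^ 3 * aktZ n k a b ω ^ 4)) - 1408 / M ^ 2 * 4 ^ k * (τ k / 2)))
      (aktP n) := fun k => ((iab k).sub' (integrable_const _)).const_mul _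
  have hmono : ∫ ω, δ * ∑ k ∈ Finset.range K, (2 ^ k)⁻¹ * ((∑ a ∈ Finset.range (2 ^ k), ∑ b ∈ Finset.range (2 ^ k),
      (1 / (2 * τ k) * aktZ n k a b ω ^ 2 - 1 / τ k ^ 3 * aktZ n k a b ω ^ 4)) - 1408 / M ^ 2 * 4 ^ k * (τ k / 2)) ∂(aktP n)
      ≤ ∫ ω, 2 * (M + 44) * aktD n ω ∂(aktP n) := by
    refine integral_mono_ae ((integrable_finsetSum _ fun k _ => ik k).const_mul _) ((akt_D_integrable n).const_mul _) ?_
    filter_upwards [akt_ae_all n, akt_D_eq n] with ω h1 h2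
    rw [h2]
    exact akt_lower_pt K n δ M hδ hδ1 hK hM τ hτ ω h1
  rw [integral_const_mul, integral_const_mul, integral_finsetSum _ fun k _ => ik k] at hmono
  refine le_trans (mul_le_mul_of_nonneg_left ?_ hδ) hmono
  have lowk : ∀ k ∈ Finset.range K, Real.sqrt n * ((1 / 294912) / (2 * A) - 14 / A ^ 3 - 704 * A / M ^ 2) ≤
      ∫ ω, (2 ^ k)⁻¹ * ((∑ a ∈ Finset.range (2 ^ k), ∑ b ∈ Finset.range (2 ^ k),
      (1 / (2 * τ k) * aktZ n k a b ω ^ 2 - 1 / τ k ^ 3 * aktZ n k a b ω ^ 4)) - 1408 / M ^ 2 * 4 ^ k * (τ k / 2)) ∂(aktP n) := by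
    intro k hk
    have hk' : 4 ^ k ≤ n := (Nat.pow_le_pow_right (by norm_num) (Finset.mem_range.1 hk).le).trans hn
    rw [integral_const_mul, integral_sub (iab k) (integrable_const _),
      integral_finsetSum _ fun a _ => integrable_finsetSum _ fun b _ => ii k a b]
    have e1 : ∀ a ∈ Finset.range (2 ^ k), ∑ b ∈ Finset.range (2 ^ k),
        (1 / (2 * τ k) * ((1 / 294912) * (n / 4 ^ k)) - 1 / τ k ^ 3 * (14 * ((n:ℝ) / 4 ^ k) ^ 2)) ≤ 
        ∫ ω, ∑ b ∈ Finset.range (2 ^ k),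
        (1 / (2 * τ k) * aktZ n k a b ω ^ 2 - 1 / τ k ^ 3 * aktZ n k a b ω ^ 4) ∂(aktP n) := by
      intro a ha
      rw [integral_finsetSum _ fun b _ => ii k a b]
      refine Finset.sum_le_sum fun b hb => ?_
      rw [integral_sub ((i2 k a b).const_mul _) ((i4 k a b).const_mul _), integral_const_mul, integral_const_mul]
      obtain ⟨m2, m4⟩ := akt_Z_moments n k a b (Finset.mem_range.1 ha) (Finset.mem_range.1 hb) hk'
      have hτk := hτ k
      refine sub_le_sub ?_ ?_
      · gcongr
      · gcongr
    have e2 := Finset.sum_le_sum e1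
    have p : (0:ℝ) < (2 ^ k)⁻¹ := by positivity
    refine le_trans (le_of_eq ?_) (mul_le_mul_of_nonneg_left (sub_le_sub_right e2 _) p.le)
    simp only [Finset.sum_const, Finset.card_range, nsmul_eq_mul, integral_const, probReal_univ, smul_eq_mul, one_mul,
      hτd]
    have hM0 : M ≠ 0 := by linarith
    have e4 : (4:ℝ) ^ k = 2 ^ k * 2 ^ k := by rw [← mul_pow]; norm_num
    have en : (n:ℝ) = Real.sqrt n * Real.sqrt n := (Real.mul_self_sqrt n0.le).symm
    set r := Real.sqrt n
    rw [e4, en]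
    push_cast
    field_simp
    ring
  have := Finset.sum_le_sum lowk
  simpa using this

theorem akt_lower_exp : ∃ C : ℝ, 0 < C ∧ ∀ n : ℕ, 4 ≤ n →
    C * Real.sqrt (n * Real.log n) ≤ ∫ ω, aktD n ω ∂(aktP n) := by
  set c0 : ℝ := (1 / 294912) / (2 * 6000) - 14 / 6000 ^ 3 - 704 * 6000 / (10 ^ 9) ^ 2 with hc0
  have hc : 0 < c0 := by rw [hc0]; norm_num
  refine ⟨c0 / (2 * (2 * (10 ^ 9 + 44))), by positivity, fun n hn => ?_⟩
  set K := Nat.log 4 n with hKd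
  have hK : 1 ≤ K := Nat.log_pos (by norm_num) hn
  have hlt : n < 4 ^ (K + 1) := Nat.lt_pow_succ_log_self (by norm_num) n
  have hge : 4 ^ K ≤ n := Nat.pow_log_le_self 4 (by omega)
  have hn0 : (0 : ℝ) < n := by exact_mod_cast (by omega : 0 < n)
  have hK' : (1:ℝ) ≤ K := by exact_mod_cast hK
  have hs : 0 < Real.sqrt K := Real.sqrt_pos.2 (by linarith)
  have hss : Real.sqrt K * Real.sqrt K = K := Real.mul_self_sqrt (by linarith)
  have h := akt_lower_int K n 6000 (1 / Real.sqrt K) (10 ^ 9) (by norm_num) (by positivity)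
    (by rw [div_le_one hs, Real.one_le_sqrt]; exact hK')
    (by rw [div_pow, Real.sq_sqrt (by linarith)]; field_simp; norm_num) (by norm_num) hge
  rw [← hc0] at h
  have e : 1 / Real.sqrt K * (K * (Real.sqrt n * c0)) = Real.sqrt K * Real.sqrt n * c0 := by
    nth_rewrite 2 [← hss]
    field_simp
  rw [e] at h
  have hlog : Real.log n ≤ 4 * K := by
    have h1 : Real.log n ≤ Real.log ((4 : ℝ) ^ (K + 1)) := Real.log_le_log hn0 (by exact_mod_cast hlt.le)
    rw [Real.log_pow] at h1
    have h2 : Real.log 4 ≤ 2 := by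
      have : Real.log 4 = 2 * Real.log 2 := by
        rw [show (4:ℝ) = 2 ^ 2 by norm_num, Real.log_pow]; norm_num
      rw [this]; linarith [Real.log_two_lt_d9]
    push_cast at h1
    nlinarith
  have hsq : Real.sqrt (n * Real.log n) ≤ 2 * (Real.sqrt K * Real.sqrt n) := by
    rw [Real.sqrt_le_left (by positivity), mul_pow, mul_pow, Real.sq_sqrt (by linarith), Real.sq_sqrt hn0.le]
    nlinarith
  rw [div_mul_eq_mul_div, div_le_iff₀ (by norm_num)]
  nlinarith


theorem akt_event (C : ℝ) (hC : 0 < C) (c : ℝ) (hc : 0 < c) (hcC : c ≤ C / 2) (hc1 : c ≤ 1)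
    (hlow : ∀ n : ℕ, 4 ≤ n → C * Real.sqrt (n * Real.log n) ≤ ∫ ω, aktD n ω ∂(aktP n))
    (n : ℕ) (hn : 4 ≤ n) :
    1 - 16 / c ^ 2 * (Real.log n)⁻¹ ≤
      ((aktP n) {ω | C / 2 * Real.sqrt ((n : ℝ) * Real.log n) ≤ aktOpt n ω ∧
        aktOpt n ω ≤ 267 * Real.sqrt ((n : ℝ) * Real.log n)}).toReal := by
  set A := {ω | C / 2 * Real.sqrt ((n : ℝ) * Real.log n) ≤ aktOpt n ω ∧
        aktOpt n ω ≤ 267 * Real.sqrt ((n : ℝ) * Real.log n)} with hA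
  have hn4 : (4 : ℝ) ≤ n := by exact_mod_cast hn
  have hlog : 0 < Real.log n := Real.log_pos (by linarith)
  have hnl : 0 < (n : ℝ) * Real.log n := by positivity
  have hs : 0 < Real.sqrt ((n : ℝ) * Real.log n) := Real.sqrt_pos.mpr hnl
  set s := Real.sqrt ((n : ℝ) * Real.log n) with hsdef
  have hss : s ^ 2 = n * Real.log n := Real.sq_sqrt hnl.le
  have h1 := akt_conc n (c * s) (by positivity)
  have hup := akt_upper_exp n hn
  have hlo := hlow n hn
  rw [← hsdef] at hup hlo
  have hval : ((n : ℝ) * 4 ^ 2) / (c * s) ^ 2 = 16 / c ^ 2 * (Real.log n)⁻¹ := by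
    rw [mul_pow, hss]
    field_simp
    norm_num
  rw [hval] at h1
  have h2 : (aktP n) Aᶜ ≤ (aktP n) {ω | c * s ≤ |aktD n ω - ∫ ω, aktD n ω ∂(aktP n)|} := by
    apply measure_mono_ae
    filter_upwards [akt_D_eq n] with ω hω hωA
    by_contra hcon
    apply hωA
    have hcon2 : |aktD n ω - ∫ ω, aktD n ω ∂(aktP n)| < c * s := not_le.mp hcon
    rw [hω, abs_lt] at hcon2
    have e1 : c * s ≤ C / 2 * s := by gcongr
    have e2 : c * s ≤ 1 * s := by gcongr
    constructor
    · linarith [hcon2.1]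
    · linarith [hcon2.2]
  have h3 : (1 : ENNReal) ≤ (aktP n) A + ENNReal.ofReal (16 / c ^ 2 * (Real.log n)⁻¹) := by
    calc (1 : ENNReal) = (aktP n) (A ∪ Aᶜ) := by rw [Set.union_compl_self, measure_univ]
      _ ≤ (aktP n) A + (aktP n) Aᶜ := measure_union_le _ _
      _ ≤ _ := by gcongr; exact h2.trans h1
  have h4 := ENNReal.toReal_mono (by finiteness) h3
  rw [ENNReal.toReal_add (by finiteness) (by finiteness), ENNReal.toReal_ofReal (by positivity)] at h4
  simp only [ENNReal.toReal_one] at h4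
  linarith

theorem akt_transfer (n : ℕ) (T : Set ((Fin n → EuclideanSpace ℝ (Fin 2)) × (Fin n → EuclideanSpace ℝ (Fin 2)))) :
    ((Measure.pi fun _ : Fin n => unifSquare).prod (Measure.pi fun _ : Fin n => unifSquare)) T =
    (aktP n) {ω | ((fun i => (ω i).1, fun i => (ω i).2) :
      (Fin n → EuclideanSpace ℝ (Fin 2)) × (Fin n → EuclideanSpace ℝ (Fin 2))) ∈ T} := by
  have h := measurePreserving_arrowProdEquivProdArrow (EuclideanSpace ℝ (Fin 2))
    (EuclideanSpace ℝ (Fin 2)) (Fin n) (fun _ => unifSquare) (fun _ => unifSquare)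
  exact (h.measure_preimage_equiv T).symm

/-- Ajtai–Komlós–Tusnády: for `2n` mutually independent uniform points
`x₁,…,x_n, y₁,…,y_n` in the unit square (modeled by the product measure on pairs of
configurations), there are constants `C₁, C₂ > 0` with
`P(C₁·sqrt(n·log n) ≤ D_n* ≤ C₂·sqrt(n·log n)) → 1` as `n → ∞`. -/
theorem stmt_17 :
    ∃ C₁ C₂ : ℝ, 0 < C₁ ∧ 0 < C₂ ∧
      Filter.Tendsto
        (fun n : ℕ =>
          (((Measure.pi fun _ : Fin n => unifSquare).prod
              (Measure.pi fun _ : Fin n => unifSquare))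
            {ω : (Fin n → EuclideanSpace ℝ (Fin 2)) × (Fin n → EuclideanSpace ℝ (Fin 2)) |
              C₁ * Real.sqrt ((n : ℝ) * Real.log n) ≤ optMatchDist n ω ∧
              optMatchDist n ω ≤ C₂ * Real.sqrt ((n : ℝ) * Real.log n)}).toReal)
        Filter.atTop (nhds 1) := by
  obtain ⟨C, hC, hlow⟩ := akt_lower_exp
  refine ⟨C / 2, 267, by positivity, by norm_num, ?_⟩
  set c := min (C / 2) 1 with hcdef
  have hc : 0 < c := lt_min (by positivity) one_pos
  have hlim : Filter.Tendsto (fun n : ℕ => 1 - 16 / c ^ 2 * (Real.log n)⁻¹) Filter.atTop (nhds 1) := by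
    have h0 : Filter.Tendsto (fun n : ℕ => (Real.log n)⁻¹) Filter.atTop (nhds 0) :=
      tendsto_inv_atTop_zero.comp (Real.tendsto_log_atTop.comp tendsto_natCast_atTop_atTop)
    simpa using (h0.const_mul (16 / c ^ 2)).const_sub 1
  refine tendsto_of_tendsto_of_tendsto_of_le_of_le' hlim tendsto_const_nhds ?_ ?_
  · filter_upwards [Filter.eventually_ge_atTop 4] with n hn
    rw [akt_transfer]
    exact akt_event C hC c hc (min_le_left _ _) (min_le_right _ _) hlow n hn
  · refine Filter.Eventually.of_forall fun n => ?_
    rw [akt_transfer]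
    exact measureReal_le_one
end
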